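/- Assume λ, α, θ > 0, β + θ < 1, (H2), m_τ, K_τ > 0, 0 < τ < 1 and N_T τ = T. Let (Xⁿ, ρⁿ)_{0 ≤ n ≤ N_T} be a solution of the JKO scheme, i.e. (Xⁿ⁺¹, ρⁿ⁺¹) minimizes J_{(Xⁿ,ρⁿ)} over 𝒜 for each 0 ≤ n ≤ N_T − 1. Then Σ_{n=0}^{N_T−1} [ 𝐝²((Xⁿ⁺¹,ρⁿ⁺¹),(Xⁿ,ρⁿ))/(2τ) + θ|M(ρⁿ⁺¹,ρⁿ)| + p_τ(M(ρⁿ⁺¹,ρⁿ)) ] ≤ ∫₀^{X⁰} f(ρ⁰(x)) dx + (α + exp(β−1) − β) X^{N_T}; consequently this sum is bounded by a constant C > 0 depending only on X⁰, ρ⁰, α, β, λ and T (using that X^{N_T} ≤ X⁰ + (T/λ)(α − a)). -/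

import Mathlib

/-!
Comparing each step of the scheme with not moving at all bounds its contribution to the sum by the
decrease of `∫ f(ρⁿ) - α Xⁿ` (`step_dissipation`), and these decreases telescope. Since
`f ≥ β - exp(β - 1)`, and `f(ρ)` vanishes beyond the free boundary, the final energy is at least
`(β - exp(β - 1)) X^N - α X^N` (`Good.energy_lower`), which is the first inequality. The second one
follows from the bound `Xⁿ⁺¹ ≤ Xⁿ + τ (α - a) / λ` on the advance of the free boundary
(`Good.advance`).

If the free boundary `X` of a minimizer exceeded `Y = Xⁿ + τ (α - a) / λ`, one could cut the domain
back to `Y`. The new density has to lose the mass which an optimal plan carries across `Y`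
(`cut_plan`); there is a net transport to the right because `ρ ≤ 1`, and truncated plans are
admissible because the distance may be tested with plans whose mass at the origin is arbitrary
(`W2_relaxed`, by cancelling at an end point the mass which arrives there against the mass which
leaves, `collapse`). Since `ρ ≥ exp a`, the entropy of what was removed pays for the gain in `α X`.

The bounds `exp a ≤ ρ ≤ 1` are invariants of the scheme (`min_max_principle`). They rest on `flow`:
a minimizer does not transport mass from places where it lies above a level `s` to places where it
lies below `s`, as a part of this mass could be left where it is, which decreases the cost
strictly and, by convexity of `f`, does not increase the rest of the functional. Hence the mass
balance of a sublevel set below `exp a`, or of a superlevel set above one, forces it to be null.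

The entropy integral is zero by convention when `f(ρ)` is not integrable, so that competitors with a
small spike of infinite entropy have almost zero energy (`exists_spike`), and minimizers have
nonpositive energy (`energy_nonpos`). As the mass excess `𝐌` is strictly negative initially,
because `ρ⁰(0) ≤ exp(β + θ - 1) < 1`, this excludes minimizers of infinite mass
(`nice_of_isJKOMin`) and the density `ρ ≡ 1`, and strict negativity of `𝐌` propagates as well. All
these invariants are collected in `Good` and proved to persist in `Good.step`.
-/

open MeasureTheory Real Set ENNReal Filter Topology

noncomputable section

/-- The threshold `ρ₋ = exp(β - θ - 1)`. -/
def rhoMinus (β θ : ℝ) : ℝ := Real.exp (β - θ - 1)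

/-- The threshold `ρ₊ = exp(β + θ - 1)`. -/
def rhoPlus (β θ : ℝ) : ℝ := Real.exp (β + θ - 1)

/-- Membership in the class `𝔸` of admissible densities on `ℝ₊`:
nonnegative a.e., locally integrable together with `ρ ln ρ`, and `≡ 1` a.e. eventually. -/
def MemAdm (ρ : ℝ → ℝ) : Prop :=
  (∀ᵐ x : ℝ, 0 < x → 0 ≤ ρ x) ∧
  LocallyIntegrableOn ρ (Ioi 0) volume ∧
  LocallyIntegrableOn (fun x => ρ x * Real.log (ρ x)) (Ioi 0) volume ∧
  ∃ x : ℝ, 0 < x ∧ (∀ᵐ y : ℝ, y ∈ Ioi x → ρ y = 1)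

/-- `x_ρ`, the infimum of the points after which `ρ ≡ 1` a.e. -/
def xA (ρ : ℝ → ℝ) : ℝ :=
  sInf {x : ℝ | 0 < x ∧ ∀ᵐ y : ℝ, y ∈ Ioi x → ρ y = 1}

/-- Membership of a pair `(X, ρ)` in the admissible set `𝒜`. -/
def MemAdmSet (X : ℝ) (ρ : ℝ → ℝ) : Prop := MemAdm ρ ∧ xA ρ ≤ X

/-- `𝐌(ρ) = -∫_{ℝ₊} (1 - ρ)`. -/
def Mfun (ρ : ℝ → ℝ) : ℝ := -∫ x in Ioi (0:ℝ), (1 - ρ x)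

/-- `M(ρ, ρ̃) = 𝐌(ρ) - 𝐌(ρ̃)`. -/
def Mdiff (ρ ρt : ℝ → ℝ) : ℝ := Mfun ρ - Mfun ρt

/-- `f(r) = r (ln r - β) + β`. -/
def fEnt (β r : ℝ) : ℝ := r * (Real.log r - β) + β

/-- The measure `ν(ρ, ρ̃) = ρ · Leb⌊(0,Λ) + (M(ρ̃,ρ))₊ δ₀`, `Λ = max(x_ρ, x_ρ̃)`. -/
def nuMeas (ρ ρt : ℝ → ℝ) : Measure ℝ :=
  (volume.withDensity (fun x => ENNReal.ofReal (ρ x))).restrict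
      (Ioo 0 (max (xA ρ) (xA ρt)))
    + (ENNReal.ofReal (Mdiff ρt ρ)) • Measure.dirac 0

/-- The squared Wasserstein distance `𝐖₂²(ρ, ρ̃)`: infimum of the quadratic transport
cost over couplings of `ν(ρ,ρ̃)` and `ν(ρ̃,ρ)`. -/
def W2sq (ρ ρt : ℝ → ℝ) : ℝ :=
  sInf {r : ℝ | ∃ γ : Measure (ℝ × ℝ),
    γ.map Prod.fst = nuMeas ρ ρt ∧ γ.map Prod.snd = nuMeas ρt ρ ∧
    r = ∫ p, (p.1 - p.2)^2 ∂γ}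

/-- The penalty function `p_τ(m) = (K_τ/2) ((-m - m_τ)₊)²`. -/
def ptau (Kτ mτ m : ℝ) : ℝ := Kτ / 2 * (max (-m - mτ) 0)^2

/-- The energy functional `E_{(X⁰,ρ⁰)}(X,ρ)`. -/
def Efun (α β θ : ℝ) (ρ0 : ℝ → ℝ) (X : ℝ) (ρ : ℝ → ℝ) : ℝ :=
  (∫ x in Ioi (0:ℝ), fEnt β (ρ x)) + θ * |Mdiff ρ ρ0| - α * X

/-- The squared tensorized metric `𝐝²((X,ρ),(X⁰,ρ⁰))`. -/
def dsq (lam : ℝ) (X0 : ℝ) (ρ0 : ℝ → ℝ) (X : ℝ) (ρ : ℝ → ℝ) : ℝ :=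
  W2sq ρ ρ0 + lam * (X - X0)^2

/-- The JKO functional `J_{(X⁰,ρ⁰)}`. -/
def Jfun (lam α β θ τ Kτ mτ : ℝ) (X0 : ℝ) (ρ0 : ℝ → ℝ) (X : ℝ) (ρ : ℝ → ℝ) : ℝ :=
  dsq lam X0 ρ0 X ρ / (2 * τ) + Efun α β θ ρ0 X ρ + ptau Kτ mτ (Mdiff ρ ρ0)

/-- `(X, ρ)` is a minimizer of the JKO functional over `𝒜`. -/
def IsJKOMin (lam α β θ τ Kτ mτ : ℝ) (X0 : ℝ) (ρ0 : ℝ → ℝ) (X : ℝ) (ρ : ℝ → ℝ) : Prop :=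
  MemAdmSet X ρ ∧
  ∀ Y : ℝ, ∀ σ : ℝ → ℝ, MemAdmSet Y σ →
    Jfun lam α β θ τ Kτ mτ X0 ρ0 X ρ ≤ Jfun lam α β θ τ Kτ mτ X0 ρ0 Y σ

/-- Hypothesis (H2) on the initial data `(X⁰, ρ⁰)`, with bounds `ρ_min, ρ_max`
and with `ρ0'` a derivative of `ρ⁰` on `[0,X⁰]` witnessing `C^{1,1}` regularity. -/
def H2 (β θ X0 ρmin ρmax : ℝ) (ρ0 ρ0' : ℝ → ℝ) : Prop :=
  0 < X0 ∧
  (∀ x : ℝ, 0 < ρ0 x) ∧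
  (∀ x ∈ Icc 0 X0, HasDerivWithinAt ρ0 (ρ0' x) (Icc 0 X0) x) ∧
  (∃ K : NNReal, LipschitzOnWith K ρ0' (Icc 0 X0)) ∧
  (∀ x : ℝ, X0 < x → ρ0 x = 1) ∧
  ρ0 0 ∈ Icc (rhoMinus β θ) (rhoPlus β θ) ∧
  0 < ρmin ∧ (∀ x ∈ Ioc 0 X0, ρmin ≤ ρ0 x ∧ ρ0 x ≤ ρmax) ∧ ρmax ≤ 1

/-- The monotone transport structure in the case `M(ρ,ρ⁰) ≥ 0`: a nondecreasing map
`T₊ : [0,X] → [0,X]`, vanishing on `[0,ℓ₊]`, pushing `ρ·Leb⌊(ℓ₊,X)` to `ρ⁰·Leb⌊(0,X)`,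
with `M = ∫₀^{ℓ₊} ρ` and realizing the squared Wasserstein distance. -/
def TransportPlus (ρ0 ρ : ℝ → ℝ) (X : ℝ) (T : ℝ → ℝ) (ℓ : ℝ) : Prop :=
  0 ≤ ℓ ∧ Measurable T ∧ MonotoneOn T (Icc 0 X) ∧
  (∀ x ∈ Icc 0 X, T x ∈ Icc 0 X) ∧
  (∀ x ∈ Icc 0 ℓ, T x = 0) ∧ T X = X ∧
  Measure.map T ((volume.withDensity (fun x => ENNReal.ofReal (ρ x))).restrict (Ioo ℓ X))
    = (volume.withDensity (fun x => ENNReal.ofReal (ρ0 x))).restrict (Ioo 0 X) ∧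
  Mdiff ρ ρ0 = ∫ x in (0:ℝ)..ℓ, ρ x ∧
  W2sq ρ ρ0 = ∫ x in (0:ℝ)..X, (x - T x)^2 * ρ x

/-- The monotone transport structure in the case `M(ρ,ρ⁰) < 0`. -/
def TransportMinus (ρ0 ρ : ℝ → ℝ) (X : ℝ) (T : ℝ → ℝ) (ℓ : ℝ) : Prop :=
  0 < ℓ ∧ Measurable T ∧ MonotoneOn T (Icc 0 X) ∧
  (∀ x ∈ Icc 0 X, T x ∈ Icc ℓ X) ∧
  T 0 = ℓ ∧ T X = X ∧
  Measure.map T ((volume.withDensity (fun x => ENNReal.ofReal (ρ x))).restrict (Ioo 0 X))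
    = (volume.withDensity (fun x => ENNReal.ofReal (ρ0 x))).restrict (Ioo ℓ X) ∧
  -(Mdiff ρ ρ0) = ∫ y in (0:ℝ)..ℓ, ρ0 y ∧
  W2sq ρ ρ0 = (∫ x in (0:ℝ)..X, (x - T x)^2 * ρ x) + ∫ y in (0:ℝ)..ℓ, y^2 * ρ0 y

/-- Transport structure with sign convention: `T` is `T₊` (with some `ℓ₊`, and `ℓ₋ = ℓ`
is taken `= 0`) when `M ≥ 0`, and `T₋` with `ℓ₋ = ℓ > 0` when `M < 0`. -/
def TransportStruct (ρ0 ρ : ℝ → ℝ) (X : ℝ) (T : ℝ → ℝ) (ℓ : ℝ) : Prop :=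
  (0 ≤ Mdiff ρ ρ0 ∧ ℓ = 0 ∧ ∃ ℓp : ℝ, TransportPlus ρ0 ρ X T ℓp) ∨
  (Mdiff ρ ρ0 < 0 ∧ TransportMinus ρ0 ρ X T ℓ)

/-- `ρ̄` is the continuous representative of `ρ` on `[0,X]`. -/
def ContRep (X : ℝ) (ρ ρb : ℝ → ℝ) : Prop :=
  ContinuousOn ρb (Icc 0 X) ∧ (∀ᵐ x : ℝ, x ∈ Ioo 0 X → ρ x = ρb x)

/-! ### Transport cost and optimal plans -/

/-- The quadratic transport cost of a plan, as an extended nonnegative number. -/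
def cost (γ : Measure (ℝ × ℝ)) : ℝ≥0∞ := ∫⁻ p, ENNReal.ofReal ((p.1 - p.2) ^ 2) ∂γ

lemma measurable_costfn : Measurable fun p : ℝ × ℝ => ENNReal.ofReal ((p.1 - p.2) ^ 2) := by
  fun_prop

lemma W2set_nonneg (ρ ρt : ℝ → ℝ) : ∀ r ∈ {r : ℝ | ∃ γ : Measure (ℝ × ℝ),
    γ.map Prod.fst = nuMeas ρ ρt ∧ γ.map Prod.snd = nuMeas ρt ρ ∧
    r = ∫ p, (p.1 - p.2)^2 ∂γ}, 0 ≤ r := by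
  rintro r ⟨γ, -, -, rfl⟩
  exact integral_nonneg fun p => sq_nonneg _

lemma W2sq_nonneg (ρ ρt : ℝ → ℝ) : 0 ≤ W2sq ρ ρt := Real.sInf_nonneg (W2set_nonneg ρ ρt)

lemma W2sq_le_integral {ρ ρt : ℝ → ℝ} {γ : Measure (ℝ × ℝ)}
    (h1 : γ.map Prod.fst = nuMeas ρ ρt) (h2 : γ.map Prod.snd = nuMeas ρt ρ) :
    W2sq ρ ρt ≤ ∫ p, (p.1 - p.2)^2 ∂γ :=
  csInf_le ⟨0, W2set_nonneg ρ ρt⟩ ⟨γ, h1, h2, rfl⟩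

lemma W2sq_self (ρ : ℝ → ℝ) : W2sq ρ ρ = 0 := by
  apply le_antisymm _ (W2sq_nonneg _ _)
  have hm : Measurable fun x : ℝ => (x, x) := by fun_prop
  refine (W2sq_le_integral (γ := (nuMeas ρ ρ).map fun x => (x, x)) ?_ ?_).trans ?_
  · rw [Measure.map_map measurable_fst hm]; exact Measure.map_id
  · rw [Measure.map_map measurable_snd hm]; exact Measure.map_id
  · rw [integral_map hm.aemeasurable (by fun_prop)]; simp

lemma integral_eq_toReal_cost (γ : Measure (ℝ × ℝ)) :
    ∫ p, (p.1 - p.2)^2 ∂γ = (cost γ).toReal :=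
  integral_eq_lintegral_of_nonneg_ae (Eventually.of_forall fun p => sq_nonneg _) (by fun_prop)

lemma W2sq_le_cost {ρ ρt : ℝ → ℝ} {γ : Measure (ℝ × ℝ)}
    (h1 : γ.map Prod.fst = nuMeas ρ ρt) (h2 : γ.map Prod.snd = nuMeas ρt ρ) :
    ENNReal.ofReal (W2sq ρ ρt) ≤ cost γ := by
  by_cases h : cost γ = ∞
  · simp [h]
  · rw [ENNReal.ofReal_le_iff_le_toReal h, ← integral_eq_toReal_cost]
    exact W2sq_le_integral h1 h2

/-- Existence of an optimal plan between finite measures on `[0, L]`: the plans form a weakly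
compact set (Prokhorov) on which the cost is weakly continuous. -/
lemma exists_opt_plan (μ ν : Measure ℝ) [IsFiniteMeasure μ] [IsFiniteMeasure ν] (L : ℝ)
    (hμ : μ (Icc 0 L)ᶜ = 0) (hν : ν (Icc 0 L)ᶜ = 0)
    (hne : ∃ γ : Measure (ℝ × ℝ), γ.map Prod.fst = μ ∧ γ.map Prod.snd = ν) :
    ∃ γ : Measure (ℝ × ℝ), γ.map Prod.fst = μ ∧ γ.map Prod.snd = ν ∧ cost γ ≠ ∞ ∧
      ∀ γ' : Measure (ℝ × ℝ), γ'.map Prod.fst = μ → γ'.map Prod.snd = ν → cost γ ≤ cost γ' := by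
  let K : Set (ℝ × ℝ) := Icc 0 L ×ˢ Icc 0 L
  have hK : IsCompact K := isCompact_Icc.prod isCompact_Icc
  have hKm : MeasurableSet K := measurableSet_Icc.prod measurableSet_Icc
  have hsupp : ∀ γ : Measure (ℝ × ℝ), γ.map Prod.fst = μ → γ.map Prod.snd = ν → γ Kᶜ = 0 := by
    intro γ h1 h2
    have hsub : Kᶜ ⊆ Prod.fst ⁻¹' (Icc 0 L)ᶜ ∪ Prod.snd ⁻¹' (Icc 0 L)ᶜ := by
      intro p hp
      by_contra hc
      simp only [mem_union, mem_preimage, mem_compl_iff, not_or, not_not] at hc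
      exact hp ⟨hc.1, hc.2⟩
    refine measure_mono_null hsub (measure_union_null ?_ ?_)
    · rw [← Measure.map_apply measurable_fst measurableSet_Icc.compl, h1, hμ]
    · rw [← Measure.map_apply measurable_snd measurableSet_Icc.compl, h2, hν]
  have hmass : ∀ γ : Measure (ℝ × ℝ), γ.map Prod.fst = μ → γ univ = μ univ := by
    intro γ h1
    rw [← h1, Measure.map_apply measurable_fst MeasurableSet.univ, preimage_univ]
  let S : Set (FiniteMeasure (ℝ × ℝ)) := {γ | γ.mass ≤ (μ univ).toNNReal ∧ γ Kᶜ = 0}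
  have hS : IsCompact S := isCompact_setOfPred_finiteMeasure_le_of_isCompact _ hK
  let μ' : FiniteMeasure ℝ := ⟨μ, inferInstance⟩
  let ν' : FiniteMeasure ℝ := ⟨ν, inferInstance⟩
  let C : Set (FiniteMeasure (ℝ × ℝ)) := {γ | γ.map Prod.fst = μ' ∧ γ.map Prod.snd = ν'}
  have hC : IsClosed C :=
    (isClosed_eq (FiniteMeasure.continuous_map continuous_fst) continuous_const).inter
      (isClosed_eq (FiniteMeasure.continuous_map continuous_snd) continuous_const)
  -- the cost function is replaced by a bounded one which agrees with it on the compact square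
  let P : ℝ → ℝ := fun x => max 0 (min x L)
  have hPb : ∀ x, |P x| ≤ |L| := by
    intro x
    rw [abs_of_nonneg (le_max_left _ _)]
    exact max_le (abs_nonneg _) ((min_le_right _ _).trans (le_abs_self _))
  let F : BoundedContinuousFunction (ℝ × ℝ) ℝ :=
    BoundedContinuousFunction.ofNormedAddCommGroup (fun p => (P p.1 - P p.2) ^ 2)
      (by fun_prop) ((|L| + |L|) ^ 2) (by
        intro p
        rw [Real.norm_eq_abs, abs_pow]
        exact pow_le_pow_left₀ (abs_nonneg _)
          ((abs_sub _ _).trans (add_le_add (hPb _) (hPb _))) 2)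
  have hF : ∀ γ : Measure (ℝ × ℝ), γ Kᶜ = 0 → cost γ = ∫⁻ p, ENNReal.ofReal (F p) ∂γ := by
    intro γ h
    refine lintegral_congr_ae ?_
    have : ∀ᵐ p ∂γ, p ∈ K := by rwa [ae_iff]
    filter_upwards [this] with p hp
    have h1 : P p.1 = p.1 := by simp only [P]; rw [min_eq_left hp.1.2, max_eq_right hp.1.1]
    have h2 : P p.2 = p.2 := by simp only [P]; rw [min_eq_left hp.2.2, max_eq_right hp.2.1]
    change _ = ENNReal.ofReal ((P p.1 - P p.2) ^ 2)
    rw [h1, h2]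
  have hF2 : ∀ γ : FiniteMeasure (ℝ × ℝ), (γ : Measure (ℝ × ℝ)) Kᶜ = 0 →
      cost γ = ENNReal.ofReal (∫ p, F p ∂(γ : Measure (ℝ × ℝ))) := by
    intro γ h
    rw [hF _ h, ofReal_integral_eq_lintegral_ofReal (F.integrable _)]
    exact Eventually.of_forall fun p => sq_nonneg _
  have hcont : Continuous fun γ : FiniteMeasure (ℝ × ℝ) => ∫ p, F p ∂(γ : Measure (ℝ × ℝ)) :=
    FiniteMeasure.continuous_integral_boundedContinuousFunction F
  have hmem : ∀ γ : Measure (ℝ × ℝ), γ.map Prod.fst = μ → γ.map Prod.snd = ν →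
      ∃ g : FiniteMeasure (ℝ × ℝ), (g : Measure (ℝ × ℝ)) = γ ∧ g ∈ S ∩ C := by
    intro γ h1 h2
    have : IsFiniteMeasure γ := ⟨by rw [hmass γ h1]; exact measure_lt_top _ _⟩
    refine ⟨⟨γ, inferInstance⟩, rfl, ⟨?_, ?_⟩, ?_, ?_⟩
    · change (γ univ).toNNReal ≤ _
      rw [hmass γ h1]
    · change (γ Kᶜ).toNNReal = 0
      rw [hsupp γ h1 h2]; rfl
    · apply Subtype.ext; exact h1
    · apply Subtype.ext; exact h2
  have hback : ∀ g : FiniteMeasure (ℝ × ℝ), g ∈ C →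
      (g : Measure (ℝ × ℝ)).map Prod.fst = μ ∧ (g : Measure (ℝ × ℝ)).map Prod.snd = ν := by
    intro g hg
    exact ⟨congrArg Subtype.val hg.1, congrArg Subtype.val hg.2⟩
  obtain ⟨γ0, h01, h02⟩ := hne
  obtain ⟨g0, -, hg0⟩ := hmem γ0 h01 h02
  obtain ⟨g, hg, hmin⟩ := (hS.inter_right hC).exists_isMinOn ⟨g0, hg0⟩ hcont.continuousOn
  obtain ⟨hb1, hb2⟩ := hback g hg.2
  have hgK := hsupp _ hb1 hb2
  refine ⟨g, hb1, hb2, ?_, ?_⟩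
  · rw [hF2 g hgK]; exact ENNReal.ofReal_ne_top
  · intro γ' h1 h2
    obtain ⟨g', rfl, hg'⟩ := hmem γ' h1 h2
    rw [hF2 g hgK, hF2 g' (hsupp _ h1 h2)]
    exact ENNReal.ofReal_le_ofReal (hmin hg')

/-- The infimum defining `W2sq` is attained. -/
lemma exists_W2_opt {ρ ρt : ℝ → ℝ} (L : ℝ) [IsFiniteMeasure (nuMeas ρ ρt)]
    [IsFiniteMeasure (nuMeas ρt ρ)]
    (hμ : nuMeas ρ ρt (Icc 0 L)ᶜ = 0) (hν : nuMeas ρt ρ (Icc 0 L)ᶜ = 0)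
    (hne : ∃ γ : Measure (ℝ × ℝ), γ.map Prod.fst = nuMeas ρ ρt ∧ γ.map Prod.snd = nuMeas ρt ρ) :
    ∃ γ : Measure (ℝ × ℝ), γ.map Prod.fst = nuMeas ρ ρt ∧ γ.map Prod.snd = nuMeas ρt ρ ∧
      cost γ = ENNReal.ofReal (W2sq ρ ρt) := by
  obtain ⟨γ, h1, h2, hfin, hmin⟩ := exists_opt_plan _ _ L hμ hν hne
  refine ⟨γ, h1, h2, le_antisymm ?_ (W2sq_le_cost h1 h2)⟩
  rw [ENNReal.le_ofReal_iff_toReal_le hfin (W2sq_nonneg _ _)]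
  refine le_csInf ⟨_, γ, h1, h2, rfl⟩ ?_
  rintro r ⟨γ', h1', h2', rfl⟩
  rw [integral_eq_toReal_cost]
  -- every plan has finite cost, since it lives on a bounded set
  have hfin' : cost γ' ≠ ∞ := by
    have hsub : ∀ᵐ p ∂γ', p ∈ Icc 0 L ×ˢ Icc 0 L := by
      have e1 : ∀ᵐ p ∂γ', p.1 ∈ Icc 0 L := by
        have : ∀ᵐ x ∂(γ'.map Prod.fst), x ∈ Icc 0 L := by rw [h1']; exact hμ
        exact ae_of_ae_map measurable_fst.aemeasurable this
      have e2 : ∀ᵐ p ∂γ', p.2 ∈ Icc 0 L := by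
        have : ∀ᵐ x ∂(γ'.map Prod.snd), x ∈ Icc 0 L := by rw [h2']; exact hν
        exact ae_of_ae_map measurable_snd.aemeasurable this
      filter_upwards [e1, e2] with p a b using ⟨a, b⟩
    have hm : γ' univ ≠ ∞ := by
      rw [← preimage_univ (f := Prod.fst), ← Measure.map_apply measurable_fst MeasurableSet.univ,
        h1']
      exact measure_ne_top _ _
    refine ne_top_of_le_ne_top (b := ∫⁻ _, ENNReal.ofReal (L ^ 2) ∂γ') ?_
      (lintegral_mono_ae ?_)
    · rw [lintegral_const]; exact ENNReal.mul_ne_top ENNReal.ofReal_ne_top hm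
    · filter_upwards [hsub] with p hp
      apply ENNReal.ofReal_le_ofReal
      have a1 := hp.1.1; have a2 := hp.1.2; have a3 := hp.2.1; have a4 := hp.2.2
      apply sq_le_sq'  <;> linarith
  exact ENNReal.toReal_mono hfin' (hmin γ' h1' h2')

/-! ### Cancelling mass at an end point -/

/-- One-sided version of `collapse`, for the case in which at most as much mass leaves `z` as
arrives there. -/
lemma collapse_aux (γ : Measure (ℝ × ℝ)) [IsFiniteMeasure γ] (z : ℝ) (S : Set ℝ)
    (hSm : MeasurableSet S) (hS : ∀ x ∈ S, ∀ y ∈ S, 0 ≤ (x - z) * (y - z))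
    (h1 : ∀ᵐ p ∂γ, p.1 ∈ S) (h2 : ∀ᵐ p ∂γ, p.2 ∈ S)
    (hq : γ {p | p.1 = z ∧ p.2 ≠ z} ≤ γ {p | p.1 ≠ z ∧ p.2 = z}) :
    ∃ γ' : Measure (ℝ × ℝ), IsFiniteMeasure γ' ∧
      (∀ T, MeasurableSet T → z ∉ T → γ' (Prod.fst ⁻¹' T) = γ (Prod.fst ⁻¹' T) ∧
        γ' (Prod.snd ⁻¹' T) = γ (Prod.snd ⁻¹' T)) ∧
      γ' (Prod.fst ⁻¹' {z}) = 0 ∧ cost γ' ≤ cost γ := by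
  set A0 : Set (ℝ × ℝ) := {p | p.1 ≠ z ∧ p.2 ≠ z} with hA0
  set A1 : Set (ℝ × ℝ) := {p | p.1 ≠ z ∧ p.2 = z} with hA1
  set A2 : Set (ℝ × ℝ) := {p | p.1 = z ∧ p.2 ≠ z} with hA2
  have e1 : MeasurableSet {p : ℝ × ℝ | p.1 = z} := measurable_fst (measurableSet_singleton z)
  have e2 : MeasurableSet {p : ℝ × ℝ | p.2 = z} := measurable_snd (measurableSet_singleton z)
  have m0 : MeasurableSet A0 := e1.compl.inter e2.compl
  have m1 : MeasurableSet A1 := e1.compl.inter e2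
  have m2 : MeasurableSet A2 := e1.inter e2.compl
  have d01 : Disjoint A0 A1 := by
    rw [Set.disjoint_left]; rintro p hp hp'; exact hp.2 hp'.2
  have d02 : Disjoint A0 A2 := by
    rw [Set.disjoint_left]; rintro p hp hp'; exact hp.1 hp'.1
  have d12 : Disjoint A1 A2 := by
    rw [Set.disjoint_left]; rintro p hp hp'; exact hp.1 hp'.1
  -- marginals away from `z` in terms of the three pieces
  have hfst : ∀ T, MeasurableSet T → z ∉ T → γ (Prod.fst ⁻¹' T) =
      γ.restrict A0 (Prod.fst ⁻¹' T) + γ.restrict A1 (Prod.fst ⁻¹' T) := by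
    intro T hT hz
    rw [Measure.restrict_apply (measurable_fst hT), Measure.restrict_apply (measurable_fst hT),
      ← measure_union (d01.mono inter_subset_right inter_subset_right)
        ((measurable_fst hT).inter m1)]
    congr 1
    ext p
    have : p.1 ∈ T → p.1 ≠ z := fun h h' => hz (h' ▸ h)
    simp only [mem_preimage, mem_union, mem_inter_iff, hA0, hA1, mem_ofPred_eq]
    tauto
  have hsnd : ∀ T, MeasurableSet T → z ∉ T → γ (Prod.snd ⁻¹' T) =
      γ.restrict A0 (Prod.snd ⁻¹' T) + γ.restrict A2 (Prod.snd ⁻¹' T) := by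
    intro T hT hz
    rw [Measure.restrict_apply (measurable_snd hT), Measure.restrict_apply (measurable_snd hT),
      ← measure_union (d02.mono inter_subset_right inter_subset_right)
        ((measurable_snd hT).inter m2)]
    congr 1
    ext p
    have : p.2 ∈ T → p.2 ≠ z := fun h h' => hz (h' ▸ h)
    simp only [mem_preimage, mem_union, mem_inter_iff, hA0, hA2, mem_ofPred_eq]
    tauto
  have hcost : cost (γ.restrict A0) + cost (γ.restrict A1) + cost (γ.restrict A2) ≤ cost γ := by
    unfold cost
    rw [← lintegral_union m1 d01, ← lintegral_union m2 (by
      rw [Set.disjoint_union_left]; exact ⟨d02, d12⟩)]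
    exact setLIntegral_le_lintegral _ _
  have z0 : γ.restrict A0 (Prod.fst ⁻¹' {z}) = 0 := by
    rw [Measure.restrict_apply (measurable_fst (measurableSet_singleton z))]
    convert measure_empty (μ := γ) using 2
    ext p; simp [hA0]; tauto
  have z1 : γ.restrict A1 (Prod.fst ⁻¹' {z}) = 0 := by
    rw [Measure.restrict_apply (measurable_fst (measurableSet_singleton z))]
    convert measure_empty (μ := γ) using 2
    ext p; simp [hA1]; tauto
  by_cases hq0 : γ A1 = 0
  · have hq2 : γ A2 = 0 := le_antisymm (hq.trans hq0.le) zero_le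
    refine ⟨γ.restrict A0, inferInstance, fun T hT hz => ⟨?_, ?_⟩, z0, ?_⟩
    · rw [hfst T hT hz, Measure.restrict_eq_zero.2 hq0]; simp
    · rw [hsnd T hT hz, Measure.restrict_eq_zero.2 hq2]; simp
    · exact (le_self_add.trans le_self_add).trans hcost
  set q1 := γ A1 with hq1
  set q2 := γ A2 with hq2
  have q1f : q1 ≠ ∞ := measure_ne_top _ _
  have q2f : q2 ≠ ∞ := measure_ne_top _ _
  set μ1 := (γ.restrict A1).map Prod.fst with hμ1
  set μ2 := (γ.restrict A2).map Prod.snd with hμ2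
  have μ1u : μ1 univ = q1 := by
    rw [hμ1, Measure.map_apply measurable_fst MeasurableSet.univ]; simp [hq1]
  have μ2u : μ2 univ = q2 := by
    rw [hμ2, Measure.map_apply measurable_snd MeasurableSet.univ]; simp [hq2]
  have hinv : q1⁻¹ * q1 = 1 := ENNReal.inv_mul_cancel hq0 q1f
  have hle1 : q1⁻¹ * q2 ≤ 1 := by rw [← hinv]; gcongr
  have hsum : q1⁻¹ * q2 + (1 - q1⁻¹ * q2) = 1 := add_tsub_cancel_of_le hle1
  have hinvf : q1⁻¹ ≠ ∞ := ENNReal.inv_ne_top.2 hq0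
  -- Mass leaving `z` is coupled independently with the fraction `q2 / q1` of the mass arriving at
  -- `z`; the remaining fraction of the latter still arrives at `z`.
  let γ' := γ.restrict A0 + q1⁻¹ • (μ1.prod μ2) + (1 - q1⁻¹ * q2) • γ.restrict A1
  refine ⟨γ', ⟨?_⟩, fun T hT hz => ⟨?_, ?_⟩, ?_, ?_⟩
  · simp only [γ', Measure.add_apply, Measure.smul_apply, smul_eq_mul]
    refine ENNReal.add_lt_top.2 ⟨ENNReal.add_lt_top.2 ⟨measure_lt_top _ _, ?_⟩, ?_⟩
    · exact ENNReal.mul_lt_top hinvf.lt_top (measure_lt_top _ _)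
    · exact ENNReal.mul_lt_top (tsub_le_self.trans_lt ENNReal.one_lt_top) (measure_lt_top _ _)
  · simp only [γ', Measure.add_apply, Measure.smul_apply, smul_eq_mul]
    have : (μ1.prod μ2) (Prod.fst ⁻¹' T) = γ.restrict A1 (Prod.fst ⁻¹' T) * q2 := by
      rw [← Set.prod_univ, Measure.prod_prod, μ2u, hμ1, Measure.map_apply measurable_fst hT, Set.prod_univ]
    rw [this, hfst T hT hz, add_assoc]
    congr 1
    calc q1⁻¹ * (γ.restrict A1 (Prod.fst ⁻¹' T) * q2)
          + (1 - q1⁻¹ * q2) * γ.restrict A1 (Prod.fst ⁻¹' T)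
        = (q1⁻¹ * q2 + (1 - q1⁻¹ * q2)) * γ.restrict A1 (Prod.fst ⁻¹' T) := by ring
      _ = _ := by rw [hsum, one_mul]
  · simp only [γ', Measure.add_apply, Measure.smul_apply, smul_eq_mul]
    have : (μ1.prod μ2) (Prod.snd ⁻¹' T) = q1 * γ.restrict A2 (Prod.snd ⁻¹' T) := by
      rw [← Set.univ_prod, Measure.prod_prod, μ1u, hμ2, Measure.map_apply measurable_snd hT, Set.univ_prod]
    have hz' : γ.restrict A1 (Prod.snd ⁻¹' T) = 0 := by
      rw [Measure.restrict_apply (measurable_snd hT)]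
      convert measure_empty (μ := γ) using 2
      ext p
      have : p.2 ∈ T → p.2 ≠ z := fun h h' => hz (h' ▸ h)
      simp only [mem_preimage, mem_inter_iff, hA1, mem_ofPred_eq, mem_empty_iff_false]
      tauto
    rw [this, hsnd T hT hz, hz', ← mul_assoc, hinv]; simp
  · simp only [γ', Measure.add_apply, Measure.smul_apply, smul_eq_mul]
    have : (μ1.prod μ2) (Prod.fst ⁻¹' {z}) = 0 := by
      rw [← Set.prod_univ, Measure.prod_prod, hμ1, Measure.map_apply measurable_fst
        (measurableSet_singleton z), z1, zero_mul]
    rw [this, z0, z1]; simp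
  · have hc : cost γ' = cost (γ.restrict A0) + q1⁻¹ * cost (μ1.prod μ2)
        + (1 - q1⁻¹ * q2) * cost (γ.restrict A1) := by
      simp only [γ', cost]
      rw [lintegral_add_measure, lintegral_add_measure, lintegral_smul_measure,
        lintegral_smul_measure]; rfl
    have c1 : ∫⁻ x, ENNReal.ofReal ((x - z) ^ 2) ∂μ1 = cost (γ.restrict A1) := by
      rw [hμ1, lintegral_map (by fun_prop) measurable_fst]
      refine setLIntegral_congr_fun m1 fun p hp => ?_
      simp only [hp.2]
    have c2 : ∫⁻ y, ENNReal.ofReal ((y - z) ^ 2) ∂μ2 = cost (γ.restrict A2) := by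
      rw [hμ2, lintegral_map (by fun_prop) measurable_snd]
      refine setLIntegral_congr_fun m2 fun p hp => ?_
      have : p.1 = z := hp.1
      simp only [this]; congr 1; ring
    have s1 : ∀ᵐ x ∂μ1, x ∈ S := by
      exact (ae_map_iff measurable_fst.aemeasurable hSm).2 (ae_restrict_of_ae h1)
    have s2 : ∀ᵐ x ∂μ2, x ∈ S := by
      exact (ae_map_iff measurable_snd.aemeasurable hSm).2 (ae_restrict_of_ae h2)
    have cp : cost (μ1.prod μ2) ≤ cost (γ.restrict A1) * q2 + q1 * cost (γ.restrict A2) := by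
      unfold cost
      rw [lintegral_prod _ measurable_costfn.aemeasurable]
      calc ∫⁻ x, ∫⁻ y, ENNReal.ofReal ((x - y) ^ 2) ∂μ2 ∂μ1
          ≤ ∫⁻ x, ∫⁻ y, (ENNReal.ofReal ((x - z) ^ 2) + ENNReal.ofReal ((y - z) ^ 2)) ∂μ2 ∂μ1 := by
            refine lintegral_mono_ae ?_
            filter_upwards [s1] with x hx
            refine lintegral_mono_ae ?_
            filter_upwards [s2] with y hy
            rw [← ENNReal.ofReal_add (sq_nonneg _) (sq_nonneg _)]
            apply ENNReal.ofReal_le_ofReal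
            nlinarith [hS x hx y hy]
        _ = ∫⁻ x, (ENNReal.ofReal ((x - z) ^ 2) * q2 + cost (γ.restrict A2)) ∂μ1 := by
            refine lintegral_congr fun x => ?_
            rw [lintegral_add_left measurable_const, lintegral_const, μ2u, c2]
        _ = cost (γ.restrict A1) * q2 + q1 * cost (γ.restrict A2) := by
            rw [lintegral_add_right _ measurable_const, lintegral_const, μ1u,
              lintegral_mul_const _ (by fun_prop), c1, mul_comm q1]
    calc cost γ' ≤ cost (γ.restrict A0) + q1⁻¹ * (cost (γ.restrict A1) * q2
          + q1 * cost (γ.restrict A2)) + (1 - q1⁻¹ * q2) * cost (γ.restrict A1) := by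
          rw [hc]; gcongr
      _ = cost (γ.restrict A0) + (q1⁻¹ * q2 + (1 - q1⁻¹ * q2)) * cost (γ.restrict A1)
          + (q1⁻¹ * q1) * cost (γ.restrict A2) := by ring
      _ = cost (γ.restrict A0) + cost (γ.restrict A1) + cost (γ.restrict A2) := by
          rw [hsum, hinv, one_mul, one_mul]
      _ ≤ cost γ := hcost

lemma cost_swap (γ : Measure (ℝ × ℝ)) : cost (γ.map Prod.swap) = cost γ := by
  unfold cost
  rw [lintegral_map measurable_costfn measurable_swap]
  refine lintegral_congr fun p => ?_
  simp only [Prod.fst_swap, Prod.snd_swap]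
  congr 1; ring

/-- Mass which travels to an end point `z` of the domain and mass which travels from `z` can be
matched directly: the plan can be changed so that `z` is used on one side only, without changing
the marginals away from `z` and without increasing the cost. The crossed cost is controlled because
`(x - y)² ≤ (x - z)² + (y - z)²` for `x` and `y` on the same side of `z`. -/
lemma collapse (γ : Measure (ℝ × ℝ)) [IsFiniteMeasure γ] (z : ℝ) (S : Set ℝ)
    (hSm : MeasurableSet S) (hS : ∀ x ∈ S, ∀ y ∈ S, 0 ≤ (x - z) * (y - z))
    (h1 : ∀ᵐ p ∂γ, p.1 ∈ S) (h2 : ∀ᵐ p ∂γ, p.2 ∈ S) :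
    ∃ γ' : Measure (ℝ × ℝ), IsFiniteMeasure γ' ∧
      (∀ T, MeasurableSet T → z ∉ T → γ' (Prod.fst ⁻¹' T) = γ (Prod.fst ⁻¹' T) ∧
        γ' (Prod.snd ⁻¹' T) = γ (Prod.snd ⁻¹' T)) ∧
      (γ' (Prod.fst ⁻¹' {z}) = 0 ∨ γ' (Prod.snd ⁻¹' {z}) = 0) ∧ cost γ' ≤ cost γ := by
  have e1 : MeasurableSet {p : ℝ × ℝ | p.1 = z} := measurable_fst (measurableSet_singleton z)
  have e2 : MeasurableSet {p : ℝ × ℝ | p.2 = z} := measurable_snd (measurableSet_singleton z)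
  rcases le_total (γ {p | p.1 = z ∧ p.2 ≠ z}) (γ {p | p.1 ≠ z ∧ p.2 = z}) with hq | hq
  · obtain ⟨γ', a, b, c, d⟩ := collapse_aux γ z S hSm hS h1 h2 hq
    exact ⟨γ', a, b, Or.inl c, d⟩
  · have hq' : (γ.map Prod.swap) {p | p.1 = z ∧ p.2 ≠ z}
        ≤ (γ.map Prod.swap) {p | p.1 ≠ z ∧ p.2 = z} := by
      have m1 : MeasurableSet {p : ℝ × ℝ | p.1 ≠ z ∧ p.2 = z} := e1.compl.inter e2
      have m2 : MeasurableSet {p : ℝ × ℝ | p.1 = z ∧ p.2 ≠ z} := e1.inter e2.compl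
      rw [Measure.map_apply measurable_swap m2, Measure.map_apply measurable_swap m1]
      convert hq using 2 <;>
      · ext p; simp [and_comm]
    obtain ⟨γ', a, b, c, d⟩ := collapse_aux (γ.map Prod.swap) z S hSm hS
      ((ae_map_iff measurable_swap.aemeasurable (measurable_fst hSm)).2 h2)
      ((ae_map_iff measurable_swap.aemeasurable (measurable_snd hSm)).2 h1) hq'
    refine ⟨γ'.map Prod.swap, inferInstance, fun T hT hz => ⟨?_, ?_⟩, Or.inr ?_, ?_⟩
    · have := (b T hT hz).2
      rw [Measure.map_apply measurable_swap (measurable_snd hT)] at this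
      rw [Measure.map_apply measurable_swap (measurable_fst hT)]
      exact this
    · have := (b T hT hz).1
      rw [Measure.map_apply measurable_swap (measurable_fst hT)] at this
      rw [Measure.map_apply measurable_swap (measurable_snd hT)]
      exact this
    · rw [Measure.map_apply measurable_swap (measurable_snd (measurableSet_singleton z))]
      exact c
    · rw [cost_swap]; rw [cost_swap] at d; exact d

/-! ### Admissible densities and the boundary measures -/

/-- An admissible density which is measurable and nonnegative everywhere, and for which the mass
defect `1 - ρ` is integrable. -/
structure Nice (ρ : ℝ → ℝ) : Prop where
  meas : Measurable ρ
  nonneg : ∀ x, 0 ≤ ρ x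
  adm : MemAdm ρ
  int : IntegrableOn (fun x => 1 - ρ x) (Ioi 0)

lemma xA_nonneg (ρ : ℝ → ℝ) : 0 ≤ xA ρ := Real.sInf_nonneg fun _ hx => hx.1.le

lemma xA_le {ρ : ℝ → ℝ} {L : ℝ} (hL : 0 ≤ L) (h : ∀ᵐ y : ℝ, y ∈ Ioi L → ρ y = 1) :
    xA ρ ≤ L := by
  refine le_of_forall_pos_le_add fun ε hε => csInf_le ⟨0, fun _ hx => hx.1.le⟩ ⟨by linarith, ?_⟩
  filter_upwards [h] with y hy hy'
  exact hy (lt_trans (show L < L + ε by linarith) hy')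

lemma MemAdm.ae_one {ρ : ℝ → ℝ} (h : MemAdm ρ) : ∀ᵐ y : ℝ, y ∈ Ioi (xA ρ) → ρ y = 1 := by
  have hne : {x : ℝ | 0 < x ∧ ∀ᵐ y : ℝ, y ∈ Ioi x → ρ y = 1}.Nonempty := h.2.2.2
  have key : ∀ n : ℕ, ∀ᵐ y : ℝ, y ∈ Ioi (xA ρ + 1 / ((n : ℝ) + 1)) → ρ y = 1 := by
    intro n
    obtain ⟨x, hx, hlt⟩ := exists_lt_of_csInf_lt hne
      (show xA ρ < xA ρ + 1 / ((n : ℝ) + 1) by have : (0:ℝ) < 1 / ((n:ℝ)+1) := by positivity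
                                               linarith)
    filter_upwards [hx.2] with y hy hy'
    exact hy (hlt.trans hy')
  filter_upwards [ae_all_iff.2 key] with y hy hy'
  have hy2 : 0 < y - xA ρ := sub_pos.2 hy'
  obtain ⟨n, hn⟩ := exists_nat_one_div_lt hy2
  exact hy n (by simp only [mem_Ioi]; linarith)

lemma MemAdm.ae_one_of_le {ρ : ℝ → ℝ} (h : MemAdm ρ) {L : ℝ} (hL : xA ρ ≤ L) :
    ∀ᵐ y : ℝ, y ∈ Ici L → ρ y = 1 := by
  have h0 : ∀ᵐ y : ℝ, y ≠ L := by
    simp [ae_iff]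
  filter_upwards [h.ae_one, h0] with y hy hy0 hy'
  exact hy (lt_of_le_of_lt hL (lt_of_le_of_ne hy' (Ne.symm hy0)))

lemma fEnt_one (β : ℝ) : fEnt β 1 = 0 := by simp [fEnt]

lemma measurable_fEnt (β : ℝ) : Measurable (fEnt β) := by unfold fEnt; fun_prop

/-- Everything which vanishes at density one may be integrated over `(0, L)` only. -/
lemma integral_Ioi_eq_Ioo {ρ : ℝ → ℝ} (h : MemAdm ρ) {L : ℝ} (hL : xA ρ ≤ L) (g : ℝ → ℝ)
    (hg : g 1 = 0) : ∫ x in Ioi (0:ℝ), g (ρ x) = ∫ x in Ioo 0 L, g (ρ x) := by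
  refine setIntegral_eq_of_subset_of_ae_sdiff_eq_zero measurableSet_Ioi.nullMeasurableSet
    Ioo_subset_Ioi_self ?_
  filter_upwards [h.ae_one_of_le hL] with x hx hx'
  rw [hx, hg]
  by_contra hc
  exact hx'.2 ⟨hx'.1, not_le.1 hc⟩

lemma integrableOn_Ioi_iff {ρ : ℝ → ℝ} (h : MemAdm ρ) {L : ℝ} (hL : xA ρ ≤ L) (g : ℝ → ℝ)
    (hg : g 1 = 0) : IntegrableOn (fun x => g (ρ x)) (Ioi 0) ↔
      IntegrableOn (fun x => g (ρ x)) (Ioo 0 L) := by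
  refine ⟨fun H => H.mono_set Ioo_subset_Ioi_self, fun H => ?_⟩
  have h2 : IntegrableOn (fun x => g (ρ x)) (Ici L) := by
    refine (integrableOn_zero (s := Ici L)).congr ?_
    filter_upwards [ae_restrict_of_ae (h.ae_one_of_le hL), ae_restrict_mem measurableSet_Ici]
      with x hx hx'
    rw [hx hx', hg]
  refine (H.union h2).mono_set fun x hx => ?_
  rcases lt_or_ge x L with h | h
  · exact Or.inl ⟨hx, h⟩
  · exact Or.inr h

lemma Nice.integrableOn {ρ : ℝ → ℝ} (h : Nice ρ) (L : ℝ) : IntegrableOn ρ (Ioo 0 L) := by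
  have h1 : IntegrableOn (fun x => 1 - ρ x) (Ioo 0 L) := h.int.mono_set Ioo_subset_Ioi_self
  have h2 : IntegrableOn (fun _ : ℝ => (1:ℝ)) (Ioo 0 L) := by simp
  refine (h2.sub h1).congr (Eventually.of_forall fun x => ?_)
  simp

lemma MemAdm.Mfun_eq {ρ : ℝ → ℝ} (h : MemAdm ρ) {L : ℝ} (hL : xA ρ ≤ L)
    (hi : IntegrableOn ρ (Ioo 0 L)) :
    Mfun ρ = (∫ x in Ioo 0 L, ρ x) - L := by
  have hL0 : 0 ≤ L := (xA_nonneg ρ).trans hL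
  unfold Mfun
  rw [integral_Ioi_eq_Ioo h hL (fun r => 1 - r) (by simp), integral_sub (by simp) hi]
  simp [hL0]

lemma Nice.Mfun_eq {ρ : ℝ → ℝ} (h : Nice ρ) {L : ℝ} (hL : xA ρ ≤ L) :
    Mfun ρ = (∫ x in Ioo 0 L, ρ x) - L := h.adm.Mfun_eq hL (h.integrableOn L)

lemma Nice.lintegral_eq {ρ : ℝ → ℝ} (h : Nice ρ) {L : ℝ} {S : Set ℝ} (hS : S ⊆ Ioo 0 L) :
    ∫⁻ x in S, ENNReal.ofReal (ρ x) = ENNReal.ofReal (∫ x in S, ρ x) :=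
  (ofReal_integral_eq_lintegral_ofReal ((h.integrableOn L).mono_set hS)
    (Eventually.of_forall h.nonneg)).symm

lemma nuMeas_apply (ρ ρt : ℝ → ℝ) {T : Set ℝ} (hT : MeasurableSet T) :
    nuMeas ρ ρt T = (∫⁻ x in T ∩ Ioo 0 (max (xA ρ) (xA ρt)), ENNReal.ofReal (ρ x))
      + ENNReal.ofReal (Mdiff ρt ρ) * T.indicator 1 0 := by
  rw [nuMeas, Measure.add_apply, Measure.restrict_apply hT, Measure.smul_apply,
    Measure.dirac_apply' _ hT, withDensity_apply _ (hT.inter measurableSet_Ioo), smul_eq_mul]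

/-- A measure carried by `{0} ∪ (0, Λ)` with density `ρ` on `(0, Λ)`. -/
lemma eq_nuMeas {ρ ρt : ℝ → ℝ} (μ : Measure ℝ)
    (h0 : μ (Iio 0) = 0) (hΛ : μ (Ici (max (xA ρ) (xA ρt))) = 0)
    (hΛ0 : 0 < max (xA ρ) (xA ρt))
    (h : ∀ S, MeasurableSet S → S ⊆ Ioo 0 (max (xA ρ) (xA ρt)) →
      μ S = ∫⁻ x in S, ENNReal.ofReal (ρ x))
    (hat : μ {0} = ENNReal.ofReal (Mdiff ρt ρ)) : μ = nuMeas ρ ρt := by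
  ext T hT
  set Λ := max (xA ρ) (xA ρt)
  rw [nuMeas_apply ρ ρt hT, ← h _ (hT.inter measurableSet_Ioo) inter_subset_right, ← hat]
  have e : T ∩ (Iio 0 ∪ Ici Λ)ᶜ = (T ∩ Ioo 0 Λ) ∪ (T ∩ {0}) := by
    ext x
    simp only [mem_inter_iff, mem_compl_iff, mem_union, mem_Iio, mem_Ici, not_or, not_lt, not_le,
      mem_Ioo, mem_singleton_iff]
    constructor
    · rintro ⟨a, b, c⟩
      rcases b.eq_or_lt with b | b
      · exact Or.inr ⟨a, b.symm⟩
      · exact Or.inl ⟨a, b, c⟩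
    · rintro (⟨a, b, c⟩ | ⟨a, rfl⟩)
      · exact ⟨a, b.le, c⟩
      · exact ⟨a, le_rfl, hΛ0⟩
  have hn : μ (Iio 0 ∪ Ici Λ) = 0 := by
    rw [measure_union_null_iff]; exact ⟨h0, hΛ⟩
  rw [← measure_inter_conull (s := T) (t := (Iio 0 ∪ Ici Λ)ᶜ) (by rw [compl_compl]; exact hn), e,
    measure_union _ (hT.inter (measurableSet_singleton 0))]
  · congr 1
    by_cases hz : (0:ℝ) ∈ T
    · rw [inter_eq_right.2 (by simpa using hz)]; simp [hz]
    · have : T ∩ {0} = ∅ := by ext x; simp; rintro h rfl; exact hz h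
      simp [this, hz]
  · rw [Set.disjoint_left]; rintro x hx hx'
    have : x = 0 := hx'.2
    exact hx.2.1.ne' this

lemma nuMeas_finite {ρ ρt : ℝ → ℝ} (h : Nice ρ) : IsFiniteMeasure (nuMeas ρ ρt) := by
  refine ⟨?_⟩
  rw [nuMeas_apply _ _ MeasurableSet.univ, univ_inter, h.lintegral_eq (le_refl _)]
  exact ENNReal.add_lt_top.2 ⟨ENNReal.ofReal_lt_top, by simp⟩

lemma nuMeas_univ {ρ ρt : ℝ → ℝ} (h : Nice ρ) :
    nuMeas ρ ρt univ = ENNReal.ofReal (max (Mfun ρ) (Mfun ρt) + max (xA ρ) (xA ρt)) := by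
  have e := h.Mfun_eq (le_max_left (xA ρ) (xA ρt))
  have hi : 0 ≤ ∫ x in Ioo 0 (max (xA ρ) (xA ρt)), ρ x := integral_nonneg fun x => h.nonneg x
  rw [nuMeas_apply _ _ MeasurableSet.univ, univ_inter, h.lintegral_eq (le_refl _)]
  simp only [indicator_univ, Pi.one_apply, mul_one, Mdiff]
  rcases le_total (Mfun ρ) (Mfun ρt) with hm | hm
  · rw [← ENNReal.ofReal_add hi (by linarith), max_eq_right hm]; congr 1; linarith
  · rw [ENNReal.ofReal_of_nonpos (p := Mfun ρt - Mfun ρ) (by linarith), max_eq_left hm, add_zero]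
    congr 1; linarith

lemma nuMeas_supp (ρ ρt : ℝ → ℝ) : nuMeas ρ ρt (Icc 0 (max (xA ρ) (xA ρt)))ᶜ = 0 := by
  have : (Icc 0 (max (xA ρ) (xA ρt)))ᶜ ∩ Ioo 0 (max (xA ρ) (xA ρt)) = ∅ := by
    rw [← disjoint_iff_inter_eq_empty]
    exact disjoint_compl_left.mono_right Ioo_subset_Icc_self
  rw [nuMeas_apply _ _ measurableSet_Icc.compl, this]
  have h0 : (0:ℝ) ∉ (Icc 0 (max (xA ρ) (xA ρt)))ᶜ := by
    have := (xA_nonneg ρ).trans (le_max_left _ (xA ρt))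
    simp [this]
  simp [h0]

/-- Optimal plans exist between nice densities. -/
lemma Nice.exists_opt {ρ ρt : ℝ → ℝ} (h : Nice ρ) (ht : Nice ρt) :
    ∃ γ : Measure (ℝ × ℝ), γ.map Prod.fst = nuMeas ρ ρt ∧ γ.map Prod.snd = nuMeas ρt ρ ∧
      cost γ = ENNReal.ofReal (W2sq ρ ρt) := by
  have i1 : IsFiniteMeasure (nuMeas ρ ρt) := nuMeas_finite h
  have i2 : IsFiniteMeasure (nuMeas ρt ρ) := nuMeas_finite ht
  have hmass : nuMeas ρt ρ univ = nuMeas ρ ρt univ := by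
    rw [nuMeas_univ h, nuMeas_univ ht, max_comm, max_comm (xA ρt)]
  refine exists_W2_opt (max (xA ρ) (xA ρt)) (nuMeas_supp _ _)
    (by rw [max_comm]; exact nuMeas_supp _ _) ?_
  by_cases h0 : nuMeas ρ ρt univ = 0
  · refine ⟨0, ?_, ?_⟩
    · rw [Measure.measure_univ_eq_zero.1 h0]; simp
    · rw [Measure.measure_univ_eq_zero.1 (hmass.trans h0)]; simp
  · have hinv := ENNReal.inv_mul_cancel h0 (measure_ne_top _ _)
    refine ⟨(nuMeas ρ ρt univ)⁻¹ • (nuMeas ρ ρt).prod (nuMeas ρt ρ), ?_, ?_⟩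
    · rw [Measure.map_smul, Measure.map_fst_prod, hmass, smul_smul, hinv, one_smul]
    · rw [Measure.map_smul, Measure.map_snd_prod, smul_smul, hinv, one_smul]

/-! ### Relaxed couplings -/

lemma W2sq_of_xA_zero {ρ ρt : ℝ → ℝ} (h : Nice ρ) (ht : Nice ρt)
    (h0 : max (xA ρ) (xA ρt) = 0) : W2sq ρ ρt = 0 := by
  have e1 := h.Mfun_eq (le_max_left (xA ρ) (xA ρt))
  have e2 := ht.Mfun_eq (le_max_right (xA ρ) (xA ρt))
  rw [h0] at e1 e2
  have n1 : nuMeas ρ ρt = 0 := by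
    rw [← Measure.measure_univ_eq_zero, nuMeas_univ h, h0, e1, e2]; simp
  have n2 : nuMeas ρt ρ = 0 := by
    rw [← Measure.measure_univ_eq_zero, nuMeas_univ ht, max_comm (xA ρt), h0, e1, e2]; simp
  refine le_antisymm ((W2sq_le_integral (γ := 0) ?_ ?_).trans ?_) (W2sq_nonneg _ _)
  · rw [n1]; simp
  · rw [n2]; simp
  · simp

lemma sq_min_sub_le (a b z : ℝ) : (min a z - min b z) ^ 2 ≤ (a - b) ^ 2 := by
  rcases le_total a z with h1 | h1 <;> rcases le_total b z with h2 | h2 <;>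
    simp only [min_eq_left, min_eq_right, h1, h2] <;> nlinarith

lemma Nice.lintegral_tail {ρ : ℝ → ℝ} (h : Nice ρ) {Λ L : ℝ} (hΛ : xA ρ ≤ Λ) :
    ∫⁻ x in Ico Λ L, ENNReal.ofReal (ρ x) = volume (Ico Λ L) := by
  rw [← setLIntegral_one]
  refine setLIntegral_congr_fun_ae measurableSet_Ico ?_
  filter_upwards [h.adm.ae_one_of_le hΛ] with x hx hx'
  rw [hx hx'.1, ENNReal.ofReal_one]

/-- A plan between `ρ` and `ρt` need not be a coupling of the two measures which define
`W2sq`: it is enough that its marginals have the right densities on `(0, L)`, that they carry the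
same mass beyond `L`, and that it lives on the positive quadrant; the mass at the origin is free.
Truncating at `max (xA ρ) (xA ρt)` and cancelling the mass at both end points gives an honest
coupling which is not more expensive. -/
lemma W2_relaxed {ρ ρt : ℝ → ℝ} (h : Nice ρ) (ht : Nice ρt) {L : ℝ} (hL : xA ρ ≤ L)
    (hLt : xA ρt ≤ L) (γ : Measure (ℝ × ℝ)) [IsFiniteMeasure γ]
    (p1 : γ (Prod.fst ⁻¹' Iio 0) = 0) (p2 : γ (Prod.snd ⁻¹' Iio 0) = 0)
    (h1 : ∀ S, MeasurableSet S → S ⊆ Ioo 0 L →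
      γ (Prod.fst ⁻¹' S) = ∫⁻ x in S, ENNReal.ofReal (ρ x))
    (h2 : ∀ S, MeasurableSet S → S ⊆ Ioo 0 L →
      γ (Prod.snd ⁻¹' S) = ∫⁻ x in S, ENNReal.ofReal (ρt x))
    (hb : γ (Prod.fst ⁻¹' Ici L) = γ (Prod.snd ⁻¹' Ici L)) :
    ENNReal.ofReal (W2sq ρ ρt) ≤ cost γ := by
  set Λ := max (xA ρ) (xA ρt) with hΛdef
  have hΛL : Λ ≤ L := max_le hL hLt
  rcases ((xA_nonneg ρ).trans (le_max_left _ (xA ρt))).eq_or_lt with hΛ0 | hΛ0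
  · rw [W2sq_of_xA_zero h ht hΛ0.symm]; simp
  have hΛ0' : 0 < Λ := hΛ0
  -- truncation at `Λ`
  let q : ℝ × ℝ → ℝ × ℝ := fun p => (min p.1 Λ, min p.2 Λ)
  have hq : Measurable q := by fun_prop
  set γ1 := γ.map q with hγ1
  have hf1 : IsFiniteMeasure γ1 := by infer_instance
  have c1 : cost γ1 ≤ cost γ := by
    unfold cost
    rw [hγ1, lintegral_map measurable_costfn hq]
    exact lintegral_mono fun p => ENNReal.ofReal_le_ofReal (sq_min_sub_le _ _ _)
  have map1 : ∀ T, MeasurableSet T → γ1 (Prod.fst ⁻¹' T) = γ {p | min p.1 Λ ∈ T} := by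
    intro T hT; rw [hγ1, Measure.map_apply hq (measurable_fst hT)]; rfl
  have map2 : ∀ T, MeasurableSet T → γ1 (Prod.snd ⁻¹' T) = γ {p | min p.2 Λ ∈ T} := by
    intro T hT; rw [hγ1, Measure.map_apply hq (measurable_snd hT)]; rfl
  have minT : ∀ T : Set ℝ, T ⊆ Iio Λ → ∀ x, min x Λ ∈ T ↔ x ∈ T := by
    intro T hT x
    constructor
    · intro hx
      have : min x Λ < Λ := hT hx
      have hx' : x < Λ := by by_contra hc; rw [min_eq_right (not_lt.1 hc)] at this; exact lt_irrefl _ this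
      rwa [min_eq_left hx'.le] at hx
    · intro hx
      rwa [min_eq_left (le_of_lt (hT hx))]
  have m1 : ∀ T, MeasurableSet T → T ⊆ Iio Λ → γ1 (Prod.fst ⁻¹' T) = γ (Prod.fst ⁻¹' T) := by
    intro T hT hs
    rw [map1 T hT]; congr 1; ext p; exact minT T hs _
  have m2 : ∀ T, MeasurableSet T → T ⊆ Iio Λ → γ1 (Prod.snd ⁻¹' T) = γ (Prod.snd ⁻¹' T) := by
    intro T hT hs
    rw [map2 T hT]; congr 1; ext p; exact minT T hs _
  have hsplit : Ici Λ = Ico Λ L ∪ Ici L := (Ico_union_Ici_eq_Ici hΛL).symm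
  have hdisj : Disjoint (Ico Λ L) (Ici L) := by
    rw [Set.disjoint_left]; rintro x hx hx'; exact not_le.2 hx.2 hx'
  have hsub : Ico Λ L ⊆ Ioo 0 L := fun x hx => ⟨hΛ0'.trans_le hx.1, hx.2⟩
  have bal : γ1 (Prod.fst ⁻¹' {Λ}) = γ1 (Prod.snd ⁻¹' {Λ}) := by
    have e1 : {p : ℝ × ℝ | min p.1 Λ ∈ ({Λ} : Set ℝ)} = Prod.fst ⁻¹' (Ici Λ) := by
      ext p; simp
    have e2 : {p : ℝ × ℝ | min p.2 Λ ∈ ({Λ} : Set ℝ)} = Prod.snd ⁻¹' (Ici Λ) := by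
      ext p; simp
    rw [map1 _ (measurableSet_singleton _), map2 _ (measurableSet_singleton _), e1, e2, hsplit,
      preimage_union, preimage_union,
      measure_union (hdisj.preimage _) (measurable_fst measurableSet_Ici),
      measure_union (hdisj.preimage _) (measurable_snd measurableSet_Ici), hb,
      h1 _ measurableSet_Ico hsub, h2 _ measurableSet_Ico hsub,
      h.lintegral_tail (le_max_left _ _), ht.lintegral_tail (le_max_right _ _)]
  have ioi1 : γ1 (Prod.fst ⁻¹' Ioi Λ) = 0 := by
    rw [map1 _ measurableSet_Ioi]; simp
  have ioi2 : γ1 (Prod.snd ⁻¹' Ioi Λ) = 0 := by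
    rw [map2 _ measurableSet_Ioi]; simp
  have iio : Iio (0:ℝ) ⊆ Iio Λ := Iio_subset_Iio hΛ0'.le
  -- cancellation at `Λ`
  have a1 : ∀ᵐ p ∂γ1, p.1 ∈ Iic Λ := by
    rw [ae_iff]; convert ioi1 using 2; ext p; simp
  have a2 : ∀ᵐ p ∂γ1, p.2 ∈ Iic Λ := by
    rw [ae_iff]; convert ioi2 using 2; ext p; simp
  obtain ⟨γ2, hf2, mar2, at2, c2⟩ := collapse γ1 Λ (Iic Λ) measurableSet_Iic
    (fun x hx y hy => mul_nonneg_of_nonpos_of_nonpos (sub_nonpos.2 hx) (sub_nonpos.2 hy)) a1 a2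
  have at2' : γ2 (Prod.fst ⁻¹' {Λ}) = 0 ∧ γ2 (Prod.snd ⁻¹' {Λ}) = 0 := by
    have hc := mar2 {Λ}ᶜ (measurableSet_singleton _).compl (by simp)
    have tot : ∀ (μ : Measure (ℝ × ℝ)) (g : ℝ × ℝ → ℝ), Measurable g →
        μ (g ⁻¹' {Λ}) + μ (g ⁻¹' {Λ}ᶜ) = μ univ := by
      intro μ g hg
      exact measure_add_measure_compl (hg (measurableSet_singleton _))
    have t1 := tot γ1 _ measurable_fst
    have t2 := tot γ1 _ measurable_snd
    have t3 := tot γ2 _ measurable_fst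
    have t4 := tot γ2 _ measurable_snd
    have e : γ1 (Prod.fst ⁻¹' {Λ}ᶜ) = γ1 (Prod.snd ⁻¹' {Λ}ᶜ) := by
      rw [← t2, bal] at t1
      exact (ENNReal.add_right_inj (measure_ne_top _ _)).1 t1
    have e2 : γ2 (Prod.fst ⁻¹' {Λ}) = γ2 (Prod.snd ⁻¹' {Λ}) := by
      rw [← t4, hc.1, hc.2, e] at t3
      exact (ENNReal.add_left_inj (measure_ne_top _ _)).1 t3
    rcases at2 with hz | hz
    · exact ⟨hz, e2 ▸ hz⟩
    · exact ⟨e2 ▸ hz, hz⟩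
  -- cancellation at the origin
  have hΛI : Λ ∉ Iio (0:ℝ) := by simp [hΛ0'.le]
  have b1 : γ2 (Prod.fst ⁻¹' Iio 0) = 0 := by
    rw [(mar2 _ measurableSet_Iio hΛI).1, m1 _ measurableSet_Iio iio, p1]
  have b2 : γ2 (Prod.snd ⁻¹' Iio 0) = 0 := by
    rw [(mar2 _ measurableSet_Iio hΛI).2, m2 _ measurableSet_Iio iio, p2]
  have b1' : ∀ᵐ p ∂γ2, p.1 ∈ Ici (0:ℝ) := by
    rw [ae_iff]; convert b1 using 2; ext p; simp
  have b2' : ∀ᵐ p ∂γ2, p.2 ∈ Ici (0:ℝ) := by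
    rw [ae_iff]; convert b2 using 2; ext p; simp
  obtain ⟨γ3, hf3, mar3, at3, c3⟩ := collapse γ2 0 (Ici 0) measurableSet_Ici
    (fun x hx y hy => mul_nonneg (sub_nonneg.2 hx) (sub_nonneg.2 hy)) b1' b2'
  have z1 : γ3 (Prod.fst ⁻¹' Iio 0) = 0 := by rw [(mar3 _ measurableSet_Iio (by simp)).1, b1]
  have z2 : γ3 (Prod.snd ⁻¹' Iio 0) = 0 := by rw [(mar3 _ measurableSet_Iio (by simp)).2, b2]
  have ne0 : (0:ℝ) ∉ Ici Λ := by simp [hΛ0']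
  have uI : Ici Λ = {Λ} ∪ Ioi Λ := by ext x; simp [le_iff_eq_or_lt, eq_comm]
  have y1 : γ3 (Prod.fst ⁻¹' Ici Λ) = 0 := by
    rw [(mar3 _ measurableSet_Ici ne0).1, uI, preimage_union, measure_union_null_iff]
    exact ⟨at2'.1, by rw [(mar2 _ measurableSet_Ioi (by simp)).1, ioi1]⟩
  have y2 : γ3 (Prod.snd ⁻¹' Ici Λ) = 0 := by
    rw [(mar3 _ measurableSet_Ici ne0).2, uI, preimage_union, measure_union_null_iff]
    exact ⟨at2'.2, by rw [(mar2 _ measurableSet_Ioi (by simp)).2, ioi2]⟩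
  have g1 : ∀ S, MeasurableSet S → S ⊆ Ioo 0 Λ →
      γ3 (Prod.fst ⁻¹' S) = ∫⁻ x in S, ENNReal.ofReal (ρ x) := by
    intro S hS hs
    rw [(mar3 S hS fun h0 => lt_irrefl _ (hs h0).1).1, (mar2 S hS fun h0 => lt_irrefl _ (hs h0).2).1,
      m1 S hS fun x hx => (hs hx).2]
    exact h1 S hS (hs.trans (Ioo_subset_Ioo_right hΛL))
  have g2 : ∀ S, MeasurableSet S → S ⊆ Ioo 0 Λ →
      γ3 (Prod.snd ⁻¹' S) = ∫⁻ x in S, ENNReal.ofReal (ρt x) := by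
    intro S hS hs
    rw [(mar3 S hS fun h0 => lt_irrefl _ (hs h0).1).2, (mar2 S hS fun h0 => lt_irrefl _ (hs h0).2).2,
      m2 S hS fun x hx => (hs hx).2]
    exact h2 S hS (hs.trans (Ioo_subset_Ioo_right hΛL))
  have tot : ∀ g : ℝ × ℝ → ℝ, Measurable g → γ3 (g ⁻¹' Iio 0) = 0 → γ3 (g ⁻¹' Ici Λ) = 0 →
      γ3 univ = γ3 (g ⁻¹' Ioo 0 Λ) + γ3 (g ⁻¹' {0}) := by
    intro g hg hg0 hg1
    have hU : (univ : Set ℝ) = (Iio 0 ∪ Ici Λ) ∪ (Ioo 0 Λ ∪ {0}) := by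
      ext x
      simp only [mem_univ, mem_union, mem_Iio, mem_Ici, mem_Ioo, mem_singleton_iff, true_iff]
      rcases lt_trichotomy x 0 with hx | hx | hx
      · exact Or.inl (Or.inl hx)
      · exact Or.inr (Or.inr hx)
      · rcases lt_or_ge x Λ with hx' | hx'
        · exact Or.inr (Or.inl ⟨hx, hx'⟩)
        · exact Or.inl (Or.inr hx')
    have hn : γ3 (g ⁻¹' (Iio 0 ∪ Ici Λ)) = 0 := by
      rw [preimage_union, measure_union_null_iff]; exact ⟨hg0, hg1⟩
    have hdrop : ∀ B, γ3 (g ⁻¹' (Iio 0 ∪ Ici Λ) ∪ B) = γ3 B := fun B =>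
      le_antisymm ((measure_union_le _ _).trans (by rw [hn, zero_add]))
        (measure_mono subset_union_right)
    rw [← preimage_univ (f := g), hU, preimage_union, hdrop, preimage_union,
      measure_union _ (hg (measurableSet_singleton 0))]
    refine Disjoint.preimage _ ?_
    rw [Set.disjoint_left]; rintro x hx hx'
    exact hx.1.ne' hx'
  have t1 := tot _ measurable_fst z1 y1
  have t2 := tot _ measurable_snd z2 y2
  rw [g1 _ measurableSet_Ioo le_rfl, h.lintegral_eq (le_refl _)] at t1
  rw [g2 _ measurableSet_Ioo le_rfl, ht.lintegral_eq (le_refl _)] at t2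
  have e1 := h.Mfun_eq (le_max_left (xA ρ) (xA ρt))
  have e2 := ht.Mfun_eq (le_max_right (xA ρ) (xA ρt))
  have i1 : 0 ≤ ∫ x in Ioo 0 Λ, ρ x := integral_nonneg fun x => h.nonneg x
  have i2 : 0 ≤ ∫ x in Ioo 0 Λ, ρt x := integral_nonneg fun x => ht.nonneg x
  rw [← hΛdef] at e1 e2
  have hM : ∫ x in Ioo 0 Λ, ρ x = Mfun ρ + Λ := by linarith
  have hMt : ∫ x in Ioo 0 Λ, ρt x = Mfun ρt + Λ := by linarith
  have atoms : γ3 (Prod.fst ⁻¹' {0}) = ENNReal.ofReal (Mdiff ρt ρ) ∧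
      γ3 (Prod.snd ⁻¹' {0}) = ENNReal.ofReal (Mdiff ρ ρt) := by
    have key : ∀ (A B : ℝ) (n : ℝ≥0∞), 0 ≤ A → 0 ≤ B → ENNReal.ofReal A = ENNReal.ofReal B + n →
        ENNReal.ofReal (B - A) = 0 ∧ n = ENNReal.ofReal (A - B) := by
      intro A B n hA hB he
      have hBA : B ≤ A := by
        rw [← ENNReal.ofReal_le_ofReal_iff hA, he]; exact le_self_add
      refine ⟨ENNReal.ofReal_of_nonpos (by linarith), ?_⟩
      rw [ENNReal.ofReal_sub _ hB, he, ENNReal.add_sub_cancel_left ENNReal.ofReal_ne_top]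
    unfold Mdiff
    rcases at3 with hz | hz
    · rw [hz, add_zero] at t1
      have := key _ _ _ i1 i2 (t1.symm.trans t2)
      rw [hz, this.2, ← this.1]
      constructor <;> congr 1 <;> linarith
    · rw [hz, add_zero] at t2
      have := key _ _ _ i2 i1 (t2.symm.trans t1)
      rw [hz, this.2, ← this.1]
      constructor <;> congr 1 <;> linarith
  have f1 : γ3.map Prod.fst = nuMeas ρ ρt := by
    refine eq_nuMeas _ ?_ ?_ hΛ0' ?_ ?_
    · rw [Measure.map_apply measurable_fst measurableSet_Iio, z1]
    · rw [Measure.map_apply measurable_fst measurableSet_Ici]; exact y1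
    · intro S hS hs; rw [Measure.map_apply measurable_fst hS]; exact g1 S hS hs
    · rw [Measure.map_apply measurable_fst (measurableSet_singleton _), atoms.1]
  have f2 : γ3.map Prod.snd = nuMeas ρt ρ := by
    refine eq_nuMeas _ ?_ ?_ (by rw [max_comm]; exact hΛ0') ?_ ?_
    · rw [Measure.map_apply measurable_snd measurableSet_Iio, z2]
    · rw [Measure.map_apply measurable_snd measurableSet_Ici, max_comm]; exact y2
    · intro S hS hs; rw [Measure.map_apply measurable_snd hS]
      exact g2 S hS (by rwa [max_comm] at hs)
    · rw [Measure.map_apply measurable_snd (measurableSet_singleton _), atoms.2]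
  exact (W2sq_le_cost f1 f2).trans (c3.trans (c2.trans c1))

/-! ### Entropy, penalty and the marginals of optimal plans -/

/-- The tangent line inequality, expressing convexity of the entropy. -/
lemma fEnt_tangent {β r t : ℝ} (hr : 0 ≤ r) (ht : 0 < t) :
    fEnt β t ≤ fEnt β r + (Real.log t + 1 - β) * (t - r) := by
  unfold fEnt
  rcases hr.eq_or_lt with rfl | hr
  · nlinarith
  · have h := Real.log_le_sub_one_of_pos (div_pos ht hr)
    rw [Real.log_div ht.ne' hr.ne'] at h
    have h2 : r * (Real.log t - Real.log r) ≤ t - r := by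
      calc r * (Real.log t - Real.log r) ≤ r * (t / r - 1) := by gcongr
        _ = t - r := by field_simp
    nlinarith

/-- The entropy density is minimal at `exp (β - 1)`. -/
lemma fEnt_lower {β r : ℝ} (hr : 0 ≤ r) : β - Real.exp (β - 1) ≤ fEnt β r := by
  have := fEnt_tangent (β := β) hr (Real.exp_pos (β - 1))
  rw [fEnt, Real.log_exp] at this
  nlinarith

lemma beta_le_exp (β : ℝ) : β - Real.exp (β - 1) ≤ 0 := by
  have := Real.add_one_le_exp (β - 1)
  linarith

/-- Moving the density from `r` towards `s` changes the entropy by at most the marginal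
entropy at `s`. -/
lemma fEnt_between {β r s t : ℝ} (hr : 0 ≤ r) (hs : 0 < s)
    (h : (s ≤ t ∧ t ≤ r) ∨ (r ≤ t ∧ t ≤ s)) :
    fEnt β t ≤ fEnt β r + (Real.log s + 1 - β) * (t - r) := by
  rcases h with ⟨h1, h2⟩ | ⟨h1, h2⟩
  · have ht : 0 < t := hs.trans_le h1
    have := fEnt_tangent (β := β) hr ht
    have hl := Real.log_le_log hs h1
    nlinarith
  · rcases (hr.trans h1).eq_or_lt with h0 | ht
    · have : r = 0 := le_antisymm (h1.trans h0.symm.le) hr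
      rw [← h0, this]; simp
    · have := fEnt_tangent (β := β) hr ht
      have hl := Real.log_le_log ht h2
      nlinarith

lemma mul_log_ge {t : ℝ} (ht : 0 ≤ t) : -1 ≤ t * Real.log t := by
  have h := fEnt_lower (β := 0) ht
  have h2 : Real.exp (0 - 1) ≤ 1 := Real.exp_le_one_iff.2 (by norm_num)
  unfold fEnt at h; linarith

lemma abs_mul_log_between {r s t : ℝ} (hr : 0 ≤ r) (hs : 0 ≤ s)
    (h : (s ≤ t ∧ t ≤ r) ∨ (r ≤ t ∧ t ≤ s)) :
    |t * Real.log t| ≤ |r * Real.log r| + |s * Real.log s| + 1 := by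
  have ht : 0 ≤ t := by rcases h with h | h <;> linarith
  have hm : t * Real.log t ≤ max (r * Real.log r) (s * Real.log s) := by
    rcases h with h | h
    · rw [max_comm]; exact Real.convexOn_mul_log.le_max_of_mem_Icc hs hr h
    · exact Real.convexOn_mul_log.le_max_of_mem_Icc hr hs h
  have h2 : max (r * Real.log r) (s * Real.log s) ≤ |r * Real.log r| + |s * Real.log s| :=
    max_le (by linarith [le_abs_self (r * Real.log r), abs_nonneg (s * Real.log s)])
      (by linarith [le_abs_self (s * Real.log s), abs_nonneg (r * Real.log r)])
  rw [abs_le]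
  constructor
  · linarith [mul_log_ge ht, abs_nonneg (s * Real.log s), abs_nonneg (r * Real.log r)]
  · linarith

lemma ptau_nonneg {K m x : ℝ} (hK : 0 < K) : 0 ≤ ptau K m x := by unfold ptau; positivity

lemma ptau_of_nonneg {K m x : ℝ} (hm : 0 < m) (hx : 0 ≤ x) : ptau K m x = 0 := by
  unfold ptau; rw [max_eq_right (by linarith)]; simp

lemma ptau_anti {K m x y : ℝ} (hK : 0 < K) (h : x ≤ y) : ptau K m y ≤ ptau K m x := by
  unfold ptau; gcongr

/-- Criterion for a density which equals one beyond `L`: the integrability requirements reduce to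
integrability on `(0, L)` and local integrability of `σ log σ`. -/
lemma nice_mk {σ : ℝ → ℝ} {L : ℝ} (hL : 0 ≤ L) (hm : Measurable σ) (h0 : ∀ x, 0 ≤ σ x)
    (hi : IntegrableOn σ (Ioo 0 L))
    (hlog : LocallyIntegrableOn (fun x => σ x * Real.log (σ x)) (Ioi 0) volume)
    (h1 : ∀ x, L ≤ x → σ x = 1) : Nice σ ∧ xA σ ≤ L := by
  have hint : IntegrableOn (fun x => 1 - σ x) (Ioi 0) := by
    have a : IntegrableOn (fun x => 1 - σ x) (Ioo 0 L) := by
      refine Integrable.sub ?_ hi; simp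
    have b : IntegrableOn (fun x => 1 - σ x) (Ici L) := by
      refine (integrableOn_zero (s := Ici L)).congr_fun (fun x hx => ?_) measurableSet_Ici
      simp [h1 x hx]
    refine (a.union b).mono_set fun x hx => ?_
    rcases lt_or_ge x L with h | h
    · exact Or.inl ⟨hx, h⟩
    · exact Or.inr h
  refine ⟨⟨hm, h0, ⟨Eventually.of_forall fun x _ => h0 x, ?_, hlog, L + 1, by linarith,
    Eventually.of_forall fun x hx => h1 x (by have : L + 1 < x := hx; linarith)⟩, hint⟩,
    xA_le hL (Eventually.of_forall fun x hx => h1 x (le_of_lt hx))⟩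
  have c1 : LocallyIntegrableOn (fun _ : ℝ => (1:ℝ)) (Ioi 0) volume :=
    (locallyIntegrable_const 1).locallyIntegrableOn _
  refine (c1.sub hint.locallyIntegrableOn).congr (Eventually.of_forall fun x => ?_)
  simp

/-- A finite measure dominated on `(0, L)` by a density `g` has itself a density `k ≤ g` there. -/
lemma exists_density {L : ℝ} (μ : Measure ℝ) [IsFiniteMeasure μ] (g : ℝ → ℝ) (hg : Measurable g)
    (hg0 : ∀ x, 0 ≤ g x)
    (h : ∀ S, MeasurableSet S → S ⊆ Ioo 0 L → μ S ≤ ∫⁻ x in S, ENNReal.ofReal (g x)) :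
    ∃ k : ℝ → ℝ, Measurable k ∧ (∀ x, 0 ≤ k x) ∧ (∀ x, k x ≤ g x) ∧
      ∀ S, MeasurableSet S → S ⊆ Ioo 0 L → μ S = ∫⁻ x in S, ENNReal.ofReal (k x) := by
  set μ' := μ.restrict (Ioo 0 L) with hμ'
  have hle : ∀ S, MeasurableSet S → μ' S ≤ ∫⁻ x in S, ENNReal.ofReal (g x) := by
    intro S hS
    rw [hμ', Measure.restrict_apply hS]
    exact (h _ (hS.inter measurableSet_Ioo) inter_subset_right).trans
      (lintegral_mono_set inter_subset_left)
  have hac : μ' ≪ volume := by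
    refine Measure.AbsolutelyContinuous.mk fun S hS h0 => ?_
    have := hle S hS
    rw [Measure.restrict_eq_zero.2 h0, lintegral_zero_measure] at this
    exact le_antisymm this zero_le
  set d := μ'.rnDeriv volume with hd
  have hdm : Measurable d := Measure.measurable_rnDeriv _ _
  have hwd : ∀ S, MeasurableSet S → ∫⁻ x in S, d x = μ' S := by
    intro S hS
    rw [← withDensity_apply _ hS, hd, Measure.withDensity_rnDeriv_eq _ _ hac]
  have hdg : d ≤ᵐ[volume] fun x => ENNReal.ofReal (g x) := by
    refine ae_le_of_forall_setLIntegral_le_of_sigmaFinite hdm fun S hS _ => ?_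
    rw [hwd S hS]; exact hle S hS
  refine ⟨fun x => (min (d x) (ENNReal.ofReal (g x))).toReal, by fun_prop,
    fun x => ENNReal.toReal_nonneg, fun x => ?_, fun S hS hs => ?_⟩
  · refine ENNReal.toReal_le_of_le_ofReal (hg0 x) (min_le_right _ _)
  · have e : μ S = μ' S := by rw [hμ', Measure.restrict_apply hS, inter_eq_left.2 hs]
    rw [e, ← hwd S hS]
    refine lintegral_congr_ae (ae_restrict_of_ae ?_)
    filter_upwards [hdg] with x hx
    rw [ENNReal.ofReal_toReal (by simp), min_eq_left hx]

/-- `γ` is an optimal plan between `nuMeas ρ ρt` and `nuMeas ρt ρ`. The marginals are described by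
their densities on `(0, max (xA ρ) (xA ρt))` and their atoms at the origin. -/
structure IsOpt (ρ ρt : ℝ → ℝ) (γ : Measure (ℝ × ℝ)) : Prop where
  fin : IsFiniteMeasure γ
  neg1 : γ (Prod.fst ⁻¹' Iio 0) = 0
  neg2 : γ (Prod.snd ⁻¹' Iio 0) = 0
  top1 : γ (Prod.fst ⁻¹' Ici (max (xA ρ) (xA ρt))) = 0
  top2 : γ (Prod.snd ⁻¹' Ici (max (xA ρ) (xA ρt))) = 0
  dens1 : ∀ S, MeasurableSet S → S ⊆ Ioo 0 (max (xA ρ) (xA ρt)) →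
      γ (Prod.fst ⁻¹' S) = ∫⁻ x in S, ENNReal.ofReal (ρ x)
  dens2 : ∀ S, MeasurableSet S → S ⊆ Ioo 0 (max (xA ρ) (xA ρt)) →
      γ (Prod.snd ⁻¹' S) = ∫⁻ x in S, ENNReal.ofReal (ρt x)
  atom1 : γ (Prod.fst ⁻¹' {0}) = ENNReal.ofReal (Mdiff ρt ρ)
  atom2 : γ (Prod.snd ⁻¹' {0}) = ENNReal.ofReal (Mdiff ρ ρt)
  opt : cost γ = ENNReal.ofReal (W2sq ρ ρt)

lemma exists_isOpt {ρ ρt : ℝ → ℝ} (h : Nice ρ) (ht : Nice ρt) (hΛ : 0 < max (xA ρ) (xA ρt)) :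
    ∃ γ, IsOpt ρ ρt γ := by
  obtain ⟨γ, h1, h2, hc⟩ := h.exists_opt ht
  have a1 : ∀ S, MeasurableSet S → γ (Prod.fst ⁻¹' S) =
      (∫⁻ x in S ∩ Ioo 0 (max (xA ρ) (xA ρt)), ENNReal.ofReal (ρ x))
      + ENNReal.ofReal (Mdiff ρt ρ) * S.indicator 1 0 := by
    intro S hS; rw [← Measure.map_apply measurable_fst hS, h1, nuMeas_apply _ _ hS]
  have a2 : ∀ S, MeasurableSet S → γ (Prod.snd ⁻¹' S) =
      (∫⁻ x in S ∩ Ioo 0 (max (xA ρ) (xA ρt)), ENNReal.ofReal (ρt x))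
      + ENNReal.ofReal (Mdiff ρ ρt) * S.indicator 1 0 := by
    intro S hS
    rw [← Measure.map_apply measurable_snd hS, h2, nuMeas_apply _ _ hS, max_comm (xA ρt)]
  set Λ := max (xA ρ) (xA ρt)
  have e1 : Iio 0 ∩ Ioo 0 Λ = ∅ := by
    ext x; simp only [mem_inter_iff, mem_Iio, mem_Ioo, mem_empty_iff_false, iff_false]
    rintro ⟨a, b, -⟩; linarith
  have e2 : Ici Λ ∩ Ioo 0 Λ = ∅ := by
    ext x; simp only [mem_inter_iff, mem_Ici, mem_Ioo, mem_empty_iff_false, iff_false]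
    rintro ⟨a, -, b⟩; linarith
  have e3 : {0} ∩ Ioo 0 Λ = ∅ := by
    ext x; simp only [mem_inter_iff, mem_singleton_iff, mem_Ioo, mem_empty_iff_false, iff_false]
    rintro ⟨a, b, -⟩; linarith
  have n2 : (0:ℝ) ∉ Ici Λ := by simp [hΛ]
  have hS : ∀ S : Set ℝ, S ⊆ Ioo 0 Λ → S.indicator (1 : ℝ → ℝ≥0∞) 0 = 0 := fun S hs =>
    indicator_of_notMem (fun h0 => lt_irrefl _ (hs h0).1) _
  refine ⟨γ, ?_, ?_, ?_, ?_, ?_, ?_, ?_, ?_, ?_, hc⟩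
  · refine ⟨?_⟩
    have := nuMeas_finite (ρt := ρt) h
    rw [← preimage_univ (f := Prod.fst), ← Measure.map_apply measurable_fst MeasurableSet.univ, h1]
    exact measure_lt_top _ _
  · rw [a1 _ measurableSet_Iio, e1]; simp
  · rw [a2 _ measurableSet_Iio, e1]; simp
  · rw [a1 _ measurableSet_Ici, e2, indicator_of_notMem n2]; simp
  · rw [a2 _ measurableSet_Ici, e2, indicator_of_notMem n2]; simp
  · intro S hm hs; rw [a1 S hm, inter_eq_left.2 hs, hS S hs]; simp
  · intro S hm hs; rw [a2 S hm, inter_eq_left.2 hs, hS S hs]; simp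
  · rw [a1 _ (measurableSet_singleton 0), e3]; simp
  · rw [a2 _ (measurableSet_singleton 0), e3]; simp

/-- A marginal of a plan, with density `ρ` on `(0, Λ)`, integrated against functions of one variable. -/
lemma lintegral_marginal {Λ : ℝ} {ρ : ℝ → ℝ} (hρ : Measurable ρ) {γ : Measure (ℝ × ℝ)}
    {pr : ℝ × ℝ → ℝ} (hpr : Measurable pr)
    (hd : ∀ S, MeasurableSet S → S ⊆ Ioo 0 Λ → γ (pr ⁻¹' S) = ∫⁻ x in S, ENNReal.ofReal (ρ x))
    {S : Set ℝ} (hS : MeasurableSet S) (hs : S ⊆ Ioo 0 Λ) (g : ℝ → ℝ≥0∞) (hg : Measurable g) :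
    ∫⁻ p in pr ⁻¹' S, g (pr p) ∂γ = ∫⁻ x in S, g x * ENNReal.ofReal (ρ x) := by
  have e : (γ.map pr).restrict S =
      (volume.withDensity fun x => ENNReal.ofReal (ρ x)).restrict S := by
    ext T hT
    rw [Measure.restrict_apply hT, Measure.restrict_apply hT,
      Measure.map_apply hpr (hT.inter hS), hd _ (hT.inter hS) (inter_subset_right.trans hs),
      withDensity_apply _ (hT.inter hS)]
  rw [← setLIntegral_map hS hg hpr, e, restrict_withDensity hS,
    lintegral_withDensity_eq_lintegral_mul _ (by fun_prop) hg]
  refine lintegral_congr fun x => ?_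
  simp [mul_comm]

/-! ### Perturbation of an optimal plan -/

/-- The perturbed plan: the fraction `U(x) V(y) / 2` of the mass going from `x` to `y` is made to
start from `y` itself. This removes the density `h1` and adds the density `h2` to the first
marginal, and it lowers the cost by the cost of that mass. The numbers `e1` and `e2` are the
amounts of moved mass which leave from, respectively arrive at, the origin. -/
lemma flow_plan {ρ ρn : ℝ → ℝ} (h : Nice ρ) (hn : Nice ρn) {γ : Measure (ℝ × ℝ)}
    (hγ : IsOpt ρ ρn γ) (s : ℝ) (U V : ℝ → ℝ)
    (hU : Measurable U) (hV : Measurable V) (hU0 : ∀ x, 0 ≤ U x) (hU1 : ∀ x, U x ≤ 1)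
    (hV0 : ∀ x, 0 ≤ V x) (hV1 : ∀ x, V x ≤ 1)
    (hUρ : ∀ x ∈ Ioo 0 (max (xA ρ) (xA ρn)), U x * ρ x ≤ max (ρ x - s) 0)
    (hVρ : ∀ x ∈ Ioo 0 (max (xA ρ) (xA ρn)), V x * ρn x ≤ max (s - ρ x) 0) :
    ∃ (h1 h2 : ℝ → ℝ) (γ' : Measure (ℝ × ℝ)) (e1 e2 : ℝ),
      Measurable h1 ∧ Measurable h2 ∧ (∀ x, 0 ≤ h1 x ∧ h1 x ≤ 1 / 2 * max (ρ x - s) 0) ∧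
      (∀ x, 0 ≤ h2 x ∧ h2 x ≤ 1 / 2 * max (s - ρ x) 0) ∧
      IsFiniteMeasure γ' ∧ γ' (Prod.fst ⁻¹' Iio 0) = 0 ∧ γ' (Prod.snd ⁻¹' Iio 0) = 0 ∧
      γ' (Prod.fst ⁻¹' Ici (max (xA ρ) (xA ρn))) = 0 ∧
      γ' (Prod.snd ⁻¹' Ici (max (xA ρ) (xA ρn))) = 0 ∧
      (∀ S, MeasurableSet S → S ⊆ Ioo 0 (max (xA ρ) (xA ρn)) →
        γ' (Prod.fst ⁻¹' S) + ∫⁻ x in S, ENNReal.ofReal (h1 x)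
          = (∫⁻ x in S, ENNReal.ofReal (ρ x)) + ∫⁻ x in S, ENNReal.ofReal (h2 x)) ∧
      (∀ S, MeasurableSet S → S ⊆ Ioo 0 (max (xA ρ) (xA ρn)) →
        γ' (Prod.snd ⁻¹' S) = ∫⁻ x in S, ENNReal.ofReal (ρn x)) ∧
      cost γ' + ∫⁻ p, ENNReal.ofReal (1 / 2 * U p.1 * V p.2) *
          ENNReal.ofReal ((p.1 - p.2) ^ 2) ∂γ ≤ cost γ ∧
      0 ≤ e1 ∧ 0 ≤ e2 ∧ e1 ≤ max (-Mdiff ρ ρn) 0 ∧ e2 ≤ max (Mdiff ρ ρn) 0 ∧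
      (∫ x in Ioo 0 (max (xA ρ) (xA ρn)), h1 x) + e1
        = (∫ x in Ioo 0 (max (xA ρ) (xA ρn)), h2 x) + e2 ∧
      (U 0 = 0 → e1 = 0) ∧ (V 0 = 0 → e2 = 0) := by
  have hf := hγ.fin
  obtain ⟨-, n1, n2, t1, t2, d1, d2, a1, a2, -⟩ := hγ
  set Λ := max (xA ρ) (xA ρn)
  set w : ℝ × ℝ → ℝ≥0∞ := fun p => ENNReal.ofReal (1 / 2 * U p.1 * V p.2) with hw
  have hwm : Measurable w := by fun_prop
  have hwU : ∀ p, w p ≤ ENNReal.ofReal (1 / 2 * U p.1) := fun p => ENNReal.ofReal_le_ofReal (by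
    have := mul_le_mul_of_nonneg_left (hV1 p.2) (hU0 p.1); nlinarith)
  have hwV : ∀ p, w p ≤ ENNReal.ofReal (1 / 2 * V p.2) := fun p => ENNReal.ofReal_le_ofReal (by
    have := mul_le_mul_of_nonneg_right (hU1 p.1) (hV0 p.2); nlinarith)
  have hw1 : ∀ p, w p ≤ 1 := fun p => (hwU p).trans (by
    rw [← ENNReal.ofReal_one]; exact ENNReal.ofReal_le_ofReal (by linarith [hU1 p.1]))
  set W := γ.withDensity w with hW
  set R := γ.withDensity (fun p => 1 - w p) with hR
  have hsum : R + W = γ := by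
    rw [hR, hW, ← withDensity_add_right _ hwm]
    have : (fun p => 1 - w p) + w = 1 := by
      ext p; simp [tsub_add_cancel_of_le (hw1 p)]
    rw [this, withDensity_one]
  have hWγ : W ≤ γ := by rw [← hsum]; exact Measure.le_add_left le_rfl
  have hRγ : R ≤ γ := by rw [← hsum]; exact Measure.le_add_right le_rfl
  have hWf : IsFiniteMeasure W := isFiniteMeasure_of_le γ hWγ
  have hRf : IsFiniteMeasure R := isFiniteMeasure_of_le γ hRγ
  let dg : ℝ × ℝ → ℝ × ℝ := fun p => (p.2, p.2)
  have hdg : Measurable dg := by fun_prop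
  set γ' := R + W.map dg with hγ'
  have mar1 : ∀ S, MeasurableSet S → γ' (Prod.fst ⁻¹' S) =
      R (Prod.fst ⁻¹' S) + W (Prod.snd ⁻¹' S) := by
    intro S hS
    rw [hγ', Measure.add_apply, Measure.map_apply hdg (measurable_fst hS)]; rfl
  have mar2 : ∀ S, MeasurableSet S → γ' (Prod.snd ⁻¹' S) = γ (Prod.snd ⁻¹' S) := by
    intro S hS
    rw [hγ', Measure.add_apply, Measure.map_apply hdg (measurable_snd hS)]
    conv_rhs => rw [← hsum]
    rfl
  have hWz : ∀ S, γ S = 0 → W S = 0 := fun S hS => le_antisymm ((hWγ S).trans hS.le) zero_le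
  have hRz : ∀ S, γ S = 0 → R S = 0 := fun S hS => le_antisymm ((hRγ S).trans hS.le) zero_le
  -- densities of the removed and of the added mass
  obtain ⟨h1, m1, p1, b1, e1⟩ := exists_density (L := Λ) (W.map Prod.fst)
    (fun x => 1 / 2 * max (ρ x - s) 0) (by have := h.meas; fun_prop) (fun x => by positivity) (by
      intro S hS hs
      rw [Measure.map_apply measurable_fst hS, hW, withDensity_apply _ (measurable_fst hS)]
      calc ∫⁻ p in Prod.fst ⁻¹' S, w p ∂γ
          ≤ ∫⁻ p in Prod.fst ⁻¹' S, (fun x => ENNReal.ofReal (1 / 2 * U x)) p.1 ∂γ :=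
            lintegral_mono fun p => hwU p
        _ = ∫⁻ x in S, ENNReal.ofReal (1 / 2 * U x) * ENNReal.ofReal (ρ x) :=
            lintegral_marginal h.meas measurable_fst d1 hS hs
              (fun x => ENNReal.ofReal (1 / 2 * U x)) (by fun_prop)
        _ ≤ _ := by
            refine setLIntegral_mono' hS fun x hx => ?_
            rw [← ENNReal.ofReal_mul (by have := hU0 x; positivity)]
            exact ENNReal.ofReal_le_ofReal (by have := hUρ x (hs hx); linarith))
  obtain ⟨h2, m2, p2, b2, e2⟩ := exists_density (L := Λ) (W.map Prod.snd)
    (fun x => 1 / 2 * max (s - ρ x) 0) (by have := h.meas; fun_prop) (fun x => by positivity) (by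
      intro S hS hs
      rw [Measure.map_apply measurable_snd hS, hW, withDensity_apply _ (measurable_snd hS)]
      calc ∫⁻ p in Prod.snd ⁻¹' S, w p ∂γ
          ≤ ∫⁻ p in Prod.snd ⁻¹' S, (fun x => ENNReal.ofReal (1 / 2 * V x)) p.2 ∂γ :=
            lintegral_mono fun p => hwV p
        _ = ∫⁻ x in S, ENNReal.ofReal (1 / 2 * V x) * ENNReal.ofReal (ρn x) :=
            lintegral_marginal hn.meas measurable_snd d2 hS hs
              (fun x => ENNReal.ofReal (1 / 2 * V x)) (by fun_prop)
        _ ≤ _ := by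
            refine setLIntegral_mono' hS fun x hx => ?_
            rw [← ENNReal.ofReal_mul (by have := hV0 x; positivity)]
            exact ENNReal.ofReal_le_ofReal (by have := hVρ x (hs hx); linarith))
  have e1' : ∀ S, MeasurableSet S → S ⊆ Ioo 0 Λ →
      W (Prod.fst ⁻¹' S) = ∫⁻ x in S, ENNReal.ofReal (h1 x) := by
    intro S hS hs; rw [← e1 S hS hs, Measure.map_apply measurable_fst hS]
  have e2' : ∀ S, MeasurableSet S → S ⊆ Ioo 0 Λ →
      W (Prod.snd ⁻¹' S) = ∫⁻ x in S, ENNReal.ofReal (h2 x) := by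
    intro S hS hs; rw [← e2 S hS hs, Measure.map_apply measurable_snd hS]
  -- total mass of `W`
  have tot : ∀ g : ℝ × ℝ → ℝ, Measurable g → γ (g ⁻¹' Iio 0) = 0 → γ (g ⁻¹' Ici Λ) = 0 →
      W univ = W (g ⁻¹' Ioo 0 Λ) + W (g ⁻¹' {0}) := by
    intro g hg hg0 hg1
    have hU : (univ : Set ℝ) = (Iio 0 ∪ Ici Λ) ∪ (Ioo 0 Λ ∪ {0}) := by
      ext x
      simp only [mem_univ, mem_union, mem_Iio, mem_Ici, mem_Ioo, mem_singleton_iff, true_iff]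
      rcases lt_trichotomy x 0 with hx | hx | hx
      · exact Or.inl (Or.inl hx)
      · exact Or.inr (Or.inr hx)
      · rcases lt_or_ge x Λ with hx' | hx'
        · exact Or.inr (Or.inl ⟨hx, hx'⟩)
        · exact Or.inl (Or.inr hx')
    have hn : W (g ⁻¹' (Iio 0 ∪ Ici Λ)) = 0 := by
      rw [preimage_union, measure_union_null_iff]; exact ⟨hWz _ hg0, hWz _ hg1⟩
    have hdrop : ∀ B, W (g ⁻¹' (Iio 0 ∪ Ici Λ) ∪ B) = W B := fun B =>
      le_antisymm ((measure_union_le _ _).trans (by rw [hn, zero_add]))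
        (measure_mono subset_union_right)
    rw [← preimage_univ (f := g), hU, preimage_union, hdrop, preimage_union,
      measure_union _ (hg (measurableSet_singleton 0))]
    refine Disjoint.preimage _ ?_
    rw [Set.disjoint_left]; rintro x hx hx'
    exact hx.1.ne' hx'
  have T1 := tot _ measurable_fst n1 t1
  have T2 := tot _ measurable_snd n2 t2
  have I1 : W.real (Prod.fst ⁻¹' Ioo 0 Λ) = ∫ x in Ioo 0 Λ, h1 x := by
    rw [measureReal_def, e1' _ measurableSet_Ioo le_rfl,
      integral_eq_lintegral_of_nonneg_ae (Eventually.of_forall p1) m1.aestronglyMeasurable]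
  have I2 : W.real (Prod.snd ⁻¹' Ioo 0 Λ) = ∫ x in Ioo 0 Λ, h2 x := by
    rw [measureReal_def, e2' _ measurableSet_Ioo le_rfl,
      integral_eq_lintegral_of_nonneg_ae (Eventually.of_forall p2) m2.aestronglyMeasurable]
  have key : ∀ (pr : ℝ × ℝ → ℝ) (G : ℝ → ℝ), Measurable pr → (∀ p, w p ≤
      ENNReal.ofReal (1 / 2 * G (pr p))) → G 0 = 0 → W.real (pr ⁻¹' {0}) = 0 := by
    intro pr G hpr hle hG
    rw [measureReal_def, hW, withDensity_apply _ (hpr (measurableSet_singleton 0))]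
    have : ∫⁻ p in pr ⁻¹' {0}, w p ∂γ = 0 := by
      refine le_antisymm ?_ zero_le
      calc ∫⁻ p in pr ⁻¹' {0}, w p ∂γ ≤ ∫⁻ p in pr ⁻¹' {0}, 0 ∂γ := by
            refine setLIntegral_mono' (hpr (measurableSet_singleton 0)) fun p hp => ?_
            have hp' : pr p = 0 := hp
            refine (hle p).trans ?_
            rw [hp', hG]; simp
        _ = 0 := by simp
    rw [this]; rfl
  refine ⟨h1, h2, γ', W.real (Prod.fst ⁻¹' {0}), W.real (Prod.snd ⁻¹' {0}), m1, m2,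
    fun x => ⟨p1 x, b1 x⟩, fun x => ⟨p2 x, b2 x⟩, inferInstance, ?_, ?_, ?_, ?_, ?_, ?_, ?_,
    measureReal_nonneg, measureReal_nonneg, ?_, ?_, ?_, ?_, ?_⟩
  · rw [mar1 _ measurableSet_Iio, hRz _ n1, hWz _ n2, add_zero]
  · rw [mar2 _ measurableSet_Iio, n2]
  · rw [mar1 _ measurableSet_Ici, hRz _ t1, hWz _ t2, add_zero]
  · rw [mar2 _ measurableSet_Ici, t2]
  · intro S hS hs
    rw [mar1 S hS, ← d1 S hS hs, ← e1' S hS hs, ← e2' S hS hs]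
    conv_rhs => rw [← hsum]
    rw [Measure.add_apply]; ring
  · intro S hS hs
    rw [mar2 S hS, d2 S hS hs]
  · have c1 : cost (W.map dg) = 0 := by
      unfold cost
      rw [lintegral_map measurable_costfn hdg]; simp [dg]
    have c2 : cost γ' = cost R := by
      have : cost γ' = cost R + cost (W.map dg) := by
        unfold cost; rw [hγ', lintegral_add_measure]
      rw [this, c1, add_zero]
    have c3 : ∫⁻ p, w p * ENNReal.ofReal ((p.1 - p.2) ^ 2) ∂γ = cost W := by
      unfold cost
      rw [hW, lintegral_withDensity_eq_lintegral_mul _ hwm measurable_costfn]; rfl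
    rw [c2]
    change cost R + ∫⁻ p, w p * ENNReal.ofReal ((p.1 - p.2) ^ 2) ∂γ ≤ _
    rw [c3]
    have : cost (R + W) = cost R + cost W := by unfold cost; rw [lintegral_add_measure]
    rw [← this, hsum]
  · have e : γ.real (Prod.fst ⁻¹' {0}) = max (-Mdiff ρ ρn) 0 := by
      rw [measureReal_def, a1, ENNReal.toReal_ofReal']; unfold Mdiff; congr 1; ring
    rw [← e, measureReal_def, measureReal_def]
    exact ENNReal.toReal_mono (measure_ne_top _ _) (hWγ _)
  · have e : γ.real (Prod.snd ⁻¹' {0}) = max (Mdiff ρ ρn) 0 := by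
      rw [measureReal_def, a2, ENNReal.toReal_ofReal']
    rw [← e, measureReal_def, measureReal_def]
    exact ENNReal.toReal_mono (measure_ne_top _ _) (hWγ _)
  · rw [← I1, ← I2, measureReal_def, measureReal_def, measureReal_def, measureReal_def,
      ← ENNReal.toReal_add (measure_ne_top _ _) (measure_ne_top _ _),
      ← ENNReal.toReal_add (measure_ne_top _ _) (measure_ne_top _ _), ← T1, ← T2]
  · exact key _ U measurable_fst hwU
  · exact key _ V measurable_snd hwV

/-! ### Competitors which keep mass in place -/

/-- The density `ρ - h1 + h2` on `(0, Λ)`, continued by one. -/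
def flowDens (Λ : ℝ) (ρ h1 h2 : ℝ → ℝ) (x : ℝ) : ℝ :=
  if x ∈ Ioo 0 Λ then ρ x - h1 x + h2 x else 1

/-- Moving `ρ` towards the level `s` keeps it admissible, and the entropy changes by at most
the marginal entropy at `s` times the change of mass. If the entropy of `ρ` is not integrable then
neither is that of the new density, since at most half of the excess over `s` was removed; both
entropy integrals are then zero by convention. -/
lemma flow_density {ρ : ℝ → ℝ} (h : Nice ρ) {Λ s : ℝ} (hΛ : xA ρ ≤ Λ) (hs : 0 < s)
    {h1 h2 : ℝ → ℝ} (m1 : Measurable h1) (m2 : Measurable h2)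
    (b1 : ∀ x, 0 ≤ h1 x ∧ h1 x ≤ 1 / 2 * max (ρ x - s) 0)
    (b2 : ∀ x, 0 ≤ h2 x ∧ h2 x ≤ 1 / 2 * max (s - ρ x) 0) (β : ℝ) :
    (Nice (flowDens Λ ρ h1 h2) ∧ xA (flowDens Λ ρ h1 h2) ≤ Λ) ∧
    Mfun (flowDens Λ ρ h1 h2) = Mfun ρ + (∫ x in Ioo 0 Λ, h2 x) - ∫ x in Ioo 0 Λ, h1 x ∧
    (∀ S, MeasurableSet S → S ⊆ Ioo 0 Λ →
      (∫⁻ x in S, ENNReal.ofReal (flowDens Λ ρ h1 h2 x)) + ∫⁻ x in S, ENNReal.ofReal (h1 x)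
        = (∫⁻ x in S, ENNReal.ofReal (ρ x)) + ∫⁻ x in S, ENNReal.ofReal (h2 x)) ∧
    (∫ x in Ioi (0:ℝ), fEnt β (flowDens Λ ρ h1 h2 x) = ∫ x in Ioi (0:ℝ), fEnt β (ρ x) ∨
      ∫ x in Ioi (0:ℝ), fEnt β (flowDens Λ ρ h1 h2 x) ≤ (∫ x in Ioi (0:ℝ), fEnt β (ρ x)) +
        (Real.log s + 1 - β) * ((∫ x in Ioo 0 Λ, h2 x) - ∫ x in Ioo 0 Λ, h1 x)) := by
  have hΛ0 : 0 ≤ Λ := (xA_nonneg ρ).trans hΛ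
  set σ := flowDens Λ ρ h1 h2 with hσ
  have hρm := h.meas
  have hin : ∀ x ∈ Ioo 0 Λ, σ x = ρ x - h1 x + h2 x := fun x hx => by
    simp only [hσ, flowDens, if_pos hx]
  have hout : ∀ x, x ∉ Ioo 0 Λ → σ x = 1 := fun x hx => by
    simp only [hσ, flowDens, if_neg hx]
  have hσm : Measurable σ := by
    rw [hσ]; unfold flowDens
    exact Measurable.ite measurableSet_Ioo (by fun_prop) measurable_const
  have betw : ∀ x ∈ Ioo 0 Λ, (s ≤ σ x ∧ σ x ≤ ρ x) ∨ (ρ x ≤ σ x ∧ σ x ≤ s) := by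
    intro x hx
    rw [hin x hx]
    obtain ⟨c1, c2⟩ := b1 x
    obtain ⟨c3, c4⟩ := b2 x
    rcases le_total s (ρ x) with hc | hc
    · rw [max_eq_left (by linarith)] at c2
      rw [max_eq_right (by linarith)] at c4
      left; constructor <;> linarith
    · rw [max_eq_right (by linarith)] at c2
      rw [max_eq_left (by linarith)] at c4
      right; constructor <;> linarith
  have half : ∀ x ∈ Ioo 0 Λ, ρ x ≤ s ∨ (s ≤ ρ x ∧ ρ x ≤ 2 * σ x) := by
    intro x hx
    rw [hin x hx]
    obtain ⟨c1, c2⟩ := b1 x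
    obtain ⟨c3, c4⟩ := b2 x
    rcases le_total s (ρ x) with hc | hc
    · rw [max_eq_left (by linarith)] at c2
      right; constructor <;> linarith
    · left; exact hc
  have hσ0 : ∀ x, 0 ≤ σ x := by
    intro x
    by_cases hx : x ∈ Ioo 0 Λ
    · rcases betw x hx with hb | hb
      · linarith
      · linarith [h.nonneg x]
    · rw [hout x hx]; exact zero_le_one
  have hρi := h.integrableOn Λ
  have hci : ∀ c : ℝ, IntegrableOn (fun _ : ℝ => c) (Ioo 0 Λ) := fun c => by simp
  have i1 : IntegrableOn h1 (Ioo 0 Λ) := by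
    refine Integrable.mono' hρi m1.aestronglyMeasurable (Eventually.of_forall fun x => ?_)
    rw [Real.norm_of_nonneg (b1 x).1]
    refine (b1 x).2.trans ?_
    have := h.nonneg x
    rcases le_total (ρ x - s) 0 with hc | hc
    · rw [max_eq_right hc]; linarith
    · rw [max_eq_left hc]; linarith
  have i2 : IntegrableOn h2 (Ioo 0 Λ) := by
    refine Integrable.mono' (hci s) m2.aestronglyMeasurable (Eventually.of_forall fun x => ?_)
    rw [Real.norm_of_nonneg (b2 x).1]
    refine (b2 x).2.trans ?_
    have := h.nonneg x
    rcases le_total (s - ρ x) 0 with hc | hc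
    · rw [max_eq_right hc]; linarith
    · rw [max_eq_left hc]; linarith
  have hσi : IntegrableOn σ (Ioo 0 Λ) :=
    ((hρi.sub i1).add i2).congr_fun (fun x hx => (hin x hx).symm) measurableSet_Ioo
  have hlog : LocallyIntegrableOn (fun x => σ x * Real.log (σ x)) (Ioi 0) volume := by
    have c1 : LocallyIntegrableOn (fun _ : ℝ => |s * Real.log s| + 1) (Ioi 0) volume :=
      (locallyIntegrable_const _).locallyIntegrableOn _
    refine (h.adm.2.2.1.norm.add c1).mono (by fun_prop) (Eventually.of_forall fun x => ?_)
    simp only [Pi.add_apply, Real.norm_eq_abs]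
    rw [abs_of_nonneg (a := |ρ x * Real.log (ρ x)| + _) (by positivity)]
    by_cases hx : x ∈ Ioo 0 Λ
    · have := abs_mul_log_between (h.nonneg x) hs.le (betw x hx)
      linarith
    · rw [hout x hx]; simp; positivity
  have hnice := nice_mk hΛ0 hσm hσ0 hσi hlog (fun x hx => hout x fun hx' => not_le.2 hx'.2 hx)
  have hdiff : ∫ x in Ioo 0 Λ, (σ x - ρ x)
      = (∫ x in Ioo 0 Λ, h2 x) - ∫ x in Ioo 0 Λ, h1 x := by
    rw [← integral_sub i2 i1]
    refine setIntegral_congr_fun measurableSet_Ioo fun x hx => ?_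
    simp only [hin x hx]; ring
  refine ⟨hnice, ?_, ?_, ?_⟩
  · rw [hnice.1.Mfun_eq hnice.2, h.Mfun_eq hΛ]
    rw [integral_sub hσi hρi] at hdiff; linarith
  · intro S hS hs'
    rw [← lintegral_add_right _ (by fun_prop), ← lintegral_add_right _ (by fun_prop)]
    refine setLIntegral_congr_fun hS fun x hx => ?_
    rw [← ENNReal.ofReal_add (hσ0 x) (b1 x).1, ← ENNReal.ofReal_add (h.nonneg x) (b2 x).1,
      hin x (hs' hx)]
    congr 1; ring
  · have hfm := measurable_fEnt β
    have lowf : ∀ r, 0 ≤ r → ∀ u, fEnt β r ≤ u → 0 ≤ u →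
        |fEnt β r| ≤ u + (Real.exp (β - 1) - β) := by
      intro r hr u hu hu0
      have h1 := fEnt_lower (β := β) hr
      have h2 := beta_le_exp β
      rw [abs_le]; constructor <;> linarith
    by_cases hf : IntegrableOn (fun x => fEnt β (ρ x)) (Ioi 0)
    · right
      have hf' := (integrableOn_Ioi_iff h.adm hΛ (fEnt β) (fEnt_one β)).1 hf
      have hup : IntegrableOn (fun x => fEnt β (ρ x) +
          (Real.log s + 1 - β) * (σ x - ρ x)) (Ioo 0 Λ) := hf'.add ((hσi.sub hρi).const_mul _)
      have hle : ∀ x ∈ Ioo 0 Λ, fEnt β (σ x) ≤ fEnt β (ρ x) +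
          (Real.log s + 1 - β) * (σ x - ρ x) := fun x hx =>
        fEnt_between (h.nonneg x) hs (betw x hx)
      have hfσ : IntegrableOn (fun x => fEnt β (σ x)) (Ioo 0 Λ) := by
        refine Integrable.mono' (hup.norm.add (hci (Real.exp (β - 1) - β)))
          (hfm.comp hσm).aestronglyMeasurable ?_
        filter_upwards [ae_restrict_mem measurableSet_Ioo] with x hx
        exact lowf _ (hσ0 x) _ ((hle x hx).trans (le_abs_self _)) (abs_nonneg _)
      rw [integral_Ioi_eq_Ioo h.adm hΛ (fEnt β) (fEnt_one β),
        integral_Ioi_eq_Ioo hnice.1.adm hnice.2 (fEnt β) (fEnt_one β)]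
      refine (setIntegral_mono_on hfσ hup measurableSet_Ioo hle).trans ?_
      have hdi : IntegrableOn (fun x => σ x - ρ x) (Ioo 0 Λ) := hσi.sub hρi
      rw [integral_add hf' (hdi.const_mul _), integral_const_mul, ← hdiff]
    · left
      have hf2 : ¬ IntegrableOn (fun x => fEnt β (σ x)) (Ioi 0) := by
        intro hc
        apply hf
        have hc' := (integrableOn_Ioi_iff hnice.1.adm hnice.2 (fEnt β) (fEnt_one β)).1 hc
        rw [integrableOn_Ioi_iff h.adm hΛ (fEnt β) (fEnt_one β)]
        -- `|f (2 σ)|` is controlled by `|f σ|` and `σ`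
        have hdom : IntegrableOn (fun x => |fEnt β 0| + |fEnt β s| + (2 * |fEnt β (σ x)| + |β| +
            2 * Real.log 2 * σ x) + (Real.exp (β - 1) - β)) (Ioo 0 Λ) :=
          ((hci _).add (((hc'.norm.const_mul 2).add (hci _)).add (hσi.const_mul _))).add (hci _)
        refine Integrable.mono' hdom (hfm.comp hρm).aestronglyMeasurable ?_
        filter_upwards [ae_restrict_mem measurableSet_Ioo] with x hx
        have hconv : ConvexOn ℝ (Ici 0) (fEnt β) := by
          have e : fEnt β = fun r => (r * Real.log r + (-β) * r) + β := by
            funext r; unfold fEnt; ring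
          rw [e]
          refine (Real.convexOn_mul_log.add ?_).add_const β
          exact (LinearMap.convexOn (LinearMap.mul ℝ ℝ (-β)) (convex_Ici 0))
        have l2 : 0 ≤ Real.log 2 := Real.log_nonneg (by norm_num)
        have hσx := hσ0 x
        have h2σ : fEnt β (2 * σ x) ≤ 2 * |fEnt β (σ x)| + |β| + 2 * Real.log 2 * σ x := by
          have e : fEnt β (2 * σ x) = 2 * fEnt β (σ x) - β + 2 * Real.log 2 * σ x := by
            unfold fEnt
            rcases hσx.eq_or_lt with h0 | h0
            · rw [← h0]; simp; ring
            · rw [Real.log_mul (by norm_num) h0.ne']; ring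
          rw [e]
          linarith [le_abs_self (fEnt β (σ x)), neg_abs_le β]
        have hnn : 0 ≤ 2 * |fEnt β (σ x)| + |β| + 2 * Real.log 2 * σ x := by positivity
        refine lowf _ (h.nonneg x) _ ?_ (by positivity)
        have a0 := abs_nonneg (fEnt β 0)
        have a1 := abs_nonneg (fEnt β s)
        rcases half x hx with hb | ⟨hb, hb'⟩
        · have := hconv.le_max_of_mem_Icc (x := 0) (y := s) (z := ρ x) (by simp) hs.le
            ⟨h.nonneg x, hb⟩
          refine this.trans (max_le ?_ ?_)
          · linarith [le_abs_self (fEnt β 0)]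
          · linarith [le_abs_self (fEnt β s)]
        · have := hconv.le_max_of_mem_Icc (x := s) (y := 2 * σ x) (z := ρ x) hs.le
            (by simp [hσx]) ⟨hb, hb'⟩
          refine this.trans (max_le ?_ ?_)
          · linarith [le_abs_self (fEnt β s)]
          · linarith
      rw [integral_undef hf, integral_undef hf2]

/-- Comparison of the minimizer with another density on the same domain. -/
lemma Jmin_compare {lam α β θ τ Kτ mτ Xn X : ℝ} {ρn ρ σ : ℝ → ℝ}
    (hmin : IsJKOMin lam α β θ τ Kτ mτ Xn ρn X ρ) (hσ : MemAdm σ) (hx : xA σ ≤ X) :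
    W2sq ρ ρn / (2 * τ) + (∫ x in Ioi (0:ℝ), fEnt β (ρ x)) + θ * |Mdiff ρ ρn|
        + ptau Kτ mτ (Mdiff ρ ρn)
      ≤ W2sq σ ρn / (2 * τ) + (∫ x in Ioi (0:ℝ), fEnt β (σ x)) + θ * |Mdiff σ ρn|
        + ptau Kτ mτ (Mdiff σ ρn) := by
  have := hmin.2 X σ ⟨hσ, hx⟩
  unfold Jfun dsq Efun at this
  rw [add_div, add_div] at this
  linarith

/-- A minimizer does not transport mass from places where it lies above a level `s` to places where
it lies below `s`: otherwise a part of that mass could be left where it is wanted. The origin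
may be counted among the former places if the marginal entropy at `s` is at most `θ`, and among
the latter ones if it is at least `-θ`. -/
lemma flow {lam α β θ τ Kτ mτ Xn X : ℝ} {ρn ρ : ℝ → ℝ} (hθ : 0 < θ) (hτ : 0 < τ) (hK : 0 < Kτ)
    (hm : 0 < mτ) (hmin : IsJKOMin lam α β θ τ Kτ mτ Xn ρn X ρ) (h : Nice ρ) (hn : Nice ρn)
    (hXn : xA ρn ≤ X) {γ : Measure (ℝ × ℝ)} (hγ : IsOpt ρ ρn γ) {s : ℝ} (hs : 0 < s)
    (a b : Prop) (hab : ¬ (a ∧ b)) (ha : a → Real.log s + 1 - β ≤ θ)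
    (hb : b → -θ ≤ Real.log s + 1 - β) :
    γ {p | ((p.1 ∈ Ioo 0 (max (xA ρ) (xA ρn)) ∧ s < ρ p.1) ∨ (p.1 = 0 ∧ a)) ∧
      ((p.2 ∈ Ioo 0 (max (xA ρ) (xA ρn)) ∧ ρ p.2 < s) ∨ (p.2 = 0 ∧ b))} = 0 := by
  classical
  have hρm := h.meas
  have hnm := hn.meas
  set Λ := max (xA ρ) (xA ρn) with hΛdef
  -- The weights are chosen such that the mass removed and added by the perturbation of the plan is
  -- bounded by `(ρ - s)₊` and `(s - ρ)₊`. Mass at the origin takes part only as `a` and `b` allow.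
  let U : ℝ → ℝ := fun x => if x = 0 then (if a then 1 else 0) else max (ρ x - s) 0 / ρ x
  let V : ℝ → ℝ := fun x => if x = 0 then (if b then 1 else 0) else
    max (s - ρ x) 0 / (max (s - ρ x) 0 + ρn x)
  have hU : Measurable U := Measurable.ite (measurableSet_singleton 0) measurable_const
    (by fun_prop)
  have hV : Measurable V := Measurable.ite (measurableSet_singleton 0) measurable_const
    (by fun_prop)
  have hU0 : ∀ x, 0 ≤ U x := by
    intro x; have := h.nonneg x; simp only [U]; split_ifs <;> positivity
  have hV0 : ∀ x, 0 ≤ V x := by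
    intro x; have := hn.nonneg x; simp only [V]; split_ifs <;> positivity
  have hU1 : ∀ x, U x ≤ 1 := by
    intro x; have := h.nonneg x; simp only [U]
    split_ifs
    · exact le_rfl
    · exact zero_le_one
    · exact div_le_one_of_le₀ (max_le (by linarith) this) this
  have hV1 : ∀ x, V x ≤ 1 := by
    intro x; have := hn.nonneg x; simp only [V]
    split_ifs
    · exact le_rfl
    · exact zero_le_one
    · exact div_le_one_of_le₀ (by linarith) (by positivity)
  have hUρ : ∀ x ∈ Ioo 0 Λ, U x * ρ x ≤ max (ρ x - s) 0 := by
    intro x hx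
    have hx0 : x ≠ 0 := hx.1.ne'
    simp only [U, if_neg hx0]
    rcases (h.nonneg x).eq_or_lt with h0 | h0
    · rw [← h0]; simp
    · rw [div_mul_cancel₀ _ h0.ne']
  have hVρ : ∀ x ∈ Ioo 0 Λ, V x * ρn x ≤ max (s - ρ x) 0 := by
    intro x hx
    have hx0 : x ≠ 0 := hx.1.ne'
    have := hn.nonneg x
    simp only [V, if_neg hx0]
    rcases (le_max_right (s - ρ x) 0).eq_or_lt with h0 | h0
    · rw [← h0]; simp
    · rw [div_mul_eq_mul_div, div_le_iff₀ (by linarith)]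
      nlinarith
  obtain ⟨h1, h2, γ', e1, e2, m1, m2, b1, b2, hγf, n1, n2, t1, t2, d1, d2, hcost, e10, e20, e1D,
    e2D, hmass, hUe, hVe⟩ := flow_plan h hn hγ s U V hU hV hU0 hU1 hV0 hV1 hUρ hVρ
  rw [← hΛdef] at t1 t2 d1 d2 hmass
  obtain ⟨⟨hσ, hσΛ⟩, hσM, hσd, hσf⟩ := flow_density h (le_max_left _ _ : xA ρ ≤ Λ) hs m1 m2 b1 b2 β
  set σ := flowDens Λ ρ h1 h2
  have hΛX : Λ ≤ X := max_le hmin.1.2 hXn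
  have hW : ENNReal.ofReal (W2sq σ ρn) ≤ cost γ' := by
    refine W2_relaxed hσ hn hσΛ (le_max_right _ _) γ' n1 n2 ?_ d2 (t1.trans t2.symm)
    intro S hS hs'
    have hfin : ∫⁻ x in S, ENNReal.ofReal (h1 x) ≠ ∞ := by
      have : ∫⁻ x in S, ENNReal.ofReal (h1 x) ≤ ∫⁻ x in S, ENNReal.ofReal (ρ x) := by
        refine lintegral_mono fun x => ENNReal.ofReal_le_ofReal ((b1 x).2.trans ?_)
        have := h.nonneg x
        rcases le_total (ρ x - s) 0 with hc | hc
        · rw [max_eq_right hc]; linarith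
        · rw [max_eq_left hc]; linarith
      exact ne_top_of_le_ne_top (by rw [h.lintegral_eq hs']; exact ENNReal.ofReal_ne_top) this
    exact (ENNReal.add_left_inj hfin).1 ((d1 S hS hs').trans (hσd S hS hs').symm)
  have hJ := Jmin_compare hmin hσ.adm (hσΛ.trans hΛX)
  -- the change of mass brings `M(·, ρn)` closer to zero
  have hD : Mdiff σ ρn = Mdiff ρ ρn + e1 - e2 := by unfold Mdiff; linarith
  have hmain : W2sq ρ ρn ≤ W2sq σ ρn := by
    have habs : |Mdiff σ ρn| ≤ |Mdiff ρ ρn| - e1 - e2 ∧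
        ptau Kτ mτ (Mdiff σ ρn) ≤ ptau Kτ mτ (Mdiff ρ ρn) := by
      rcases le_total (Mdiff ρ ρn) 0 with hc | hc
      · rw [max_eq_left (by linarith)] at e1D
        rw [max_eq_right hc] at e2D
        have e2z : e2 = 0 := le_antisymm e2D e20
        constructor
        · rw [abs_of_nonpos hc, hD, abs_of_nonpos (by linarith)]; linarith
        · exact ptau_anti hK (by linarith)
      · rw [max_eq_right (by linarith)] at e1D
        rw [max_eq_left hc] at e2D
        have e1z : e1 = 0 := le_antisymm e1D e10
        constructor
        · rw [abs_of_nonneg hc, hD, abs_of_nonneg (by linarith)]; linarith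
        · rw [ptau_of_nonneg hm (x := Mdiff σ ρn) (by linarith)]; exact ptau_nonneg hK
    have hθabs := mul_le_mul_of_nonneg_left habs.1 hθ.le
    have hent : (∫ x in Ioi (0:ℝ), fEnt β (σ x)) ≤
        (∫ x in Ioi (0:ℝ), fEnt β (ρ x)) + θ * e1 + θ * e2 := by
      rcases hσf with he | he
      · rw [he]; have := mul_nonneg hθ.le e10; have := mul_nonneg hθ.le e20; linarith
      · have e : (∫ x in Ioo 0 Λ, h2 x) - ∫ x in Ioo 0 Λ, h1 x = e1 - e2 := by linarith
        rw [e] at he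
        have k1 : (Real.log s + 1 - β) * e1 ≤ θ * e1 := by
          by_cases hA : a
          · exact mul_le_mul_of_nonneg_right (ha hA) e10
          · rw [hUe (by simp [U, hA])]; simp
        have k2 : -θ * e2 ≤ (Real.log s + 1 - β) * e2 := by
          by_cases hB : b
          · exact mul_le_mul_of_nonneg_right (hb hB) e20
          · rw [hVe (by simp [V, hB])]; simp
        linarith
    have : W2sq ρ ρn / (2 * τ) ≤ W2sq σ ρn / (2 * τ) := by linarith [habs.2]
    rwa [div_le_div_iff_of_pos_right (by positivity)] at this
  -- hence nothing was gained
  have hgain : ∫⁻ p, ENNReal.ofReal (1 / 2 * U p.1 * V p.2) *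
          ENNReal.ofReal ((p.1 - p.2) ^ 2) ∂γ = 0 := by
    have c1 : cost γ ≤ cost γ' := by
      rw [hγ.opt]; exact (ENNReal.ofReal_le_ofReal hmain).trans hW
    have cf : cost γ' ≠ ∞ := ne_top_of_le_ne_top (by rw [hγ.opt]; exact ENNReal.ofReal_ne_top)
      (le_self_add.trans hcost)
    have := hcost.trans c1
    by_contra hne
    exact absurd this (not_le.2 (ENNReal.lt_add_right cf hne))
  rw [lintegral_eq_zero_iff (by fun_prop)] at hgain
  have hz := ae_iff.1 hgain
  refine measure_mono_null ?_ hz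
  rintro p ⟨hp1, hp2⟩
  simp only [Pi.zero_apply, mul_eq_zero, ENNReal.ofReal_eq_zero, not_or, not_le, mem_ofPred_eq]
  have hne : p.1 ≠ p.2 := by
    intro he
    rcases hp1 with ⟨q1, q2⟩ | ⟨q1, q2⟩ <;> rcases hp2 with ⟨q3, q4⟩ | ⟨q3, q4⟩
    · rw [he] at q2; linarith
    · exact q1.1.ne' (he.trans q3)
    · exact q3.1.ne' (he.symm.trans q1)
    · exact hab ⟨q2, q4⟩
  have u0 : 0 < U p.1 := by
    rcases hp1 with ⟨q1, q2⟩ | ⟨q1, q2⟩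
    · simp only [U, if_neg q1.1.ne']
      have : 0 < ρ p.1 := hs.trans q2
      have : 0 < max (ρ p.1 - s) 0 := lt_max_of_lt_left (by linarith)
      positivity
    · simp [U, q1, q2]
  have v0 : 0 < V p.2 := by
    rcases hp2 with ⟨q1, q2⟩ | ⟨q1, q2⟩
    · simp only [V, if_neg q1.1.ne']
      have := hn.nonneg p.2
      have : 0 < max (s - ρ p.2) 0 := lt_max_of_lt_left (by linarith)
      positivity
    · simp [V, q1, q2]
  exact ⟨by positivity, by have := sub_ne_zero.2 hne; positivity⟩

/-! ### Minimum and maximum principle -/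

/-- All but countably many level sets are null. -/
lemma exists_null_level {ρ : ℝ → ℝ} (hρ : Measurable ρ) {u v : ℝ} (huv : u < v) :
    ∃ s ∈ Ioo u v, volume {x | ρ x = s} = 0 := by
  by_contra hc
  push Not at hc
  have h1 : (Ioo u v).Countable := (Measure.countable_meas_level_set_pos (μ := volume) hρ).mono
    fun s hs => pos_iff_ne_zero.2 (hc s hs)
  have h2 := h1.measure_zero volume
  rw [Real.volume_Ioo, ENNReal.ofReal_eq_zero] at h2
  linarith

/-- A set on which two densities with strictly separated values carry masses in the wrong order is
null. -/
lemma null_of_mass_le {S : Set ℝ} {L : ℝ} (hS : MeasurableSet S) (hs : S ⊆ Ioo 0 L) {p q : ℝ}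
    (hpq : p < q) (hq : 0 < q) {k l : ℝ → ℝ} (hk : ∀ᵐ x, x ∈ S → k x ≤ p)
    (hl : ∀ᵐ x, x ∈ S → q ≤ l x)
    (h : ∫⁻ x in S, ENNReal.ofReal (l x) ≤ ∫⁻ x in S, ENNReal.ofReal (k x)) : volume S = 0 := by
  have h1 : ENNReal.ofReal q * volume S ≤ ENNReal.ofReal p * volume S := by
    calc ENNReal.ofReal q * volume S = ∫⁻ _ in S, ENNReal.ofReal q := by simp
      _ ≤ ∫⁻ x in S, ENNReal.ofReal (l x) := by
        refine setLIntegral_mono_ae' hS ?_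
        filter_upwards [hl] with x hx hx'
        exact ENNReal.ofReal_le_ofReal (hx hx')
      _ ≤ ∫⁻ x in S, ENNReal.ofReal (k x) := h
      _ ≤ ∫⁻ _ in S, ENNReal.ofReal p := by
        refine setLIntegral_mono_ae' hS ?_
        filter_upwards [hk] with x hx hx'
        exact ENNReal.ofReal_le_ofReal (hx hx')
      _ = ENNReal.ofReal p * volume S := by simp
  by_contra hne
  have hfin : volume S ≠ ∞ := ne_top_of_le_ne_top (by simp) (measure_mono hs)
  rw [ENNReal.mul_le_mul_iff_left hne hfin, ENNReal.ofReal_le_ofReal_iff'] at h1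
  rcases h1 with h1 | h1 <;> linarith

/-- The bounds `c ≤ ρ ≤ 1` are inherited by minimizers: a superlevel set above one would have to
receive all the mass it sends out, and a sublevel set below `c` would have to send out all the mass
it receives. -/
lemma min_max_principle {lam α β θ τ Kτ mτ Xn X c : ℝ} {ρn ρ : ℝ → ℝ} (hθ : 0 < θ) (hτ : 0 < τ)
    (hK : 0 < Kτ) (hm : 0 < mτ) (hβ : β + θ < 1)
    (hmin : IsJKOMin lam α β θ τ Kτ mτ Xn ρn X ρ) (h : Nice ρ) (hn : Nice ρn)
    (hXn : xA ρn ≤ X) (hc : 0 < c) (hcβ : Real.log c + 1 - β ≤ θ) (hc1 : c ≤ 1)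
    (hlo : ∀ᵐ x, 0 < x → c ≤ ρn x) (hhi : ∀ᵐ x, 0 < x → ρn x ≤ 1) :
    (∀ᵐ x, 0 < x → c ≤ ρ x) ∧ (∀ᵐ x, 0 < x → ρ x ≤ 1) := by
  set Λ := max (xA ρ) (xA ρn) with hΛ
  have hρm := h.meas
  have htail := h.adm.ae_one_of_le (le_max_left (xA ρ) (xA ρn))
  rw [← hΛ] at htail
  rcases ((xA_nonneg ρ).trans (le_max_left _ (xA ρn))).eq_or_lt with h0 | h0
  · rw [← hΛ] at h0
    constructor
    all_goals
      filter_upwards [htail] with x hx hx0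
      rw [hx (by rw [← h0]; exact hx0.le)]
    exact hc1
  obtain ⟨γ, hγ⟩ := exists_isOpt h hn h0
  have hdec : ∀ t : ℝ, ¬ (t ∈ Iio (0:ℝ)) → ¬ (t ∈ Ici Λ) → t = 0 ∨ t ∈ Ioo 0 Λ := by
    intro t h1 h2
    simp only [mem_Iio, not_lt, mem_Ici, not_le] at h1 h2
    rcases h1.eq_or_lt with h1 | h1
    · exact Or.inl h1.symm
    · exact Or.inr ⟨h1, h2⟩
  constructor
  · have key : ∀ n : ℕ, ∀ᵐ x, 0 < x → c - 1 / ((n:ℝ) + 1) ≤ ρ x := by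
      intro n
      have hpos : (0:ℝ) < 1 / ((n:ℝ) + 1) := by positivity
      obtain ⟨s, ⟨hs1, hs2⟩, hs3⟩ := exists_null_level hρm
        (show max 0 (c - 1 / ((n:ℝ) + 1)) < c from max_lt hc (by linarith))
      have hs0 : 0 < s := (le_max_left _ _).trans_lt hs1
      have hfl := flow hθ hτ hK hm hmin h hn hXn hγ hs0 True False (by simp)
        (fun _ => by have := Real.log_le_log hs0 hs2.le; linarith) (by simp)
      set E : Set ℝ := {x | x ∈ Ioo 0 Λ ∧ ρ x < s} with hE
      have hEm : MeasurableSet E := measurableSet_Ioo.inter (measurableSet_lt hρm measurable_const)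
      have hlev : MeasurableSet ({x | ρ x = s} ∩ Ioo 0 Λ) :=
        (measurableSet_eq_fun hρm measurable_const).inter measurableSet_Ioo
      have hlev0 : γ (Prod.fst ⁻¹' ({x | ρ x = s} ∩ Ioo 0 Λ)) = 0 := by
        rw [hγ.dens1 _ hlev inter_subset_right]
        exact setLIntegral_measure_zero _ _ (measure_mono_null inter_subset_left hs3)
      have hle : γ (Prod.snd ⁻¹' E) ≤ γ (Prod.fst ⁻¹' E) := by
        refine measure_mono_ae ?_
        have k1 := measure_eq_zero_iff_ae_notMem.1 hγ.neg1
        have k2 := measure_eq_zero_iff_ae_notMem.1 hγ.top1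
        have k3 := measure_eq_zero_iff_ae_notMem.1 hlev0
        have k4 := measure_eq_zero_iff_ae_notMem.1 hfl
        filter_upwards [k1, k2, k3, k4] with p p1 p2 p3 p4 hp
        rcases hdec p.1 p1 p2 with q | q
        · exact absurd ⟨Or.inr ⟨q, trivial⟩, Or.inl hp⟩ p4
        · rcases lt_trichotomy (ρ p.1) s with r | r | r
          · exact ⟨q, r⟩
          · exact absurd ⟨r, q⟩ p3
          · exact absurd ⟨Or.inl ⟨q, r⟩, Or.inl hp⟩ p4
      have hEs : E ⊆ Ioo 0 Λ := fun x hx => hx.1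
      rw [hγ.dens1 E hEm hEs, hγ.dens2 E hEm hEs] at hle
      have hnull := null_of_mass_le hEm hEs hs2 hc (k := ρ) (l := ρn)
        (Eventually.of_forall fun x hx => hx.2.le)
        (by filter_upwards [hlo] with x hx hx'; exact hx hx'.1.1) hle
      filter_upwards [measure_eq_zero_iff_ae_notMem.1 hnull, htail] with x hx hx1 hx0
      by_cases hxΛ : Λ ≤ x
      · rw [hx1 hxΛ]; linarith
      · by_contra hlt
        exact hx ⟨⟨hx0, not_le.1 hxΛ⟩, (not_le.1 hlt).trans ((le_max_right _ _).trans_lt hs1)⟩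
    rw [← ae_all_iff] at key
    filter_upwards [key] with x hx hx0
    have hlim : Tendsto (fun n : ℕ => c - 1 / ((n:ℝ) + 1)) atTop (𝓝 (c - 0)) :=
      tendsto_const_nhds.sub tendsto_one_div_add_atTop_nhds_zero_nat
    rw [sub_zero] at hlim
    exact le_of_tendsto' hlim fun n => hx n hx0
  · have key : ∀ n : ℕ, ∀ᵐ x, 0 < x → ρ x ≤ 1 + 1 / ((n:ℝ) + 1) := by
      intro n
      have hpos : (0:ℝ) < 1 / ((n:ℝ) + 1) := by positivity
      obtain ⟨s, ⟨hs1, hs2⟩, hs3⟩ := exists_null_level hρm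
        (show (1:ℝ) < 1 + 1 / ((n:ℝ) + 1) by linarith)
      have hs0 : 0 < s := one_pos.trans hs1
      have hfl := flow hθ hτ hK hm hmin h hn hXn hγ hs0 False True (by simp) (by simp)
        (fun _ => by have := Real.log_pos hs1; linarith)
      set E : Set ℝ := {x | x ∈ Ioo 0 Λ ∧ s < ρ x} with hE
      have hEm : MeasurableSet E := measurableSet_Ioo.inter (measurableSet_lt measurable_const hρm)
      have hlev : MeasurableSet ({x | ρ x = s} ∩ Ioo 0 Λ) :=
        (measurableSet_eq_fun hρm measurable_const).inter measurableSet_Ioo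
      have hlev0 : γ (Prod.snd ⁻¹' ({x | ρ x = s} ∩ Ioo 0 Λ)) = 0 := by
        rw [hγ.dens2 _ hlev inter_subset_right]
        exact setLIntegral_measure_zero _ _ (measure_mono_null inter_subset_left hs3)
      have hle : γ (Prod.fst ⁻¹' E) ≤ γ (Prod.snd ⁻¹' E) := by
        refine measure_mono_ae ?_
        have k1 := measure_eq_zero_iff_ae_notMem.1 hγ.neg2
        have k2 := measure_eq_zero_iff_ae_notMem.1 hγ.top2
        have k3 := measure_eq_zero_iff_ae_notMem.1 hlev0
        have k4 := measure_eq_zero_iff_ae_notMem.1 hfl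
        filter_upwards [k1, k2, k3, k4] with p p1 p2 p3 p4 hp
        rcases hdec p.2 p1 p2 with q | q
        · exact absurd ⟨Or.inl hp, Or.inr ⟨q, trivial⟩⟩ p4
        · rcases lt_trichotomy (ρ p.2) s with r | r | r
          · exact absurd ⟨Or.inl hp, Or.inl ⟨q, r⟩⟩ p4
          · exact absurd ⟨r, q⟩ p3
          · exact ⟨q, r⟩
      have hEs : E ⊆ Ioo 0 Λ := fun x hx => hx.1
      rw [hγ.dens1 E hEm hEs, hγ.dens2 E hEm hEs] at hle
      have hnull := null_of_mass_le hEm hEs hs1 hs0 (k := ρn) (l := ρ)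
        (by filter_upwards [hhi] with x hx hx'; exact hx hx'.1.1)
        (Eventually.of_forall fun x hx => hx.2.le) hle
      filter_upwards [measure_eq_zero_iff_ae_notMem.1 hnull, htail] with x hx hx1 hx0
      by_cases hxΛ : Λ ≤ x
      · rw [hx1 hxΛ]; linarith
      · by_contra hlt
        exact hx ⟨⟨hx0, not_le.1 hxΛ⟩, hs2.trans (not_le.1 hlt)⟩
    rw [← ae_all_iff] at key
    filter_upwards [key] with x hx hx0
    have hlim : Tendsto (fun n : ℕ => 1 + 1 / ((n:ℝ) + 1)) atTop (𝓝 (1 + 0)) :=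
      tendsto_const_nhds.add tendsto_one_div_add_atTop_nhds_zero_nat
    rw [add_zero] at hlim
    exact ge_of_tendsto' hlim fun n => hx n hx0

/-! ### Competitors with non-integrable entropy -/

/-- Additional mass on `(0, 1)` may be taken from the origin. -/
lemma W2_add_le {ρn h σ : ℝ → ℝ} (hn : Nice ρn) (hσ : Nice σ) (hm : Measurable h)
    (h0 : ∀ x, 0 ≤ h x) (h1 : ∀ x, 1 ≤ x → h x = 0) (e : ∀ x, σ x = ρn x + h x) {L : ℝ}
    (hL0 : 0 < L) (hL : xA σ ≤ L) (hLn : xA ρn ≤ L) :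
    ENNReal.ofReal (W2sq σ ρn) ≤ ∫⁻ x in Ioo 0 L, ENNReal.ofReal (h x) := by
  have hnm := hn.meas
  set μ := (volume.restrict (Ioo 0 L)).withDensity fun x => ENNReal.ofReal (ρn x) with hμ
  set η := (volume.restrict (Ioo 0 L)).withDensity fun x => ENNReal.ofReal (h x) with hη
  have aμ : ∀ T, MeasurableSet T → μ T = ∫⁻ x in T ∩ Ioo 0 L, ENNReal.ofReal (ρn x) := by
    intro T hT; rw [hμ, withDensity_apply _ hT, Measure.restrict_restrict hT]
  have aη : ∀ T, MeasurableSet T → η T = ∫⁻ x in T ∩ Ioo 0 L, ENNReal.ofReal (h x) := by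
    intro T hT; rw [hη, withDensity_apply _ hT, Measure.restrict_restrict hT]
  have m1 : Measurable fun x : ℝ => (x, x) := by fun_prop
  have m2 : Measurable fun x : ℝ => (x, (0:ℝ)) := by fun_prop
  have eσ : ∀ S, ∫⁻ x in S, ENNReal.ofReal (σ x) =
      (∫⁻ x in S, ENNReal.ofReal (ρn x)) + ∫⁻ x in S, ENNReal.ofReal (h x) := by
    intro S
    rw [← lintegral_add_left (by fun_prop)]
    refine lintegral_congr fun x => ?_
    rw [e, ENNReal.ofReal_add (hn.nonneg x) (h0 x)]
  have fσ : ∫⁻ x in Ioo 0 L, ENNReal.ofReal (σ x) ≠ ∞ := by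
    rw [hσ.lintegral_eq le_rfl]; exact ENNReal.ofReal_ne_top
  rw [eσ, ENNReal.add_ne_top] at fσ
  have : IsFiniteMeasure μ := ⟨by
    rw [aμ _ MeasurableSet.univ, univ_inter]; exact fσ.1.lt_top⟩
  have : IsFiniteMeasure η := ⟨by
    rw [aη _ MeasurableSet.univ, univ_inter]; exact fσ.2.lt_top⟩
  set γ := μ.map (fun x : ℝ => (x, x)) + η.map (fun x : ℝ => (x, (0:ℝ))) with hγ
  have a1 : ∀ T, MeasurableSet T → γ (Prod.fst ⁻¹' T) = μ T + η T := by
    intro T hT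
    rw [hγ, Measure.add_apply, Measure.map_apply m1 (measurable_fst hT),
      Measure.map_apply m2 (measurable_fst hT)]
    rfl
  have a2 : ∀ T, MeasurableSet T → γ (Prod.snd ⁻¹' T) =
      μ T + η {_x : ℝ | (0:ℝ) ∈ T} := by
    intro T hT
    rw [hγ, Measure.add_apply, Measure.map_apply m1 (measurable_snd hT),
      Measure.map_apply m2 (measurable_snd hT)]
    rfl
  have z : ∀ T : Set ℝ, T ∩ Ioo 0 L = ∅ → MeasurableSet T → μ T = 0 ∧ η T = 0 := by
    intro T hT hTm
    rw [aμ _ hTm, aη _ hTm, hT]; simp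
  have zneg : Iio (0:ℝ) ∩ Ioo 0 L = ∅ := by
    ext x; simp only [mem_inter_iff, mem_Iio, mem_Ioo, mem_empty_iff_false, iff_false]
    intro hx; linarith [hx.1, hx.2.1]
  have ztop : Ici L ∩ Ioo 0 L = ∅ := by
    ext x; simp only [mem_inter_iff, mem_Ici, mem_Ioo, mem_empty_iff_false, iff_false]
    intro hx; linarith [hx.1, hx.2.2]
  refine (W2_relaxed hσ hn hL hLn γ ?_ ?_ ?_ ?_ ?_).trans ?_
  · rw [a1 _ measurableSet_Iio, (z _ zneg measurableSet_Iio).1, (z _ zneg measurableSet_Iio).2,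
      add_zero]
  · rw [a2 _ measurableSet_Iio, (z _ zneg measurableSet_Iio).1]; simp
  · intro S hS hs
    rw [a1 S hS, aμ S hS, aη S hS, inter_eq_left.2 hs, eσ]
  · intro S hS hs
    have : (0:ℝ) ∉ S := fun h' => lt_irrefl _ (hs h').1
    rw [a2 S hS, aμ S hS, inter_eq_left.2 hs]; simp [this]
  · rw [a1 _ measurableSet_Ici, a2 _ measurableSet_Ici, (z _ ztop measurableSet_Ici).1,
      (z _ ztop measurableSet_Ici).2]
    have : ¬ L ≤ 0 := not_le.2 hL0
    simp [this]
  · rw [cost, hγ, lintegral_add_measure, lintegral_map measurable_costfn m1,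
      lintegral_map measurable_costfn m2]
    simp only [sub_self, sub_zero, ne_eq, OfNat.ofNat_ne_zero, not_false_eq_true, zero_pow,
      ENNReal.ofReal_zero, lintegral_zero, zero_add]
    rw [hη, lintegral_withDensity_eq_lintegral_mul _ (by fun_prop) (by fun_prop)]
    simp only [Pi.mul_apply]
    refine setLIntegral_mono' measurableSet_Ioo fun x hx => ?_
    by_cases hx1 : 1 ≤ x
    · rw [h1 x hx1]; simp
    · rw [← ENNReal.ofReal_mul (h0 x)]
      refine ENNReal.ofReal_le_ofReal ?_
      have : x ^ 2 ≤ 1 := by nlinarith [hx.1, not_le.1 hx1]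
      nlinarith [h0 x]

/-- An integrable density `1 / (x log² x)` near the origin, whose entropy is not integrable. -/
def spike (r x : ℝ) : ℝ := if x ∈ Ioo 0 r then x⁻¹ / (Real.log x) ^ 2 else 0

lemma measurable_spike (r : ℝ) : Measurable (spike r) :=
  Measurable.ite measurableSet_Ioo (by fun_prop) measurable_const

lemma spike_nonneg (r x : ℝ) : 0 ≤ spike r x := by
  unfold spike; split_ifs with h
  · have := h.1; positivity
  · exact le_rfl

lemma integrable_spike {r : ℝ} (hr : r < 1) : Integrable (spike r) := by
  rcases le_or_gt r 0 with h0 | h0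
  · have : spike r = fun _ => 0 := by
      funext x; simp [spike, Ioo_eq_empty (not_lt.2 h0)]
    rw [this]; exact integrable_zero _ _ _
  have hlog : ∀ x ∈ Ioo 0 r, Real.log x ≠ 0 := fun x hx =>
    (Real.log_neg hx.1 (hx.2.trans hr)).ne
  have hcont : ContinuousOn (fun x => -(Real.log x)⁻¹) (Icc 0 r) := by
    intro x hx
    rcases hx.1.eq_or_lt with hx0 | hx0
    · rw [← hx0]
      -- at the origin `-(log 0)⁻¹ = 0` is the right limit
      have hl : Tendsto (fun x => -(Real.log x)⁻¹) (𝓝[>] 0) (𝓝 (-(0:ℝ))) :=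
        (tendsto_inv_atBot_zero.comp Real.tendsto_log_nhdsGT_zero).neg
      have : ContinuousWithinAt (fun x => -(Real.log x)⁻¹) (Ioi 0) 0 := by
        unfold ContinuousWithinAt; simpa using hl
      rw [← continuousWithinAt_insert_self] at this
      refine this.mono fun y hy => ?_
      rcases hy.1.eq_or_lt with h | h
      · exact Or.inl h.symm
      · exact Or.inr h
    · refine ((Real.continuousAt_log hx0.ne').inv₀ ?_).neg.continuousWithinAt
      exact (Real.log_neg hx0 (hx.2.trans_lt hr)).ne
  have hder : ∀ x ∈ Ioo 0 r, HasDerivAt (fun x => -(Real.log x)⁻¹) (x⁻¹ / (Real.log x) ^ 2) x := by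
    intro x hx
    have := ((Real.hasDerivAt_log hx.1.ne').fun_inv (hlog x hx)).fun_neg
    exact this.congr_deriv (by rw [neg_div, neg_neg])
  have hi := intervalIntegral.integrableOn_deriv_of_nonneg hcont hder
    (fun x hx => by have := hx.1; positivity)
  have hi2 := hi.mono_set Ioo_subset_Ioc_self
  have : spike r = (Ioo 0 r).indicator fun x => x⁻¹ / (Real.log x) ^ 2 := by
    funext x; simp [spike, indicator]
  rw [this, integrable_indicator_iff measurableSet_Ioo]
  exact hi2

/-- Near the origin the entropy of a density above a spike is at least a multiple of
`1 / (x |log x|)`, whose primitive `log |log x|` is unbounded. -/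
lemma not_integrable_fEnt_spike {σ : ℝ → ℝ} {r ε : ℝ} (β : ℝ) (hr0 : 0 < r) (hε : 0 < ε)
    (h : ∀ x, ε * spike r x ≤ σ x) : ¬ IntegrableOn (fun x => fEnt β (σ x)) (Ioi 0) := by
  intro hc
  have hc1 : IntegrableOn (fun x => fEnt β (σ x) - β) (Ioo 0 r) :=
    (hc.mono_set Ioo_subset_Ioi_self).sub (by simp)
  have hnear : Ioo 0 r ∈ 𝓝[>] (0:ℝ) := Ioo_mem_nhdsGT hr0
  have hu : Tendsto (fun x => -Real.log x) (𝓝[>] 0) atTop :=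
    tendsto_neg_atBot_atTop.comp Real.tendsto_log_nhdsGT_zero
  have hd : ∀ᶠ x in 𝓝[>] (0:ℝ), HasDerivAt (fun x => Real.log (-Real.log x))
      (-(x⁻¹) / (-Real.log x)) x := by
    filter_upwards [hu.eventually_gt_atTop 0, self_mem_nhdsWithin] with x hx hx0
    exact ((Real.hasDerivAt_log (ne_of_gt hx0)).fun_neg).log hx.ne'
  refine not_integrableOn_of_tendsto_norm_atTop_of_deriv_isBigO_filter (𝓝[>] (0:ℝ))
    (f := fun x => Real.log (-Real.log x)) hnear
    (hd.mono fun x hx => hx.differentiableAt)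
    (tendsto_norm_atTop_atTop.comp (Real.tendsto_log_atTop.comp hu)) ?_ hc1
  refine Asymptotics.IsBigO.of_bound (4 / ε) ?_
  have hlog : ∀ᶠ u : ℝ in atTop, Real.log u ≤ 1 / 8 * u := by
    have := Real.isLittleO_log_id_atTop.bound (show (0:ℝ) < 1 / 8 by norm_num)
    filter_upwards [this, eventually_ge_atTop 0] with u hu h0
    simp only [id, Real.norm_eq_abs, abs_of_nonneg h0] at hu
    exact (le_abs_self _).trans hu
  filter_upwards [hd, hnear, hu.eventually hlog, hu.eventually_gt_atTop 0,
    hu.eventually_ge_atTop (2 * (β - Real.log ε))] with x hx hxr hl hu0 hu1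
  rw [hx.deriv]
  set u := -Real.log x with hudef
  have hx0 := hxr.1
  have hlx : Real.log x = -u := by rw [hudef]; ring
  have hg : spike r x = x⁻¹ / u ^ 2 := by rw [spike, if_pos hxr, hlx]; ring
  have hgpos : 0 < ε * spike r x := by rw [hg]; positivity
  have hlg : Real.log (ε * spike r x) = Real.log ε + (u - 2 * Real.log u) := by
    rw [hg, Real.log_mul hε.ne' (by positivity), Real.log_div (by positivity) (by positivity),
      Real.log_inv, Real.log_pow, hlx]
    push_cast; ring
  have hq : u / 4 ≤ Real.log (ε * spike r x) - β := by rw [hlg]; linarith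
  have hσ := h x
  have hlσ := Real.log_le_log hgpos hσ
  have hlow : ε * spike r x * (u / 4) ≤ fEnt β (σ x) - β := by
    have e : fEnt β (σ x) - β = σ x * (Real.log (σ x) - β) := by unfold fEnt; ring
    rw [e]
    exact mul_le_mul hσ (by linarith) (by positivity) (hgpos.le.trans hσ)
  have hpos : 0 ≤ fEnt β (σ x) - β := le_trans (by positivity) hlow
  rw [Real.norm_of_nonneg hpos, Real.norm_eq_abs, abs_div, abs_neg, abs_of_pos (by positivity),
    abs_of_pos hu0]
  have e2 : x⁻¹ / u = 4 / ε * (ε * spike r x * (u / 4)) := by rw [hg]; field_simp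
  rw [e2]
  exact mul_le_mul_of_nonneg_left hlow (by positivity)

/-- Adding a small spike at the origin yields competitors whose entropy is zero by the convention
for non-integrable functions, at negligible cost. -/
lemma exists_spike {ρn : ℝ → ℝ} (hn : Nice ρn) (hn1 : ∀ x, ρn x ≤ 1) {L : ℝ} (hL0 : 0 < L)
    (hL : xA ρn ≤ L) (β : ℝ) {δ : ℝ} (hδ : 0 < δ) :
    ∃ σ, MemAdm σ ∧ xA σ ≤ L ∧ ∫ x in Ioi (0:ℝ), fEnt β (σ x) = 0 ∧ W2sq σ ρn ≤ δ ∧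
      0 ≤ Mdiff σ ρn ∧ Mdiff σ ρn ≤ δ := by
  set r := min L (Real.exp (-1)) with hr
  have hr0 : 0 < r := lt_min hL0 (Real.exp_pos _)
  have hre : r ≤ Real.exp (-1) := min_le_right _ _
  have hr1 : r < 1 := hre.trans_lt (by rw [Real.exp_lt_one_iff]; norm_num)
  have hgi := integrable_spike hr1
  have hgm := measurable_spike r
  have hg0 := spike_nonneg r
  set I := ∫ x in Ioo 0 L, spike r x with hI
  have hI0 : 0 ≤ I := integral_nonneg hg0
  set ε := δ / (I + 1) with hε
  have hε0 : 0 < ε := by positivity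
  have hεI : ε * I ≤ δ := by
    rw [hε, div_mul_eq_mul_div, div_le_iff₀ (by positivity)]; nlinarith
  have hg1 : ∀ x, r ≤ x → spike r x = 0 := fun x hx => by
    rw [spike, if_neg fun h => not_le.2 h.2 hx]
  have hgx : ∀ x, spike r x ≤ |x|⁻¹ := by
    intro x
    unfold spike
    split_ifs with h
    · rw [abs_of_pos h.1]
      refine div_le_self (inv_nonneg.2 h.1.le) ?_
      have : Real.log x ≤ -1 := by
        rw [Real.log_le_iff_le_exp h.1]; exact h.2.le.trans hre
      nlinarith
    · positivity
  set σ : ℝ → ℝ := fun x => ρn x + ε * spike r x with hσ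
  have hnm := hn.meas
  have hσm : Measurable σ := by fun_prop
  have hσ0 : ∀ x, 0 ≤ σ x := fun x => add_nonneg (hn.nonneg x) (mul_nonneg hε0.le (hg0 x))
  have htail : ∀ᵐ y : ℝ, y ∈ Ioi L → σ y = 1 := by
    filter_upwards [hn.adm.ae_one_of_le hL] with y hy hy'
    have hy'' : L < y := hy'
    simp only [hσ]
    rw [hy hy''.le, hg1 y ((min_le_left _ _).trans hy''.le)]; ring
  have hxσ : xA σ ≤ L := xA_le hL0.le htail
  have hlogl : LocallyIntegrableOn (fun x => σ x * Real.log (σ x)) (Ioi 0) volume := by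
    have hb : LocallyIntegrableOn (fun x : ℝ => (1 + ε * |x|⁻¹) ^ 2 + 1) (Ioi 0) volume := by
      refine ContinuousOn.locallyIntegrableOn ?_ measurableSet_Ioi
      have : ContinuousOn (fun x : ℝ => |x|⁻¹) (Ioi 0) :=
        (continuous_abs.continuousOn).inv₀ fun x hx => (abs_pos.2 (ne_of_gt hx)).ne'
      fun_prop
    refine hb.mono (by fun_prop) (Eventually.of_forall fun x => ?_)
    have hσx : σ x ≤ 1 + ε * |x|⁻¹ := add_le_add (hn1 x) (mul_le_mul_of_nonneg_left (hgx x) hε0.le)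
    have h1 := mul_log_ge (hσ0 x)
    have h2 : σ x * Real.log (σ x) ≤ σ x ^ 2 := by
      have := Real.log_le_self (hσ0 x); nlinarith [hσ0 x]
    have h3 : σ x ^ 2 ≤ (1 + ε * |x|⁻¹) ^ 2 := pow_le_pow_left₀ (hσ0 x) hσx 2
    rw [Real.norm_of_nonneg (r := _ + (1:ℝ)) (by positivity), Real.norm_eq_abs, abs_le]
    constructor <;> nlinarith [sq_nonneg (1 + ε * |x|⁻¹)]
  have hli : LocallyIntegrableOn σ (Ioi 0) volume :=
    hn.adm.2.1.add ((hgi.const_mul ε).locallyIntegrable.locallyIntegrableOn _)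
  have hadm : MemAdm σ :=
    ⟨Eventually.of_forall fun x _ => hσ0 x, hli, hlogl, L, hL0, htail⟩
  have hint : IntegrableOn (fun x => 1 - σ x) (Ioi 0) := by
    have := hn.int.sub (hgi.const_mul ε).integrableOn
    refine this.congr (Eventually.of_forall fun x => ?_)
    simp only [hσ, Pi.sub_apply]; ring
  have hnice : Nice σ := ⟨hσm, hσ0, hadm, hint⟩
  have hM : Mdiff σ ρn = ε * I := by
    rw [Mdiff, hnice.Mfun_eq hxσ, hn.Mfun_eq hL]
    simp only [hσ]
    rw [integral_add (hn.integrableOn L) (hgi.const_mul ε).integrableOn, integral_const_mul, hI]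
    ring
  refine ⟨σ, hadm, hxσ, ?_, ?_, ?_, ?_⟩
  · exact integral_undef (not_integrable_fEnt_spike β hr0 hε0
      fun x => le_add_of_nonneg_left (hn.nonneg x))
  · have hW := W2_add_le hn hnice (h := fun x => ε * spike r x) (by fun_prop)
      (fun x => mul_nonneg hε0.le (hg0 x)) (fun x hx => by rw [hg1 x (hr1.le.trans hx), mul_zero])
      (fun x => rfl) hL0 hxσ hL
    rw [← ofReal_integral_eq_lintegral_ofReal (hgi.const_mul ε).integrableOn
      (Eventually.of_forall fun x => mul_nonneg hε0.le (hg0 x)), integral_const_mul,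
      ENNReal.ofReal_le_ofReal_iff (by positivity)] at hW
    exact hW.trans hεI
  · rw [hM]; positivity
  · rw [hM]; exact hεI

/-! ### Change of representative -/

/-- Equality almost everywhere on the half-line. -/
def HalfEq (ρ ρ' : ℝ → ℝ) : Prop := ∀ᵐ x : ℝ, 0 < x → ρ x = ρ' x

lemma HalfEq.symm {ρ ρ' : ℝ → ℝ} (h : HalfEq ρ ρ') : HalfEq ρ' ρ := h.mono fun _ hx h0 => (hx h0).symm

lemma HalfEq.restrict {ρ ρ' : ℝ → ℝ} (h : HalfEq ρ ρ') : ρ =ᵐ[volume.restrict (Ioi 0)] ρ' :=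
  (ae_restrict_iff' measurableSet_Ioi).2 h

lemma HalfEq.integral {ρ ρ' : ℝ → ℝ} (h : HalfEq ρ ρ') (g : ℝ → ℝ) :
    ∫ x in Ioi (0:ℝ), g (ρ x) = ∫ x in Ioi (0:ℝ), g (ρ' x) :=
  integral_congr_ae (h.restrict.fun_comp g)

lemma HalfEq.Mfun {ρ ρ' : ℝ → ℝ} (h : HalfEq ρ ρ') : Mfun ρ = Mfun ρ' := by
  unfold _root_.Mfun; rw [h.integral fun r => 1 - r]

lemma HalfEq.xA {ρ ρ' : ℝ → ℝ} (h : HalfEq ρ ρ') : xA ρ = xA ρ' := by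
  unfold _root_.xA
  congr 1
  ext x
  refine and_congr_right fun hx => ?_
  refine eventually_congr (h.mono fun y hy => ?_)
  refine forall_congr' fun hy' => ?_
  rw [hy (hx.trans hy')]

lemma locallyIntegrableOn_congr {f g : ℝ → ℝ} (h : f =ᵐ[volume.restrict (Ioi 0)] g)
    (hf : LocallyIntegrableOn f (Ioi 0) volume) : LocallyIntegrableOn g (Ioi 0) volume := by
  intro x hx
  obtain ⟨t, ht, hi⟩ := hf x hx
  refine ⟨t ∩ Ioi 0, inter_mem ht self_mem_nhdsWithin, ?_⟩
  exact (hi.mono_set inter_subset_left).congr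
    (ae_mono (Measure.restrict_mono inter_subset_right le_rfl) h)

lemma HalfEq.memAdm {ρ ρ' : ℝ → ℝ} (h : HalfEq ρ ρ') (hρ : MemAdm ρ) : MemAdm ρ' := by
  obtain ⟨h1, h2, h3, x, hx, h4⟩ := hρ
  refine ⟨?_, locallyIntegrableOn_congr h.restrict h2,
    locallyIntegrableOn_congr (h.restrict.fun_comp fun r => r * Real.log r) h3, x, hx, ?_⟩
  · filter_upwards [h, h1] with y hy hy1 h0
    rw [← hy h0]; exact hy1 h0
  · filter_upwards [h, h4] with y hy hy1 h0
    rw [← hy (hx.trans h0)]; exact hy1 h0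

lemma HalfEq.nuMeas {ρ ρ' σ σ' : ℝ → ℝ} (h : HalfEq ρ ρ') (hσ : HalfEq σ σ') :
    nuMeas ρ σ = nuMeas ρ' σ' := by
  unfold _root_.nuMeas Mdiff
  rw [h.Mfun, hσ.Mfun, h.xA, hσ.xA, restrict_withDensity measurableSet_Ioo,
    restrict_withDensity measurableSet_Ioo]
  congr 1
  refine withDensity_congr_ae ?_
  exact ae_mono (Measure.restrict_mono Ioo_subset_Ioi_self le_rfl)
    (h.restrict.fun_comp ENNReal.ofReal)

lemma HalfEq.W2sq {ρ ρ' σ σ' : ℝ → ℝ} (h : HalfEq ρ ρ') (hσ : HalfEq σ σ') : W2sq ρ σ = W2sq ρ' σ' := by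
  unfold _root_.W2sq; rw [h.nuMeas hσ, hσ.nuMeas h]

lemma HalfEq.Jfun {ρ ρ' σ σ' : ℝ → ℝ} (h : HalfEq ρ ρ') (hσ : HalfEq σ σ')
    (lam α β θ τ Kτ mτ Xn X : ℝ) :
    Jfun lam α β θ τ Kτ mτ Xn ρ X σ = Jfun lam α β θ τ Kτ mτ Xn ρ' X σ' := by
  unfold _root_.Jfun dsq Efun Mdiff
  rw [hσ.W2sq h, h.Mfun, hσ.Mfun, hσ.integral]

lemma HalfEq.isJKOMin {ρ ρ' σ σ' : ℝ → ℝ} (h : HalfEq ρ ρ') (hσ : HalfEq σ σ')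
    {lam α β θ τ Kτ mτ Xn X : ℝ} (hm : IsJKOMin lam α β θ τ Kτ mτ Xn ρ X σ) :
    IsJKOMin lam α β θ τ Kτ mτ Xn ρ' X σ' := by
  refine ⟨⟨hσ.memAdm hm.1.1, hσ.xA ▸ hm.1.2⟩, fun Y ζ hζ => ?_⟩
  have hz : HalfEq ζ ζ := Eventually.of_forall fun _ _ => rfl
  rw [← h.Jfun hσ, ← h.Jfun hz]
  exact hm.2 Y ζ hζ

/-- Admissible densities have nonnegative Borel representatives. -/
lemma MemAdm.exists_rep {ρ : ℝ → ℝ} (h : MemAdm ρ) :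
    ∃ ρ', HalfEq ρ ρ' ∧ Measurable ρ' ∧ (∀ x, 0 ≤ ρ' x) ∧ ∀ x, x ≤ 0 → ρ' x = 1 := by
  have hm : AEStronglyMeasurable ρ (volume.restrict (Ioi 0)) := h.2.1.aestronglyMeasurable
  refine ⟨fun x => if 0 < x then max 0 (hm.mk ρ x) else 1, ?_, ?_, ?_, ?_⟩
  · filter_upwards [h.1, (ae_restrict_iff' measurableSet_Ioi).1 hm.ae_eq_mk] with x h1 h2 h0
    simp only [if_pos h0]
    rw [← h2 h0, max_eq_right (h1 h0)]
  · exact Measurable.ite measurableSet_Ioi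
      (measurable_const.max hm.stronglyMeasurable_mk.measurable) measurable_const
  · intro x; dsimp only; split_ifs
    · exact le_max_left _ _
    · exact zero_le_one
  · intro x hx; exact if_neg (not_lt.2 hx)

/-! ### Invariants of the scheme -/

/-- The properties of the iterates which propagate along the scheme. Strict negativity of the mass
excess makes the state with `ρ ≡ 1` unreachable, so that a competitor with vanishing
entropy integral is never optimal. -/
structure Good (c X : ℝ) (ρ : ℝ → ℝ) : Prop where
  nice : Nice ρ
  lo : ∀ x, c ≤ ρ x
  hi : ∀ x, ρ x ≤ 1
  neg : Mfun ρ < 0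
  dom : xA ρ ≤ X
  pos : 0 < X

/-- The free boundary does not recede. -/
lemma le_of_isJKOMin {lam α β θ τ Kτ mτ Xn X : ℝ} {ρn ρ : ℝ → ℝ} (hlam : 0 < lam) (hα : 0 < α)
    (hτ : 0 < τ) (hmin : IsJKOMin lam α β θ τ Kτ mτ Xn ρn X ρ) : Xn ≤ X := by
  by_contra hlt
  rw [not_le] at hlt
  have := hmin.2 Xn ρ ⟨hmin.1.1, hmin.1.2.trans hlt.le⟩
  unfold Jfun dsq Efun at this
  rw [add_div, add_div, sub_self] at this
  have h1 : 0 ≤ lam * (X - Xn) ^ 2 / (2 * τ) := by positivity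
  have h2 : lam * 0 ^ 2 / (2 * τ) = 0 := by simp
  rw [h2] at this
  nlinarith

/-- Comparison with spikes: the part of the functional which depends on the density is
nonpositive at a minimizer. -/
lemma energy_nonpos {lam α β θ τ Kτ mτ Xn X c : ℝ} {ρn ρ : ℝ → ℝ} (hlam : 0 < lam) (hα : 0 < α)
    (hτ : 0 < τ) (hθ : 0 < θ) (hm : 0 < mτ) (hn : Good c Xn ρn)
    (hmin : IsJKOMin lam α β θ τ Kτ mτ Xn ρn X ρ) :
    W2sq ρ ρn / (2 * τ) + (∫ x in Ioi (0:ℝ), fEnt β (ρ x)) + θ * |Mdiff ρ ρn|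
        + ptau Kτ mτ (Mdiff ρ ρn) ≤ 0 := by
  have hX := le_of_isJKOMin hlam hα hτ hmin
  have hC : 0 < 1 / (2 * τ) + θ := by positivity
  refine le_of_forall_pos_le_add fun η hη => ?_
  obtain ⟨σ, hσ, hxσ, hf, hW, hM0, hM⟩ := exists_spike hn.nice hn.hi (hn.pos.trans_le hX)
    (hn.dom.trans hX) β (δ := η / (1 / (2 * τ) + θ)) (by positivity)
  have hJ := Jmin_compare hmin hσ hxσ
  rw [hf, ptau_of_nonneg hm hM0, abs_of_nonneg hM0] at hJ
  refine hJ.trans ?_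
  have h1 : W2sq σ ρn / (2 * τ) ≤ η / (1 / (2 * τ) + θ) * (1 / (2 * τ)) := by
    rw [div_eq_mul_one_div]; gcongr
  have h2 : θ * Mdiff σ ρn ≤ η / (1 / (2 * τ) + θ) * θ := by
    rw [mul_comm]; gcongr
  have h3 : η / (1 / (2 * τ) + θ) * (1 / (2 * τ)) + η / (1 / (2 * τ) + θ) * θ = η := by
    rw [← mul_add, div_mul_cancel₀ _ hC.ne']
  linarith

/-- The entropy controls the density. -/
lemma le_fEnt {β r : ℝ} (hr : 0 ≤ r) :
    r ≤ Real.exp (β + 1) + |fEnt β r - β| := by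
  rcases le_total r (Real.exp (β + 1)) with h | h
  · have := abs_nonneg (fEnt β r - β); linarith
  · have h0 : 0 < r := (Real.exp_pos _).trans_le h
    have h1 := (Real.le_log_iff_exp_le h0).2 h
    have h2 : r ≤ fEnt β r - β := by unfold fEnt; nlinarith
    have := le_abs_self (fEnt β r - β)
    have := Real.exp_pos (β + 1)
    linarith

/-- A minimizer has finite mass: otherwise its mass excess and its entropy are both zero by
convention, and the change of the mass excess has a positive cost. -/
lemma nice_of_isJKOMin {lam α β θ τ Kτ mτ Xn X c : ℝ} {ρn ρ : ℝ → ℝ} (hlam : 0 < lam)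
    (hα : 0 < α) (hτ : 0 < τ) (hθ : 0 < θ) (hK : 0 < Kτ) (hm : 0 < mτ) (hn : Good c Xn ρn)
    (hmin : IsJKOMin lam α β θ τ Kτ mτ Xn ρn X ρ) (hρm : Measurable ρ) (hρ0 : ∀ x, 0 ≤ ρ x) :
    Nice ρ := by
  refine ⟨hρm, hρ0, hmin.1.1, ?_⟩
  by_contra hni
  have hfm := measurable_fEnt β
  have hM : Mfun ρ = 0 := by
    unfold Mfun
    rw [integral_undef (f := fun x => 1 - ρ x) hni, neg_zero]
  have hf : ∫ x in Ioi (0:ℝ), fEnt β (ρ x) = 0 := by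
    refine integral_undef fun hc => hni ?_
    rw [integrableOn_Ioi_iff hmin.1.1 le_rfl (fun r => 1 - r) (by simp)]
    have hc1 := (integrableOn_Ioi_iff hmin.1.1 le_rfl (fEnt β) (fEnt_one β)).1 hc
    have hk : ∀ k : ℝ, IntegrableOn (fun _ : ℝ => k) (Ioo 0 (xA ρ)) := fun k => by simp
    refine (hk 1).sub ?_
    refine Integrable.mono' ((hk (Real.exp (β + 1))).add (hc1.sub (hk β)).norm)
      hρm.aestronglyMeasurable (Eventually.of_forall fun x => ?_)
    rw [Real.norm_of_nonneg (hρ0 x)]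
    exact le_fEnt (hρ0 x)
  have h1 := energy_nonpos hlam hα hτ hθ hm hn hmin
  have h2 : 0 ≤ W2sq ρ ρn / (2 * τ) := div_nonneg (W2sq_nonneg _ _) (by positivity)
  have h3 := ptau_nonneg (m := mτ) (x := Mdiff ρ ρn) hK
  have h4 : 0 < |Mdiff ρ ρn| := by
    unfold Mdiff; rw [hM]; have := hn.neg; exact abs_pos.2 (by linarith)
  have := mul_pos hθ h4
  rw [hf] at h1
  linarith

/-- The invariants pass to a representative of the minimizer. If the mass excess vanished then
`ρ ≡ 1`, so that `energy_nonpos` would be violated by the cost of changing the mass excess. -/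
lemma Good.step {lam α β θ τ Kτ mτ Xn X c : ℝ} {ρn ρ : ℝ → ℝ} (hlam : 0 < lam)
    (hα : 0 < α) (hτ : 0 < τ) (hθ : 0 < θ) (hK : 0 < Kτ) (hm : 0 < mτ) (hβ : β + θ < 1)
    (hc : 0 < c) (hcβ : Real.log c + 1 - β ≤ θ) (hn : Good c Xn ρn)
    (hmin : IsJKOMin lam α β θ τ Kτ mτ Xn ρn X ρ) : ∃ ρ', HalfEq ρ ρ' ∧ Good c X ρ' := by
  have hX := le_of_isJKOMin hlam hα hτ hmin
  have refl : ∀ ζ, HalfEq ζ ζ := fun ζ => Eventually.of_forall fun _ _ => rfl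
  have hc1 : c ≤ 1 := (hn.lo 0).trans (hn.hi 0)
  obtain ⟨ρ1, e1, m1, p1, n1⟩ := hmin.1.1.exists_rep
  have hmin1 := (refl ρn).isJKOMin e1 hmin
  have hN1 := nice_of_isJKOMin hlam hα hτ hθ hK hm hn hmin1 m1 p1
  obtain ⟨hlo, hhi⟩ := min_max_principle hθ hτ hK hm hβ hmin1 hN1 hn.nice (hn.dom.trans hX) hc hcβ
    hc1 (Eventually.of_forall fun x _ => hn.lo x) (Eventually.of_forall fun x _ => hn.hi x)
  set ρ2 : ℝ → ℝ := fun x => max c (min 1 (ρ1 x)) with hρ2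
  have e12 : HalfEq ρ1 ρ2 := by
    filter_upwards [hlo, hhi] with x h1 h2 h0
    simp only [hρ2]
    rw [min_eq_right (h2 h0), max_eq_right (h1 h0)]
  have e2 : HalfEq ρ ρ2 := by
    filter_upwards [e1, e12] with x h1 h2 h0
    rw [h1 h0, h2 h0]
  have hmin2 := (refl ρn).isJKOMin e2 hmin
  have lo2 : ∀ x, c ≤ ρ2 x := fun x => le_max_left _ _
  have hi2 : ∀ x, ρ2 x ≤ 1 := fun x => max_le hc1 (min_le_left _ _)
  have hN2 := nice_of_isJKOMin hlam hα hτ hθ hK hm hn hmin2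
    (measurable_const.max (measurable_const.min m1)) (fun x => hc.le.trans (lo2 x))
  refine ⟨ρ2, e2, hN2, lo2, hi2, ?_, hmin2.1.2, hn.pos.trans_le hX⟩
  have hnn : 0 ≤ᵐ[volume.restrict (Ioi 0)] fun x => 1 - ρ2 x :=
    Eventually.of_forall fun x => sub_nonneg.2 (hi2 x)
  have hM0 : Mfun ρ2 ≤ 0 := neg_nonpos.2 (integral_nonneg_of_ae hnn)
  refine hM0.lt_of_ne fun hz => ?_
  have hi0 : ∫ x in Ioi (0:ℝ), (1 - ρ2 x) = 0 := neg_eq_zero.1 hz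
  rw [integral_eq_zero_iff_of_nonneg_ae hnn hN2.int] at hi0
  have hf : ∫ x in Ioi (0:ℝ), fEnt β (ρ2 x) = 0 := by
    refine integral_eq_zero_of_ae ?_
    filter_upwards [hi0] with x hx
    have : ρ2 x = 1 := by simp only [Pi.zero_apply] at hx; linarith
    rw [this, fEnt_one]; rfl
  have h1 := energy_nonpos hlam hα hτ hθ hm hn hmin2
  have h2 : 0 ≤ W2sq ρ2 ρn / (2 * τ) := div_nonneg (W2sq_nonneg _ _) (by positivity)
  have h3 := ptau_nonneg (m := mτ) (x := Mdiff ρ2 ρn) hK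
  have h4 : 0 < |Mdiff ρ2 ρn| := by
    unfold Mdiff; rw [hz]; have := hn.neg; exact abs_pos.2 (by linarith)
  have := mul_pos hθ h4
  rw [hf] at h1
  linarith

/-! ### Cutting an optimal plan -/

/-- Cutting an optimal plan at `Y`: since `ρ ≤ 1`, at least as much mass crosses `Y` to the right as
to the left. The excess is removed from the plan; it originates from `(0, Y)`, with density `k`,
and from the origin, with mass `e`. -/
lemma cut_plan {ρ ρn : ℝ → ℝ} (h : Nice ρ) (hn : Nice ρn) (hρ1 : ∀ x, ρ x ≤ 1) {Y : ℝ}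
    (hY0 : 0 < Y) (hYn : xA ρn ≤ Y) (hY : Y < xA ρ) {γ : Measure (ℝ × ℝ)} (hγ : IsOpt ρ ρn γ) :
    ∃ (k : ℝ → ℝ) (e : ℝ) (γ' : Measure (ℝ × ℝ)), Measurable k ∧ (∀ x, 0 ≤ k x) ∧
      (∀ x, k x ≤ ρ x) ∧ 0 ≤ e ∧ e ≤ max (Mdiff ρn ρ) 0 ∧ γ' ≤ γ ∧
      (∀ S, MeasurableSet S → S ⊆ Ioo 0 Y → γ' (Prod.fst ⁻¹' S) +
        ∫⁻ x in S, ENNReal.ofReal (k x) = ∫⁻ x in S, ENNReal.ofReal (ρ x)) ∧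
      (∀ S, MeasurableSet S → S ⊆ Ioo 0 Y →
        γ' (Prod.snd ⁻¹' S) = ∫⁻ x in S, ENNReal.ofReal (ρn x)) ∧
      γ' (Prod.fst ⁻¹' Ici Y) = γ' (Prod.snd ⁻¹' Ici Y) ∧
      (∫ x in Ioo 0 Y, k x) + e = (xA ρ - Y) - ∫ x in Ico Y (xA ρ), ρ x := by
  have := hγ.fin
  set Λ := xA ρ with hΛ
  have hmax : max (xA ρ) (xA ρn) = Λ := max_eq_left (hYn.trans hY.le)
  have top1 := hγ.top1
  have top2 := hγ.top2
  have dens1 := hγ.dens1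
  have dens2 := hγ.dens2
  rw [hmax] at top1 top2 dens1 dens2
  set Q : Set (ℝ × ℝ) := {p | p.1 < Y ∧ Y ≤ p.2} with hQ
  set R : Set (ℝ × ℝ) := {p | Y ≤ p.1 ∧ p.2 < Y} with hR
  set B : Set (ℝ × ℝ) := {p | Y ≤ p.1 ∧ Y ≤ p.2} with hB
  have mQ : MeasurableSet Q := (measurableSet_lt measurable_fst measurable_const).inter
    (measurableSet_le measurable_const measurable_snd)
  have mR : MeasurableSet R := (measurableSet_le measurable_const measurable_fst).inter
    (measurableSet_lt measurable_snd measurable_const)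
  have mB : MeasurableSet B := (measurableSet_le measurable_const measurable_fst).inter
    (measurableSet_le measurable_const measurable_snd)
  have hsub : Ico Y Λ ⊆ Ioo 0 Λ := fun x hx => ⟨hY0.trans_le hx.1, hx.2⟩
  have hIci : Ici Y = Ico Y Λ ∪ Ici Λ := (Ico_union_Ici_eq_Ici hY.le).symm
  -- masses to the right of `Y`
  have f1 : γ.real (Prod.fst ⁻¹' Ici Y) = ∫ x in Ico Y Λ, ρ x := by
    have e : γ (Prod.fst ⁻¹' Ici Y) = γ (Prod.fst ⁻¹' Ico Y Λ) := by
      rw [hIci, preimage_union]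
      exact le_antisymm ((measure_union_le _ _).trans (by rw [top1, add_zero])) (measure_mono subset_union_left)
    rw [measureReal_def, e, dens1 _ measurableSet_Ico hsub, h.lintegral_eq hsub,
      ENNReal.toReal_ofReal (integral_nonneg h.nonneg)]
  have f2 : γ.real (Prod.snd ⁻¹' Ici Y) = Λ - Y := by
    have e : γ (Prod.snd ⁻¹' Ici Y) = γ (Prod.snd ⁻¹' Ico Y Λ) := by
      rw [hIci, preimage_union]
      exact le_antisymm ((measure_union_le _ _).trans (by rw [top2, add_zero])) (measure_mono subset_union_left)
    have e1 : ∫⁻ x in Ico Y Λ, ENNReal.ofReal (ρn x) = ∫⁻ _ in Ico Y Λ, 1 := by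
      refine setLIntegral_congr_fun_ae measurableSet_Ico ?_
      filter_upwards [hn.adm.ae_one_of_le hYn] with x hx hx'
      rw [hx hx'.1, ENNReal.ofReal_one]
    rw [measureReal_def, e, dens2 _ measurableSet_Ico hsub, e1]
    simp [hY.le]
  have s1 : γ.real (Prod.fst ⁻¹' Ici Y) = γ.real B + γ.real R := by
    rw [← measureReal_union ?_ mR]
    · congr 1; ext p; simp only [hB, hR, mem_preimage, mem_Ici, mem_union, mem_ofPred_eq]
      constructor
      · intro hp; rcases le_or_gt Y p.2 with h' | h'
        · exact Or.inl ⟨hp, h'⟩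
        · exact Or.inr ⟨hp, h'⟩
      · rintro (hp | hp) <;> exact hp.1
    · exact Set.disjoint_left.2 fun p hp hp' => not_le.2 hp'.2 hp.2
  have s2 : γ.real (Prod.snd ⁻¹' Ici Y) = γ.real B + γ.real Q := by
    rw [← measureReal_union ?_ mQ]
    · congr 1; ext p; simp only [hB, hQ, mem_preimage, mem_Ici, mem_union, mem_ofPred_eq]
      constructor
      · intro hp; rcases le_or_gt Y p.1 with h' | h'
        · exact Or.inl ⟨h', hp⟩
        · exact Or.inr ⟨h', hp⟩
      · rintro (hp | hp) <;> exact hp.2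
    · exact Set.disjoint_left.2 fun p hp hp' => not_le.2 hp'.1 hp.1
  have hb : ∫ x in Ico Y Λ, ρ x ≤ Λ - Y := by
    have : ∫ x in Ico Y Λ, ρ x ≤ ∫ _ in Ico Y Λ, (1:ℝ) :=
      setIntegral_mono_on ((h.integrableOn Λ).mono_set hsub) (by simp) measurableSet_Ico
        fun x _ => hρ1 x
    simpa [hY.le] using this
  have hQR : γ.real R ≤ γ.real Q := by linarith
  have hR0 : 0 ≤ γ.real R := measureReal_nonneg
  set κ := (γ.real Q - γ.real R) / γ.real Q with hκ
  have hκ0 : 0 ≤ κ := div_nonneg (by linarith) (by linarith)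
  have hκ1 : κ ≤ 1 := div_le_one_of_le₀ (by linarith) (by linarith)
  have hκQ : κ * γ.real Q = γ.real Q - γ.real R := by
    rcases (hR0.trans hQR).eq_or_lt with h0 | h0
    · rw [← h0] at hQR ⊢; linarith
    · rw [hκ, div_mul_cancel₀ _ h0.ne']
  set γr : Measure (ℝ × ℝ) := ENNReal.ofReal κ • γ.restrict Q with hγr
  set γ' : Measure (ℝ × ℝ) := γ.restrict Qᶜ + ENNReal.ofReal (1 - κ) • γ.restrict Q with hγ'
  have hsum : γ' + γr = γ := by
    rw [hγ', hγr, add_assoc, ← add_smul, ← ENNReal.ofReal_add (by linarith) hκ0,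
      sub_add_cancel, ENNReal.ofReal_one, one_smul, add_comm]
    exact Measure.restrict_add_restrict_compl mQ
  have hle' : γ' ≤ γ := by
    have := Measure.le_add_right (le_refl γ') (ν' := γr)
    rwa [hsum] at this
  have hler : γr ≤ γ := by
    have := Measure.le_add_left (le_refl γr) (ν' := γ')
    rwa [hsum] at this
  have hT : ∀ T, γ' T + γr T = γ T := fun T => by rw [← Measure.add_apply, hsum]
  have hrT : ∀ T, MeasurableSet T → γr T = ENNReal.ofReal κ * γ (T ∩ Q) := fun T hTm => by
    rw [hγr, Measure.smul_apply, Measure.restrict_apply hTm, smul_eq_mul]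
  have : IsFiniteMeasure γr := isFiniteMeasure_of_le γ hler
  have : IsFiniteMeasure γ' := isFiniteMeasure_of_le γ hle'
  have hdisj : ∀ T, MeasurableSet T → T ∩ Q = ∅ → γ' T = γ T := fun T hTm h0 => by
    rw [← hT T, hrT T hTm, h0]; simp
  have hIoo : Ioo 0 Y ⊆ Ioo 0 Λ := Ioo_subset_Ioo_right hY.le
  have : IsFiniteMeasure (γr.map Prod.fst) := Measure.isFiniteMeasure_map _ _
  obtain ⟨k, km, k0, k1, kd⟩ := exists_density (L := Y) (γr.map Prod.fst) ρ h.meas h.nonneg (by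
    intro S hS hs
    rw [Measure.map_apply measurable_fst hS, ← dens1 S hS (hs.trans hIoo)]
    exact hler _)
  have kd' : ∀ S, MeasurableSet S → S ⊆ Ioo 0 Y →
      γr (Prod.fst ⁻¹' S) = ∫⁻ x in S, ENNReal.ofReal (k x) := fun S hS hs => by
    rw [← kd S hS hs, Measure.map_apply measurable_fst hS]
  refine ⟨k, γr.real (Prod.fst ⁻¹' {0}), γ', km, k0, k1, measureReal_nonneg, ?_, hle', ?_, ?_, ?_,
    ?_⟩
  · rw [← ENNReal.ofReal_le_ofReal_iff (le_max_right _ _), ofReal_measureReal]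
    refine (hler _).trans ?_
    rw [hγ.atom1]
    exact ENNReal.ofReal_le_ofReal (le_max_left _ _)
  · intro S hS hs
    rw [← kd' S hS hs, hT, dens1 S hS (hs.trans hIoo)]
  · intro S hS hs
    rw [hdisj _ (measurable_snd hS), dens2 S hS (hs.trans hIoo)]
    ext p; simp only [mem_inter_iff, mem_preimage, mem_empty_iff_false, iff_false]
    exact fun hp => not_le.2 (hs hp.1).2 hp.2.2
  · rw [← ENNReal.toReal_eq_toReal_iff' (measure_ne_top _ _) (measure_ne_top _ _)]
    rw [hdisj _ (measurable_fst measurableSet_Ici) (by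
      ext p; simp only [mem_inter_iff, mem_preimage, mem_empty_iff_false, iff_false]
      exact fun hp => not_le.2 hp.2.1 hp.1)]
    have e1 := congrArg ENNReal.toReal (hT (Prod.snd ⁻¹' Ici Y))
    rw [ENNReal.toReal_add (measure_ne_top _ _) (measure_ne_top _ _),
      hrT _ (measurable_snd measurableSet_Ici),
      inter_eq_right.2 (show Q ⊆ Prod.snd ⁻¹' Ici Y from fun p hp => hp.2), ENNReal.toReal_mul,
      ENNReal.toReal_ofReal hκ0] at e1
    simp only [measureReal_def] at *
    linarith
  · have e1 : ∫ x in Ioo 0 Y, k x = γr.real (Prod.fst ⁻¹' Ioo 0 Y) := by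
      rw [measureReal_def, kd' _ measurableSet_Ioo le_rfl,
        integral_eq_lintegral_of_nonneg_ae (Eventually.of_forall k0) km.aestronglyMeasurable]
    have e2 : γr.real univ = κ * γ.real Q := by
      rw [measureReal_def, hrT _ MeasurableSet.univ, univ_inter, ENNReal.toReal_mul,
        ENNReal.toReal_ofReal hκ0, measureReal_def]
    have e3 : γr.real univ = γr.real (Prod.fst ⁻¹' Ioo 0 Y) + γr.real (Prod.fst ⁻¹' {0}) := by
      rw [← measureReal_union (Set.disjoint_left.2 fun p hp hp' => (hp.1.ne' hp'))
        (measurable_fst (measurableSet_singleton 0)), measureReal_def, measureReal_def]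
      congr 1
      refine measure_congr ?_
      have n1 : γr (Prod.fst ⁻¹' Iio 0) = 0 := le_antisymm ((hler _).trans hγ.neg1.le) (zero_le)
      have n2 : γr Qᶜ = 0 := by rw [hrT _ mQ.compl]; simp
      filter_upwards [measure_eq_zero_iff_ae_notMem.1 n1, measure_eq_zero_iff_ae_notMem.1 n2]
        with p p1 p2
      simp only [mem_preimage, mem_Iio, not_lt, mem_compl_iff, not_not] at p1 p2
      refine propext ⟨fun _ => ?_, fun _ => trivial⟩
      rcases p1.eq_or_lt with h0 | h0
      · exact Or.inr h0.symm
      · exact Or.inl ⟨h0, p2.1⟩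
    linarith

/-! ### Advance of the free boundary -/

lemma locallyIntegrableOn_of_abs_le {g : ℝ → ℝ} (hg : Measurable g) {C : ℝ} (h : ∀ x, |g x| ≤ C)
    (s : Set ℝ) : LocallyIntegrableOn g s volume :=
  ((locallyIntegrable_const C).mono hg.aestronglyMeasurable
    (Eventually.of_forall fun x => (h x).trans (le_abs_self C))).locallyIntegrableOn s

lemma integrableOn_Ioo_of_abs_le {g : ℝ → ℝ} (hg : Measurable g) {C : ℝ} (h : ∀ x, |g x| ≤ C)
    (s t : ℝ) : IntegrableOn g (Ioo s t) :=
  Integrable.mono' (integrable_const C) hg.aestronglyMeasurable (Eventually.of_forall h)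

lemma abs_mul_log_le_one {r : ℝ} (h0 : 0 ≤ r) (h1 : r ≤ 1) : |r * Real.log r| ≤ 1 := by
  have := mul_log_ge h0
  have := mul_nonpos_of_nonneg_of_nonpos h0 (Real.log_nonpos h0 h1)
  rw [abs_le]; constructor <;> linarith

lemma integrableOn_fEnt {β : ℝ} {r : ℝ → ℝ} (hm : Measurable r) (h0 : ∀ x, 0 ≤ r x)
    (h1 : ∀ x, r x ≤ 1) (s t : ℝ) : IntegrableOn (fun x => fEnt β (r x)) (Ioo s t) := by
  refine integrableOn_Ioo_of_abs_le ((measurable_fEnt β).comp hm) (C := 1 + |β| + |β|)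
    (fun x => ?_) s t
  have e : fEnt β (r x) = r x * Real.log (r x) - β * r x + β := by unfold fEnt; ring
  have h2 := abs_mul_log_le_one (h0 x) (h1 x)
  have h3 : |β * r x| ≤ |β| := by
    rw [abs_mul, abs_of_nonneg (h0 x)]
    exact mul_le_of_le_one_right (abs_nonneg _) (h1 x)
  rw [Function.comp_apply, e]
  refine (abs_add_le _ _).trans (add_le_add_left ((abs_sub _ _).trans ?_) _)
  exact add_le_add h2 h3

/-- Removing the amount `k` from a density `r ≥ exp a` changes the entropy by at most
`(β - a) k`. -/
lemma fEnt_sub_le {β a r k : ℝ} (hr : 0 < r) (ha : a ≤ Real.log r) (hk : 0 ≤ k) (hkr : k ≤ r) :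
    fEnt β (r - k) ≤ fEnt β r + k * (β - a) := by
  have h1 : (r - k) * Real.log (r - k) ≤ (r - k) * Real.log r := by
    rcases hkr.eq_or_lt with rfl | hlt
    · simp
    · exact mul_le_mul_of_nonneg_left (Real.log_le_log (by linarith) (by linarith)) (by linarith)
  unfold fEnt
  nlinarith

/-- Bound on the advance of the free boundary in one step. If `X` exceeded `Y = Xₙ + τ(α - a)/λ`,
then cutting the domain back to `Y`, together with the excess mass of the optimal plan, would
decrease the functional. -/
lemma Good.advance {lam α β θ τ Kτ mτ Xn X c : ℝ} {ρn ρ : ℝ → ℝ} (hlam : 0 < lam)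
    (hα : 0 < α) (hτ : 0 < τ) (hθ : 0 < θ) (hK : 0 < Kτ)
    (hc : 0 < c) (hcβ : Real.log c + 1 - β ≤ θ) (hn : Good c Xn ρn) (h : Good c X ρ)
    (hmin : IsJKOMin lam α β θ τ Kτ mτ Xn ρn X ρ) :
    X ≤ Xn + τ * (α - Real.log c) / lam := by
  set a := Real.log c with ha
  have hc1 : c ≤ 1 := (h.lo 0).trans (h.hi 0)
  have ha0 : a ≤ 0 := Real.log_nonpos hc.le hc1
  have hal : ∀ x, a ≤ Real.log (ρ x) := fun x => Real.log_le_log hc (h.lo x)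
  have hp : ∀ x, 0 < ρ x := fun x => hc.trans_le (h.lo x)
  set Y := Xn + τ * (α - a) / lam with hY
  by_contra hlt
  rw [not_le] at hlt
  have hYn : Xn ≤ Y := by
    have : 0 ≤ τ * (α - a) / lam := by
      have : 0 ≤ α - a := by linarith
      positivity
    linarith
  have hY0 : 0 < Y := hn.pos.trans_le hYn
  -- completing the square in the part of the functional which depends on the domain only
  have hφ : lam * (Y - Xn) ^ 2 / (2 * τ) - α * Y - (lam * (X - Xn) ^ 2 / (2 * τ) - α * X)
      = a * (X - Y) - lam * (X - Y) ^ 2 / (2 * τ) := by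
    have hYX : Y - Xn = τ * (α - a) / lam := by rw [hY]; ring
    have e : lam * (Y - Xn) = τ * (α - a) := by rw [hYX]; field_simp
    field_simp
    linear_combination (-2 * (X - Y)) * e
  have hsq : 0 < lam * (X - Y) ^ 2 / (2 * τ) := by
    have : 0 < X - Y := by linarith
    positivity
  rcases le_or_gt (xA ρ) Y with hxY | hxY
  · have hJ := hmin.2 Y ρ ⟨h.nice.adm, hxY⟩
    unfold Jfun dsq Efun at hJ
    rw [add_div, add_div] at hJ
    have : a * (X - Y) ≤ 0 := mul_nonpos_of_nonpos_of_nonneg ha0 (by linarith)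
    linarith
  set Λ := xA ρ with hΛ
  obtain ⟨γ, hγ⟩ := exists_isOpt h.nice hn.nice (hY0.trans hxY |>.trans_le (le_max_left _ _))
  obtain ⟨k, e, γ', km, k0, kρ, e0, eM, hle, d1, d2, hb, hk⟩ :=
    cut_plan h.nice hn.nice h.hi hY0 (hn.dom.trans hYn) hxY hγ
  have hfinγ := hγ.fin
  have hfin : IsFiniteMeasure γ' := isFiniteMeasure_of_le γ hle
  set σ : ℝ → ℝ := fun x => if x ∈ Ioo 0 Y then ρ x - k x else 1 with hσ
  have σm : Measurable σ := Measurable.ite measurableSet_Ioo (h.nice.meas.sub km) measurable_const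
  have σ0 : ∀ x, 0 ≤ σ x := fun x => by
    simp only [hσ]; split_ifs
    · exact sub_nonneg.2 (kρ x)
    · exact zero_le_one
  have σ1 : ∀ x, σ x ≤ 1 := fun x => by
    simp only [hσ]; split_ifs
    · linarith [h.hi x, k0 x]
    · exact le_rfl
  have σY : ∀ x, x ∈ Ioo 0 Y → σ x = ρ x - k x := fun x hx => if_pos hx
  have ρi := fun s t => integrableOn_Ioo_of_abs_le h.nice.meas (C := 1)
    (fun x => by rw [abs_of_pos (hp x)]; exact h.hi x) s t
  have ki := fun s t => integrableOn_Ioo_of_abs_le km (C := 1)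
    (fun x => by rw [abs_of_nonneg (k0 x)]; exact (kρ x).trans (h.hi x)) s t
  have σi := fun s t => integrableOn_Ioo_of_abs_le σm (C := 1)
    (fun x => by rw [abs_of_nonneg (σ0 x)]; exact σ1 x) s t
  obtain ⟨σN, σx⟩ : Nice σ ∧ xA σ ≤ Y := nice_mk hY0.le σm σ0 (σi 0 Y)
    (locallyIntegrableOn_of_abs_le (σm.mul σm.log) (C := 1)
      (fun x => abs_mul_log_le_one (σ0 x) (σ1 x)) _)
    (fun x hx => if_neg fun hx' => absurd hx'.2 (not_lt.2 hx))
  -- the truncated plan connects `ρₙ` to the competitor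
  have hW : W2sq σ ρn ≤ W2sq ρ ρn := by
    have hr : ENNReal.ofReal (W2sq σ ρn) ≤ cost γ' := by
      refine W2_relaxed σN hn.nice σx (hn.dom.trans hYn) γ' ?_ ?_ ?_ d2 hb
      · exact le_antisymm ((hle _).trans hγ.neg1.le) bot_le
      · exact le_antisymm ((hle _).trans hγ.neg2.le) bot_le
      · intro S hS hSY
        have e1 : ∫⁻ x in S, ENNReal.ofReal (ρ x)
            = ∫⁻ x in S, ENNReal.ofReal (σ x) + ENNReal.ofReal (k x) := by
          refine setLIntegral_congr_fun hS fun x hx => ?_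
          rw [← ENNReal.ofReal_add (σ0 x) (k0 x), σY x (hSY hx), sub_add_cancel]
        have e2 := d1 S hS hSY
        rw [e1, lintegral_add_left σm.ennreal_ofReal] at e2
        refine (ENNReal.add_left_inj ?_).1 e2
        have : ∫⁻ x in S, ENNReal.ofReal (k x) ≤ ∫⁻ x in S, ENNReal.ofReal (ρ x) :=
          lintegral_mono fun x => ENNReal.ofReal_le_ofReal (kρ x)
        rw [h.nice.lintegral_eq hSY] at this
        exact (this.trans_lt ENNReal.ofReal_lt_top).ne
    have hr2 : cost γ' ≤ cost γ := by
      unfold cost; exact lintegral_mono' hle le_rfl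
    rw [hγ.opt] at hr2
    exact (ENNReal.ofReal_le_ofReal_iff (W2sq_nonneg _ _)).1 (hr.trans hr2)
  -- split the integrals over `(0, Λ)` at `Y`
  have hsplit : Ioo 0 Λ = Ioo 0 Y ∪ Ico Y Λ := (Ioo_union_Ico_eq_Ioo hY0 hxY.le).symm
  have hdisj : Disjoint (Ioo 0 Y) (Ico Y Λ) :=
    Set.disjoint_left.2 fun x hx hx' => absurd hx.2 (not_lt.2 hx'.1)
  have hsubΛ : Ico Y Λ ⊆ Ioo 0 Λ := hsplit ▸ subset_union_right
  have split : ∀ g : ℝ → ℝ, IntegrableOn g (Ioo 0 Λ) →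
      ∫ x in Ioo 0 Λ, g x = (∫ x in Ioo 0 Y, g x) + ∫ x in Ico Y Λ, g x := by
    intro g hg
    rw [hsplit] at hg ⊢
    exact setIntegral_union hdisj measurableSet_Ico hg.left_of_union hg.right_of_union
  have hdY : volume.real (Ico Y Λ) = Λ - Y := by simp [hxY.le]
  have hσk : ∫ x in Ioo 0 Y, σ x = (∫ x in Ioo 0 Y, ρ x) - ∫ x in Ioo 0 Y, k x := by
    rw [← integral_sub (ρi 0 Y) (ki 0 Y)]
    exact setIntegral_congr_fun measurableSet_Ioo σY
  have hM : Mfun σ - Mfun ρ = e := by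
    rw [σN.Mfun_eq σx, h.nice.Mfun_eq le_rfl, ← hΛ, split ρ (ρi 0 Λ), hσk]
    linarith
  -- entropy
  have hfσ : ∫ x in Ioi (0:ℝ), fEnt β (σ x) ≤
      (∫ x in Ioo 0 Y, fEnt β (ρ x)) + (∫ x in Ioo 0 Y, k x) * (β - a) := by
    rw [integral_Ioi_eq_Ioo σN.adm σx (fEnt β) (fEnt_one β), ← integral_mul_const,
      ← integral_add (integrableOn_fEnt h.nice.meas h.nice.nonneg h.hi 0 Y)
        ((ki 0 Y).mul_const _)]
    refine setIntegral_mono_on (integrableOn_fEnt σm σ0 σ1 0 Y)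
      ((integrableOn_fEnt h.nice.meas h.nice.nonneg h.hi 0 Y).add ((ki 0 Y).mul_const _))
      measurableSet_Ioo fun x hx => ?_
    rw [σY x hx]
    exact fEnt_sub_le (hp x) (hal x) (k0 x) (kρ x)
  have hfρ : (∫ x in Ioo 0 Y, fEnt β (ρ x)) + ((∫ x in Ico Y Λ, ρ x) * (a - β) + (Λ - Y) * β)
      ≤ ∫ x in Ioi (0:ℝ), fEnt β (ρ x) := by
    have hfi := integrableOn_fEnt (β := β) h.nice.meas h.nice.nonneg h.hi 0 Λ
    have hci : IntegrableOn (fun _ : ℝ => β) (Ico Y Λ) := by simp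
    have hρi' := ((ρi 0 Λ).mono_set hsubΛ).mul_const (a - β)
    rw [integral_Ioi_eq_Ioo h.nice.adm le_rfl (fEnt β) (fEnt_one β), ← hΛ, split _ hfi]
    gcongr
    have hc2 : ∫ _ in Ico Y Λ, β = (Λ - Y) * β := by rw [setIntegral_const, hdY, smul_eq_mul]
    rw [← hc2, ← integral_mul_const, ← integral_add hρi' hci]
    refine setIntegral_mono_on (hρi'.add hci) (hfi.mono_set hsubΛ) measurableSet_Ico fun x _ => ?_
    unfold fEnt
    nlinarith [hal x, hp x]
  -- mass terms
  have hMd : Mdiff σ ρn = Mdiff ρ ρn + e := by unfold Mdiff; linarith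
  have hMn : Mdiff ρn ρ = - Mdiff ρ ρn := by unfold Mdiff; ring
  have habs : |Mdiff σ ρn| ≤ |Mdiff ρ ρn| - e := by
    rw [hMn] at eM
    rw [hMd]
    rcases le_total (Mdiff ρ ρn) 0 with hD | hD
    · rw [max_eq_left (by linarith)] at eM
      rw [abs_of_nonpos hD, abs_of_nonpos (by linarith)]; linarith
    · rw [max_eq_right (by linarith)] at eM
      have : e = 0 := le_antisymm eM e0
      rw [this]; simp
  have hpt : ptau Kτ mτ (Mdiff σ ρn) ≤ ptau Kτ mτ (Mdiff ρ ρn) := ptau_anti hK (by linarith)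
  have hJ := hmin.2 Y σ ⟨σN.adm, σx⟩
  unfold Jfun dsq Efun at hJ
  rw [add_div, add_div] at hJ
  have hW' : W2sq σ ρn / (2 * τ) ≤ W2sq ρ ρn / (2 * τ) := by gcongr
  have hθ' : θ * |Mdiff σ ρn| ≤ θ * (|Mdiff ρ ρn| - e) := by gcongr
  have hkv : ∫ x in Ioo 0 Y, k x = (Λ - Y) - (∫ x in Ico Y Λ, ρ x) - e := by linarith
  rw [hkv] at hfσ
  have h1 : 0 ≤ e * (β - a + θ) := mul_nonneg e0 (by linarith)
  have h2 : 0 ≤ (-a) * (X - Λ) := mul_nonneg (by linarith) (sub_nonneg.2 h.dom)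
  linarith

/-! ### Initial data, dissipation and the estimate -/

/-- The initial density has the properties which propagate along the scheme. -/
lemma good_init {β θ X0 ρmin ρmax a : ℝ} {ρ0 ρ0' : ℝ → ℝ} (hβθ : β + θ < 1)
    (hH2 : H2 β θ X0 ρmin ρmax ρ0 ρ0')
    (ha : a = sInf ((fun x => Real.log (ρ0 x)) '' Icc 0 X0)) :
    a ≤ β + θ - 1 ∧ ∃ ρ', HalfEq ρ0 ρ' ∧ Good (Real.exp a) X0 ρ' := by
  obtain ⟨hX0, hpos, hder, -, hone, h0, -, hbd, hmax⟩ := hH2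
  have hcont : ContinuousOn ρ0 (Icc 0 X0) := fun x hx => (hder x hx).continuousWithinAt
  have hlog : ContinuousOn (fun x => Real.log (ρ0 x)) (Icc 0 X0) :=
    hcont.log fun x _ => (hpos x).ne'
  have hbb : BddBelow ((fun x => Real.log (ρ0 x)) '' Icc 0 X0) :=
    isCompact_Icc.bddBelow_image hlog
  have hal : ∀ x ∈ Icc 0 X0, a ≤ Real.log (ρ0 x) := fun x hx =>
    ha ▸ csInf_le hbb (mem_image_of_mem _ hx)
  have h0m : (0:ℝ) ∈ Icc 0 X0 := ⟨le_rfl, hX0.le⟩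
  have ha0 : a ≤ β + θ - 1 := by
    refine (hal 0 h0m).trans ?_
    rw [Real.log_le_iff_le_exp (hpos 0)]
    exact h0.2
  have h01 : ρ0 0 < 1 := h0.2.trans_lt (Real.exp_lt_one_iff.2 (by linarith))
  have hle1 : ∀ x ∈ Icc 0 X0, ρ0 x ≤ 1 := fun x hx => by
    rcases hx.1.eq_or_lt with rfl | hx0
    · exact h01.le
    · exact (hbd x ⟨hx0, hx.2⟩).2.trans hmax
  have hge : ∀ x ∈ Icc 0 X0, Real.exp a ≤ ρ0 x := fun x hx =>
    (Real.le_log_iff_exp_le (hpos x)).1 (hal x hx)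
  have hc1 : Real.exp a ≤ 1 := (hge 0 h0m).trans (hle1 0 h0m)
  set g : ℝ → ℝ := fun x => ρ0 (projIcc 0 X0 hX0.le x) with hg
  have gc : Continuous g := hcont.domRestrict.comp continuous_projIcc
  have gl : ∀ x, Real.exp a ≤ g x := fun x => hge _ (projIcc 0 X0 hX0.le x).2
  have gh : ∀ x, g x ≤ 1 := fun x => hle1 _ (projIcc 0 X0 hX0.le x).2
  have ge : ∀ x ∈ Icc 0 X0, g x = ρ0 x := fun x hx => by
    simp only [hg]; rw [projIcc_of_mem hX0.le hx]
  set r : ℝ → ℝ := fun x => if x ∈ Ioo 0 X0 then g x else 1 with hr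
  have rm : Measurable r := Measurable.ite measurableSet_Ioo gc.measurable measurable_const
  have rl : ∀ x, Real.exp a ≤ r x := fun x => by
    simp only [hr]; split_ifs
    · exact gl x
    · exact hc1
  have r0 : ∀ x, 0 ≤ r x := fun x => (Real.exp_pos a).le.trans (rl x)
  have r1 : ∀ x, r x ≤ 1 := fun x => by
    simp only [hr]; split_ifs
    · exact gh x
    · exact le_rfl
  have he : HalfEq ρ0 r := by
    have hne : ∀ᵐ x : ℝ, x ≠ X0 := by simp [ae_iff]
    filter_upwards [hne] with x hx hx0
    rcases lt_or_gt_of_ne hx with hlt | hgt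
    · simp only [hr]; rw [if_pos ⟨hx0, hlt⟩, ge x ⟨hx0.le, hlt.le⟩]
    · simp only [hr]; rw [if_neg fun hc => absurd hc.2 (not_lt.2 hgt.le), hone x hgt]
  have ri : IntegrableOn r (Ioo 0 X0) := integrableOn_Ioo_of_abs_le rm (C := 1)
    (fun x => by rw [abs_of_nonneg (r0 x)]; exact r1 x) _ _
  obtain ⟨hN, hx⟩ : Nice r ∧ xA r ≤ X0 := nice_mk hX0.le rm r0 ri
    (locallyIntegrableOn_of_abs_le (rm.mul rm.log) (C := 1)
      (fun x => abs_mul_log_le_one (r0 x) (r1 x)) _)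
    (fun x hx => if_neg fun hx' => absurd hx'.2 (not_lt.2 hx))
  refine ⟨ha0, r, he, hN, rl, r1, ?_, hx, hX0⟩
  -- `ρ⁰(0) < 1` and continuity make the mass excess strictly negative
  have hlt : ∫ x in (0:ℝ)..X0, ρ0 x < ∫ _ in (0:ℝ)..X0, (1:ℝ) :=
    intervalIntegral.integral_lt_integral_of_continuousOn_of_le_of_exists_lt hX0 hcont
      continuousOn_const (fun x hx => hle1 x ⟨hx.1.le, hx.2⟩) ⟨0, h0m, h01⟩
  have heq : ∫ x in (0:ℝ)..X0, ρ0 x = ∫ x in Ioo 0 X0, r x := by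
    rw [intervalIntegral.integral_of_le hX0.le, integral_Ioc_eq_integral_Ioo]
    refine setIntegral_congr_fun measurableSet_Ioo fun x hx => ?_
    simp only [hr]; rw [if_pos hx, ge x ⟨hx.1.le, hx.2.le⟩]
  rw [heq, intervalIntegral.integral_const, smul_eq_mul, mul_one, sub_zero] at hlt
  rw [hN.Mfun_eq hx]
  linarith

/-- The energy bounds the total dissipation: each step is compared with not moving at all. -/
lemma step_dissipation {lam α β θ τ Kτ mτ Xn X : ℝ} {ρn ρ : ℝ → ℝ} (hmτ : 0 < mτ)
    (hadm : MemAdmSet Xn ρn) (hmin : IsJKOMin lam α β θ τ Kτ mτ Xn ρn X ρ) :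
    dsq lam Xn ρn X ρ / (2 * τ) + θ * |Mdiff ρ ρn| + ptau Kτ mτ (Mdiff ρ ρn)
      ≤ ((∫ x in Ioi (0:ℝ), fEnt β (ρn x)) - α * Xn)
        - ((∫ x in Ioi (0:ℝ), fEnt β (ρ x)) - α * X) := by
  have hJ := hmin.2 Xn ρn hadm
  have hd : dsq lam Xn ρn Xn ρn = 0 := by unfold dsq; rw [W2sq_self]; simp
  have hm : Mdiff ρn ρn = 0 := sub_self _
  unfold Jfun Efun at hJ
  rw [hd, hm, ptau_of_nonneg hmτ le_rfl, zero_div, abs_zero] at hJ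
  linarith

lemma Good.energy_lower {c X : ℝ} {ρ : ℝ → ℝ} (h : Good c X ρ) (β : ℝ) :
    (β - Real.exp (β - 1)) * X ≤ ∫ x in Ioi (0:ℝ), fEnt β (ρ x) := by
  rw [integral_Ioi_eq_Ioo h.nice.adm h.dom (fEnt β) (fEnt_one β)]
  have e : ∫ _ in Ioo 0 X, (β - Real.exp (β - 1)) = (β - Real.exp (β - 1)) * X := by
    rw [setIntegral_const, smul_eq_mul]; simp [h.pos.le, mul_comm]
  rw [← e]
  exact setIntegral_mono (by simp) (integrableOn_fEnt h.nice.meas h.nice.nonneg h.hi 0 X)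
    fun x => fEnt_lower (h.nice.nonneg x)

/-- Proposition 4.2, total square distance estimate for the scheme.
If `(Xⁿ, ρⁿ)` solves the JKO scheme, then
`Σ_{n<N_T} [ 𝐝²((Xⁿ⁺¹,ρⁿ⁺¹),(Xⁿ,ρⁿ))/(2τ) + θ|M(ρⁿ⁺¹,ρⁿ)| + p_τ(M(ρⁿ⁺¹,ρⁿ)) ]
  ≤ ∫₀^{X⁰} f(ρ⁰) + (α + e^{β−1} − β) X^{N_T}`,
and consequently (using `X^{N_T} ≤ X⁰ + (T/λ)(α − a)` with `a = min ln ρ⁰`) the sum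
is bounded by a constant depending only on the data. -/
theorem total_square_distance_estimate
    (lam α β θ T X0 ρmin ρmax τ mτ Kτ a : ℝ) (ρ0 ρ0' : ℝ → ℝ) (N : ℕ)
    (hlam : 0 < lam) (hα : 0 < α) (hθ : 0 < θ) (hβθ : β + θ < 1) (hT : 0 < T)
    (hH2 : H2 β θ X0 ρmin ρmax ρ0 ρ0')
    (hτ0 : 0 < τ) (hτ1 : τ < 1) (hmτ : 0 < mτ) (hKτ : 0 < Kτ)
    (hNT : (N : ℝ) * τ = T)
    (ha : a = sInf ((fun x => Real.log (ρ0 x)) '' Icc 0 X0))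
    (Xs : ℕ → ℝ) (rhos : ℕ → ℝ → ℝ)
    (hinit : Xs 0 = X0 ∧ rhos 0 = ρ0)
    (hscheme : ∀ n < N,
      IsJKOMin lam α β θ τ Kτ mτ (Xs n) (rhos n) (Xs (n+1)) (rhos (n+1))) :
    (∑ n ∈ Finset.range N,
        (dsq lam (Xs n) (rhos n) (Xs (n+1)) (rhos (n+1)) / (2*τ)
          + θ * |Mdiff (rhos (n+1)) (rhos n)|
          + ptau Kτ mτ (Mdiff (rhos (n+1)) (rhos n))))
      ≤ (∫ x in (0:ℝ)..X0, fEnt β (ρ0 x))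
        + (α + Real.exp (β - 1) - β) * Xs N ∧
    (∑ n ∈ Finset.range N,
        (dsq lam (Xs n) (rhos n) (Xs (n+1)) (rhos (n+1)) / (2*τ)
          + θ * |Mdiff (rhos (n+1)) (rhos n)|
          + ptau Kτ mτ (Mdiff (rhos (n+1)) (rhos n))))
      ≤ (∫ x in (0:ℝ)..X0, fEnt β (ρ0 x))
        + (α + Real.exp (β - 1) - β) * (X0 + (T / lam) * (α - a)) := by
  obtain ⟨haβ, r0, hr0, hg0⟩ := good_init hβθ hH2 ha
  obtain ⟨hi1, hi2⟩ := hinit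
  have refl : ∀ ζ, HalfEq ζ ζ := fun ζ => Eventually.of_forall fun _ _ => rfl
  have hcβ : Real.log (Real.exp a) + 1 - β ≤ θ := by rw [Real.log_exp]; linarith
  have key : ∀ n ≤ N, (∃ r, HalfEq (rhos n) r ∧ Good (Real.exp a) (Xs n) r) ∧
      Xs n ≤ X0 + n * (τ * (α - a) / lam) := by
    intro n
    induction n with
    | zero => intro _; rw [hi1, hi2]; exact ⟨⟨r0, hr0, hg0⟩, by simp⟩
    | succ n ih =>
      intro hn
      obtain ⟨⟨r, hr, hg⟩, hX⟩ := ih (by lia)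
      have hmin := hr.isJKOMin (refl _) (hscheme n hn)
      obtain ⟨r', hr', hg'⟩ := Good.step hlam hα hτ0 hθ hKτ hmτ hβθ (Real.exp_pos a) hcβ hg hmin
      have hadv := Good.advance hlam hα hτ0 hθ hKτ (Real.exp_pos a) hcβ hg hg'
        ((refl r).isJKOMin hr' hmin)
      rw [Real.log_exp] at hadv
      refine ⟨⟨r', hr', hg'⟩, ?_⟩
      push_cast
      linarith
  have hadm : ∀ n ≤ N, MemAdmSet (Xs n) (rhos n) := fun n hn => by
    obtain ⟨⟨r, hr, hg⟩, -⟩ := key n hn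
    exact ⟨hr.symm.memAdm hg.nice.adm, hr.xA ▸ hg.dom⟩
  have hsum : (∑ n ∈ Finset.range N,
        (dsq lam (Xs n) (rhos n) (Xs (n+1)) (rhos (n+1)) / (2*τ)
          + θ * |Mdiff (rhos (n+1)) (rhos n)|
          + ptau Kτ mτ (Mdiff (rhos (n+1)) (rhos n))))
      ≤ ((∫ x in Ioi (0:ℝ), fEnt β (rhos 0 x)) - α * Xs 0)
        - ((∫ x in Ioi (0:ℝ), fEnt β (rhos N x)) - α * Xs N) := by
    rw [← Finset.sum_range_sub' fun n => (∫ x in Ioi (0:ℝ), fEnt β (rhos n x)) - α * Xs n]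
    exact Finset.sum_le_sum fun n hn => step_dissipation hmτ
      (hadm n (Finset.mem_range.1 hn).le) (hscheme n (Finset.mem_range.1 hn))
  have hf0 : ∫ x in Ioi (0:ℝ), fEnt β (rhos 0 x) = ∫ x in (0:ℝ)..X0, fEnt β (ρ0 x) := by
    have h0 := hadm 0 N.zero_le
    rw [hi1, hi2] at h0
    rw [hi2, integral_Ioi_eq_Ioo h0.1 h0.2 (fEnt β) (fEnt_one β),
      intervalIntegral.integral_of_le hg0.pos.le, integral_Ioc_eq_integral_Ioo]
  obtain ⟨⟨r, hr, hg⟩, hXN⟩ := key N le_rfl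
  have hfN := hg.energy_lower β
  rw [← hr.integral (fEnt β)] at hfN
  have hαX : 0 < α * Xs 0 := by rw [hi1]; exact mul_pos hα hg0.pos
  have h1 : (∑ n ∈ Finset.range N,
        (dsq lam (Xs n) (rhos n) (Xs (n+1)) (rhos (n+1)) / (2*τ)
          + θ * |Mdiff (rhos (n+1)) (rhos n)|
          + ptau Kτ mτ (Mdiff (rhos (n+1)) (rhos n))))
      ≤ (∫ x in (0:ℝ)..X0, fEnt β (ρ0 x)) + (α + Real.exp (β - 1) - β) * Xs N := by
    rw [hf0] at hsum
    linarith
  refine ⟨h1, h1.trans ?_⟩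
  have hXT : Xs N ≤ X0 + (T / lam) * (α - a) := by
    refine hXN.trans_eq ?_
    rw [← hNT]; ring
  have hco : 0 ≤ α + Real.exp (β - 1) - β := by have := beta_le_exp β; linarith
  gcongr

end
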